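/- Let Γ be a finite connected simple graph with at least one edge. The graph 2-braid group B₂(Γ) (the fundamental group of the unordered 2-point configuration space of the geometric realization |Γ|) is isomorphic to a free group if and only if both of the following hold: (i) |Γ| admits a topological embedding into ℝ², and (ii) Γ does not contain two vertex-disjoint cycle subgraphs. -/

import Mathlib

/-!
The proof compares three conditions on `Γ`, each one accessible both from topology and from
combinatorics.

*The fundamental groupoid.* A configuration of two distinct points of `|Γ|` has a first point
exceeding the second one in some barycentric coordinate `u`, and vice versa for some coordinate
`v`. The corresponding open sets, indexed by ordered pairs `(u, v)` of distinct vertices, cover the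
ordered configuration space, and they contract linearly, as do their nonempty pairwise
intersections; their images in the unordered configuration space are simply connected. Hence the
groupoid of path classes between vertex configurations is generated by the one-cells `(c; a b)`,
where a token moves along the edge `a b` while the other one rests at `c`, and by the exchanges of
names of the two tokens (`EE_ind`), and every labeling of the one-cells compatible with the squares given by
pairs of disjoint edges integrates to a functor (`exists_transport`). This replaces the statement
that the unordered configuration space deformation retracts to a square complex.

*From collapsibility to freeness.* If every nonempty symmetric set of squares has a free face
(`NoCore`), the squares can be removed one at a time, each together with a free face; the remaining
one-cells are free generators of the groupoid, and the braid group is free (`free_of_noCore`).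

*From freeness to combinatorics.* If the braid group is free, labelings lift along surjections of
groups (`lift_labels`). Two disjoint cycles give two commuting loops whose images in `(ℤ/2)²` are
the two generators; lifts of these to the dihedral group of order eight never commute, so there are
no disjoint cycles (`noDC_of_free`). The sign of the permutation of the two tokens lifts from `ℤ/2`
to `ℤ`, which is condition `Lift` (`lift_of_free`).

*From planarity to combinatorics.* For an embedding in the plane the direction from one point to
the other turns by a half turn under an exchange, so its angle, measured in half turns, lifts the
sign: again `Lift` (`lift_of_embedding`).

*Combinatorics.* A graph without disjoint cycles satisfying `Lift` has a straight-line drawing in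
the plane and satisfies `NoCore` (`good_of_lift`). Vertices of degree one and two are removed or
smoothed. If all degrees are at least three there is a cycle of length three or four
(`exists_short`), whose complement is a forest; a longest path in the forest organizes the
neighbours of the cycle. With a triangle one finds a wheel or `K₅` minus an edge (`tri_good`), with
a four-cycle and no triangle a contradiction (`quad_false`). The graphs `K₅` and `K₃,₃` are excluded
by `Lift` through a parity count (`no_K5`, `no_K33`).

Thus a free braid group forces the absence of disjoint cycles and `Lift`, hence a drawing and an
embedding; conversely an embedding gives `Lift`, which without disjoint cycles gives `NoCore` and
freeness.
-/


open scoped Classical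

noncomputable section

namespace GraphBraid

/-- The standard basis vector `e_v` in `ℝ^V`. -/
def basisVec {V : Type} [DecidableEq V] (v : V) : V → ℝ := fun w => if w = v then 1 else 0

/-- The geometric realization of a simple graph, as the subspace of `ℝ^V` given by the
union over the edges of the straight segments joining the corresponding basis vectors. -/
def realization {V : Type} [DecidableEq V] (G : SimpleGraph V) : Set (V → ℝ) :=
  ⋃ (u : V) (v : V) (_ : G.Adj u v), segment ℝ (basisVec u) (basisVec v)

/-- The realization of a subgraph, as a subspace of `ℝ^V`. -/
def subRealization {V : Type} [DecidableEq V] {G : SimpleGraph V} (H : G.Subgraph) :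
    Set (V → ℝ) :=
  ⋃ (u : V) (v : V) (_ : H.Adj u v), segment ℝ (basisVec u) (basisVec v)

/-- The ordered `n`-point configuration space of a topological space. -/
abbrev Conf (n : ℕ) (X : Type) [TopologicalSpace X] : Type :=
  {f : Fin n → X // Function.Injective f}

/-- Two ordered configurations are related when they differ by a permutation of coordinates. -/
def permRel (n : ℕ) (X : Type) [TopologicalSpace X] (f g : Conf n X) : Prop :=
  ∃ σ : Equiv.Perm (Fin n), (f : Fin n → X) = (g : Fin n → X) ∘ σ

/-- The unordered `n`-point configuration space: the quotient of the ordered configuration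
space by the symmetric group permuting coordinates. -/
abbrev UConf (n : ℕ) (X : Type) [TopologicalSpace X] : Type :=
  Quot (permRel n X)

/-- A group is free when it is isomorphic to `FreeGroup S` for some set `S`. -/
def IsFreeGroupType (G : Type*) [Group G] : Prop :=
  ∃ S : Type, Nonempty (G ≃* FreeGroup S)

/-- A cycle subgraph: a subgraph with at least one edge which is connected and all of whose
vertices have degree exactly two (inside the subgraph). -/
def IsCycleSubgraph {W : Type*} {G : SimpleGraph W} (H : G.Subgraph) : Prop :=
  H.edgeSet.Nonempty ∧ H.Connected ∧ ∀ v ∈ H.verts, (H.neighborSet v).ncard = 2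

/-! ### Fundamental groupoids and open covers -/

section Cover
open Path.Homotopic

/-- Path classes are generated, under concatenation, by the paths contained in a single member
of a given open cover. -/
theorem path_ind {Z I : Type*} [TopologicalSpace Z] (B : I → Set Z) (hB : ∀ i, IsOpen (B i))
    (hc : ∀ x, ∃ i, x ∈ B i) (R : ∀ x y, Path.Homotopic.Quotient x y → Prop)
    (hcomp : ∀ x y z (p : Path.Homotopic.Quotient x y) (r : Path.Homotopic.Quotient y z),
      R x y p → R y z r → R x z (p.trans r))
    (hsmall : ∀ i x y (γ : Path x y), Set.range γ ⊆ B i → R x y (.mk γ)) :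
    ∀ x y g, R x y g := by
  intro x y g
  induction g using Path.Homotopic.Quotient.ind with | mk γ =>
  obtain ⟨t, ht0, htm, ⟨N, hN⟩, ht⟩ := exists_monotone_Icc_subset_open_cover_unitInterval
    (c := fun i => γ ⁻¹' (B i)) (fun i => (hB i).preimage γ.continuous)
    (fun s _ => by obtain ⟨i, hi⟩ := hc (γ s); exact Set.mem_iUnion.2 ⟨i, hi⟩)
  have key : ∀ n, R (γ 0) (γ (t n)) (.mk (γ.subpath 0 (t n))) := by
    intro n
    induction n with
    | zero =>
      rw [ht0]
      obtain ⟨i, hi⟩ := hc (γ 0)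
      refine hsmall i _ _ _ ?_
      rw [Path.range_subpath_of_le _ _ _ le_rfl]
      simpa using hi
    | succ n ih =>
      obtain ⟨i, hi⟩ := ht n
      have h1 : R _ _ (.mk (γ.subpath (t n) (t (n+1)))) := by
        refine hsmall i _ _ _ ?_
        rw [Path.range_subpath_of_le _ _ _ (htm (Nat.le_succ n))]
        exact Set.image_subset_iff.2 hi
      have h2 := hcomp _ _ _ _ _ ih h1
      rw [← Path.Homotopic.Quotient.mk_trans] at h2
      rwa [Path.Homotopic.Quotient.eq.2 ⟨Path.Homotopy.subpathTransSubpath γ 0 (t n) (t (n+1))⟩]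
        at h2
  have h1 := key N
  rw [hN N le_rfl, Path.subpath_zero_one] at h1
  have h2 : ∀ x' y' (hx : x' = x) (hy : y' = y), R x' y' (.mk (γ.cast hx hy)) → R x y (.mk γ) := by
    rintro x' y' rfl rfl h; exact h
  exact h2 _ _ _ _ h1

variable {Z : Type*} [TopologicalSpace Z]

/-- The unique class of paths joining `x` to `y` inside a simply connected set `s`. -/
def sp {s : Set Z} (hs : IsSimplyConnected s) {x y : Z} (hx : x ∈ s) (hy : y ∈ s) :
    Path.Homotopic.Quotient x y :=
  .mk (hs.isPathConnected.joinedIn x hx y hy).somePath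

theorem sp_of_path {s : Set Z} (hs : IsSimplyConnected s) {x y : Z} (hx : x ∈ s) (hy : y ∈ s)
    (γ : Path x y) (h : ∀ t, γ t ∈ s) : .mk γ = sp hs hx hy := by
  have := hs.simplyConnectedSpace
  let lift : ∀ (δ : Path x y) (_ : ∀ t, δ t ∈ s), Path (⟨x, hx⟩ : s) ⟨y, hy⟩ := fun δ h =>
    { toFun := fun t => ⟨δ t, h t⟩
      continuous_toFun := by fun_prop
      source' := by simp
      target' := by simp }
  have h1 := (SimplyConnectedSpace.paths_homotopic (lift γ h)
    (lift _ (hs.isPathConnected.joinedIn x hx y hy).somePath_mem)).map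
      ⟨Subtype.val, continuous_subtype_val⟩
  exact Path.Homotopic.Quotient.eq.2 h1

theorem sp_self {s : Set Z} (hs : IsSimplyConnected s) {x : Z} (hx hx' : x ∈ s) :
    sp hs hx hx' = .refl x := by
  rw [← Path.Homotopic.Quotient.mk_refl, sp_of_path hs hx hx' _ (by simpa using hx)]

theorem sp_trans {s : Set Z} (hs : IsSimplyConnected s) {x y z : Z} (hx : x ∈ s) (hy : y ∈ s)
    (hz : z ∈ s) : (sp hs hx hy).trans (sp hs hy hz) = sp hs hx hz := by
  rw [sp, sp, ← Path.Homotopic.Quotient.mk_trans]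
  refine sp_of_path hs hx hz _ fun t => ?_
  have := Path.trans_range (hs.isPathConnected.joinedIn x hx y hy).somePath
    (hs.isPathConnected.joinedIn y hy z hz).somePath
  have h2 := Set.mem_range_self (f := (hs.isPathConnected.joinedIn x hx y hy).somePath.trans
    (hs.isPathConnected.joinedIn y hy z hz).somePath) t
  rw [this] at h2
  rcases h2 with ⟨t, ht⟩ | ⟨t, ht⟩
  · rw [← ht]; exact (hs.isPathConnected.joinedIn x hx y hy).somePath_mem t
  · rw [← ht]; exact (hs.isPathConnected.joinedIn y hy z hz).somePath_mem t

theorem trans_symm_cancel {x y z : Z} (p : Path.Homotopic.Quotient x y)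
    (r : Path.Homotopic.Quotient x z) : p.trans (p.symm.trans r) = r := by
  rw [← Path.Homotopic.Quotient.trans_assoc, Path.Homotopic.Quotient.trans_symm,
    Path.Homotopic.Quotient.refl_trans]

theorem symm_trans_cancel {x y z : Z} (p : Path.Homotopic.Quotient y x)
    (r : Path.Homotopic.Quotient x z) : p.symm.trans (p.trans r) = r := by
  rw [← Path.Homotopic.Quotient.trans_assoc, Path.Homotopic.Quotient.symm_trans,
    Path.Homotopic.Quotient.refl_trans]

theorem eq_symm_of_trans {x y : Z} (p : Path.Homotopic.Quotient x y)
    (r : Path.Homotopic.Quotient y x) (h : p.trans r = .refl x) : r = p.symm := by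
  rw [← symm_trans_cancel p r, h, Path.Homotopic.Quotient.trans_refl]

theorem sp_symm {s : Set Z} (hs : IsSimplyConnected s) {x y : Z} (hx : x ∈ s) (hy : y ∈ s) :
    (sp hs hx hy).symm = sp hs hy hx :=
  (eq_symm_of_trans _ _ (by rw [sp_trans, sp_self])).symm

theorem sp_congr {s s' : Set Z} (hs : IsSimplyConnected s) (hs' : IsSimplyConnected s') {x y : Z}
    (hx : x ∈ s) (hy : y ∈ s) (hx' : x ∈ s') (hy' : y ∈ s') (h : JoinedIn (s ∩ s') x y) :
    sp hs hx hy = sp hs' hx' hy' := by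
  rw [← sp_of_path hs hx hy h.somePath fun t => (h.somePath_mem t).1,
    ← sp_of_path hs' hx' hy' h.somePath fun t => (h.somePath_mem t).2]

/-- A locally constant Čech cocycle with values in a group `H`, on an open cover by simply
connected sets, integrates to parallel transport along path classes: this is the monodromy of the
associated principal covering, read in the local trivialisations. -/
theorem cech_transport {I : Type*} {H : Type*} [Group H] (B : I → Set Z)
    (hB : ∀ i, IsOpen (B i)) (hc : ∀ x, ∃ i, x ∈ B i) (hsc : ∀ i, IsSimplyConnected (B i))
    (g : I → I → Z → H)
    (hloc : ∀ i j, ∀ x ∈ B i ∩ B j, ∀ᶠ y in nhds x, g i j y = g i j x)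
    (hcoc : ∀ i j k x, x ∈ B i → x ∈ B j → x ∈ B k → g i j x * g j k x = g i k x) :
    ∃ M : ∀ (_ _ : I) {x y : Z}, Path.Homotopic.Quotient x y → H,
      (∀ i j k x y z (p : Path.Homotopic.Quotient x y) (r : Path.Homotopic.Quotient y z),
        x ∈ B i → y ∈ B j → z ∈ B k → M i k (p.trans r) = M i j p * M j k r) ∧
      (∀ i j x, x ∈ B i → x ∈ B j → M i j (.refl x) = g i j x) ∧
      (∀ i x y (hx : x ∈ B i) (hy : y ∈ B i), M i i (sp (hsc i) hx hy) = 1) := by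
  let _ : TopologicalSpace H := ⊥
  have : DiscreteTopology H := ⟨rfl⟩
  have hgi : ∀ i x, x ∈ B i → g i i x = 1 := fun i x hx => by
    have := hcoc i i i x hx hx hx
    simpa using this
  choose ix hix using hc
  let C : FiberBundleCore I Z H :=
    { baseSet := B
      isOpen_baseSet := hB
      indexAt := ix
      mem_baseSet_at := hix
      coordChange := fun i j x v => v * g i j x
      coordChange_self := fun i x hx v => by rw [hgi i x hx, mul_one]
      continuousOn_coordChange := by
        rintro i j ⟨x, v⟩ ⟨hx, -⟩
        apply ContinuousAt.continuousWithinAt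
        apply ContinuousAt.mul continuousAt_snd
        have : ContinuousAt (g i j) x := by
          apply continuousAt_const.congr (f := fun _ => g i j x)
          filter_upwards [hloc i j x hx] with y hy using hy.symm
        exact ContinuousAt.comp (f := Prod.fst) (x := (x, v)) this continuousAt_fst
      coordChange_comp := by
        rintro i j k x ⟨⟨hi, hj⟩, hk⟩ v
        rw [mul_assoc, hcoc i j k x hi hj hk] }
  have cov : IsCoveringMap (Bundle.TotalSpace.proj (F := H) (E := C.Fiber)) :=
    FiberBundle.isCoveringMap (F := H) (E := C.Fiber)
  let sn : C.TotalSpace → H := fun e => e.2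
  let κ : I → C.TotalSpace → H := fun i e => sn e * g (ix e.1) i e.1
  have hκ : ∀ i j x (e : Bundle.TotalSpace.proj (F := H) (E := C.Fiber) ⁻¹' {x}), x ∈ B i →
      x ∈ B j → κ j e = κ i e * g i j x := by
    rintro i j x ⟨e, rfl⟩ hi hj
    change sn e * _ = sn e * _ * _
    rw [mul_assoc, hcoc _ i j e.1 (hix _) hi hj]
  have hpt : ∀ i x, x ∈ B i → ∀ v, ∃ e : Bundle.TotalSpace.proj (F := H) (E := C.Fiber) ⁻¹' {x},
      κ i e = v := by
    intro i x hx v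
    refine ⟨⟨⟨x, (v * (g (ix x) i x)⁻¹ : H)⟩, rfl⟩, ?_⟩
    change v * (g (ix x) i x)⁻¹ * _ = v
    simp
  -- transport along a path inside `B k` preserves the `k`-th coordinate
  have hsm : ∀ k x y (γ : Path x y), Set.range γ ⊆ B k → ∀ e,
      κ k (cov.monodromy (.mk γ) e) = κ k e := by
    intro k x y γ hγ e
    have hγ' : ∀ t, γ t ∈ B k := fun t => hγ ⟨t, rfl⟩
    have hxk : x ∈ B k := by simpa using hγ' 0
    have hyk : y ∈ B k := by simpa using hγ' 1
    obtain ⟨e', he'⟩ := hpt k y hyk (κ k e)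
    rw [← he']
    congr 2
    let G : Path e.1 e'.1 :=
      { toFun := fun t => (C.localTriv k).toOpenPartialHomeomorph.symm (γ t, κ k e)
        continuous_toFun := by
          refine ContinuousOn.comp_continuous
            (C.localTriv k).toOpenPartialHomeomorph.continuousOn_symm ?_ fun t => ?_
          · fun_prop
          · exact (C.mem_localTriv_target k _).2 (hγ' t)
        source' := by
          have : (e.1 : C.TotalSpace).1 = x := e.2
          have h2 : (C.localTriv k) e.1 = (γ 0, κ k e) := by
            rw [FiberBundleCore.localTriv_apply, γ.source]; exact Prod.ext this rfl
          rw [← h2]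
          exact (C.localTriv k).toOpenPartialHomeomorph.left_inv
            ((C.mem_localTriv_source k _).2 (by rw [this]; exact hxk))
        target' := by
          have : (e'.1 : C.TotalSpace).1 = y := e'.2
          have h2 : (C.localTriv k) e'.1 = (γ 1, κ k e) := by
            rw [FiberBundleCore.localTriv_apply, ← he', γ.target]; exact Prod.ext this rfl
          rw [← h2]
          exact (C.localTriv k).toOpenPartialHomeomorph.left_inv
            ((C.mem_localTriv_source k _).2 (by rw [this]; exact hyk)) }
    refine cov.monodromy_eq_of_map_eq (.mk G) ?_
    refine congrArg Path.Homotopic.Quotient.mk (?_ : G.map cov.continuous = γ.cast e.2 e'.2)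
    ext t
    rfl
  have key : ∀ x y (p : Path.Homotopic.Quotient x y), ∀ i j, x ∈ B i → y ∈ B j →
      ∃ m, ∀ e, κ j (cov.monodromy p e) = κ i e * m := by
    refine path_ind B hB (fun x => ⟨_, hix x⟩) _ ?_ ?_
    · intro x y z p r hp hr i j hi hj
      obtain ⟨m, hm⟩ := hp i (ix y) hi (hix y)
      obtain ⟨m', hm'⟩ := hr (ix y) j (hix y) hj
      refine ⟨m * m', fun e => ?_⟩
      rw [cov.monodromy_trans_apply, hm', hm, mul_assoc]
    · intro k x y γ hγ i j hi hj
      have hγ' : ∀ t, γ t ∈ B k := fun t => hγ ⟨t, rfl⟩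
      have hxk : x ∈ B k := by simpa using hγ' 0
      have hyk : y ∈ B k := by simpa using hγ' 1
      refine ⟨g i k x * g k j y, fun e => ?_⟩
      rw [hκ k j _ _ hyk hj, hsm k x y γ hγ, hκ i k _ _ hi hxk, mul_assoc]
  let M : ∀ (_ _ : I) {x y : Z}, Path.Homotopic.Quotient x y → H := fun i j x y p =>
    if h : x ∈ B i ∧ y ∈ B j then (key x y p i j h.1 h.2).choose else 1
  have hM : ∀ i j x y (p : Path.Homotopic.Quotient x y), x ∈ B i → y ∈ B j → ∀ e,
      κ j (cov.monodromy p e) = κ i e * M i j p := by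
    intro i j x y p hi hj e
    simp only [M, dif_pos (And.intro hi hj)]
    exact (key x y p i j hi hj).choose_spec e
  refine ⟨M, ?_, ?_, ?_⟩
  · intro i j k x y z p r hi hj hk
    obtain ⟨e, he⟩ := hpt i x hi 1
    have h1 := hM i k x z (p.trans r) hi hk e
    rw [cov.monodromy_trans_apply, hM j k _ _ _ hj hk, hM i j _ _ _ hi hj, he] at h1
    simpa using h1.symm
  · intro i j x hi hj
    obtain ⟨e, he⟩ := hpt i x hi 1
    have h1 := hM i j x x (.refl x) hi hj e
    rw [cov.monodromy_refl, id, hκ i j _ _ hi hj, he] at h1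
    simpa using h1.symm
  · intro i x y hx hy
    obtain ⟨e, he⟩ := hpt i x hx 1
    have h1 := hM i i x y (sp (hsc i) hx hy) hx hy e
    have h2 : κ i (cov.monodromy (sp (hsc i) hx hy) e) = κ i e := hsm _ _ _ _ ?_ _
    · rw [h2, he] at h1
      simpa using h1.symm
    · rintro _ ⟨t, rfl⟩
      exact ((hsc i).isPathConnected.joinedIn x hx y hy).somePath_mem t

end Cover

/-! ### The realization and the ordered configuration space -/

section Real
variable {V : Type} [Fintype V] [DecidableEq V] {Γ : SimpleGraph V}

theorem mem_realization_iff (x : V → ℝ) : x ∈ realization Γ ↔ ∃ a b, Γ.Adj a b ∧ 0 ≤ x a ∧ 0 ≤ x b ∧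
    x a + x b = 1 ∧ ∀ w, w ≠ a → w ≠ b → x w = 0 := by
  simp only [realization, Set.mem_iUnion, segment, exists_prop, Set.mem_ofPred_eq]
  constructor
  · rintro ⟨a, b, hab, s, t, hs, ht, hst, rfl⟩
    have := hab.ne
    refine ⟨a, b, hab, ?_⟩
    simp only [basisVec, Pi.add_apply, Pi.smul_apply, smul_eq_mul]
    simp only [if_true, if_neg this, if_neg this.symm]
    refine ⟨by linarith, by linarith, by linarith, fun w h1 h2 => by simp [h1, h2]⟩
  · rintro ⟨a, b, hab, h1, h2, h3, h4⟩
    have := hab.ne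
    refine ⟨a, b, hab, x a, x b, h1, h2, h3, ?_⟩
    funext w
    simp only [basisVec, Pi.add_apply, Pi.smul_apply, smul_eq_mul]
    by_cases ha : w = a
    · subst ha; simp [this]
    · by_cases hb : w = b
      · subst hb; simp [ha]
      · simp [ha, hb, h4 w ha hb]

theorem real_nonneg {x : V → ℝ} (hx : x ∈ realization Γ) (w : V) : 0 ≤ x w := by
  obtain ⟨a, b, hab, h1, h2, h3, h4⟩ := (mem_realization_iff x).1 hx
  by_cases ha : w = a
  · rwa [ha]
  · by_cases hb : w = b
    · rwa [hb]
    · rw [h4 w ha hb]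

theorem real_sum {x : V → ℝ} (hx : x ∈ realization Γ) : ∑ w, x w = 1 := by
  obtain ⟨a, b, hab, h1, h2, h3, h4⟩ := (mem_realization_iff x).1 hx
  rw [← h3, ← Finset.sum_pair hab.ne]
  symm
  apply Finset.sum_subset (Finset.subset_univ _)
  intro w _ hw
  simp only [Finset.mem_insert, Finset.mem_singleton, not_or] at hw
  exact h4 w hw.1 hw.2

/-- The support of a point of the realization is contained in an edge, and an edge containing a
given nonempty set of vertices of the support can be chosen. -/
theorem real_supp {x : V → ℝ} (hx : x ∈ realization Γ) {u v : V} (hu : 0 < x u) (hv : 0 < x v)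
    (huv : u ≠ v) : Γ.Adj u v ∧ x u + x v = 1 ∧ ∀ w, w ≠ u → w ≠ v → x w = 0 := by
  obtain ⟨a, b, hab, h1, h2, h3, h4⟩ := (mem_realization_iff x).1 hx
  have hu' : u = a ∨ u = b := by
    by_contra h; push Not at h; have := h4 u h.1 h.2; linarith
  have hv' : v = a ∨ v = b := by
    by_contra h; push Not at h; have := h4 v h.1 h.2; linarith
  rcases hu' with rfl | rfl <;> rcases hv' with rfl | rfl
  · exact absurd rfl huv
  · exact ⟨hab, h3, h4⟩
  · exact ⟨hab.symm, by linarith, fun w h h' => h4 w h' h⟩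
  · exact absurd rfl huv

/-- Midpoint of the edge `u u'`, or the vertex `u` when `u = u'`. -/
def mid (u u' : V) : V → ℝ := fun w => (basisVec u w + basisVec u' w) / 2

theorem basisVec_mem (hv : ∀ v, ∃ w, Γ.Adj v w) (v : V) : basisVec v ∈ realization Γ := by
  obtain ⟨w, hw⟩ := hv v
  have := hw.ne
  exact (mem_realization_iff _).2 ⟨v, w, hw, by simp [basisVec, this.symm], by simp [basisVec, this.symm],
    by simp [basisVec, this.symm], fun z h1 _ => by simp [basisVec, h1]⟩

theorem mid_mem (hv : ∀ v, ∃ w, Γ.Adj v w) {u u' : V} (h : u = u' ∨ Γ.Adj u u') :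
    mid u u' ∈ realization Γ := by
  rcases h with rfl | h
  · convert basisVec_mem hv u using 1; funext w; simp [mid]
  · have := h.ne
    refine (mem_realization_iff _).2 ⟨u, u', h, ?_⟩
    simp only [mid, basisVec, if_true, if_neg this, if_neg this.symm]
    exact ⟨by norm_num, by norm_num, by norm_num, fun w h1 h2 => by simp [h1, h2]⟩

theorem real_star {x : V → ℝ} (hx : x ∈ realization Γ) {u u' : V} (hu : 0 < x u) (hu' : 0 < x u')
    {t : ℝ} (h0 : 0 ≤ t) (h1 : t ≤ 1) :
    (fun w => (1 - t) * x w + t * mid u u' w) ∈ realization Γ := by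
  obtain ⟨a, b, hab, ha, hb, hs, hsupp, hau, hau'⟩ : ∃ a b, Γ.Adj a b ∧ 0 ≤ x a ∧ 0 ≤ x b ∧
      x a + x b = 1 ∧ (∀ w, w ≠ a → w ≠ b → x w = 0) ∧ (u = a ∨ u = b) ∧ (u' = a ∨ u' = b) := by
    obtain ⟨a, b, hab, h1, h2, h3, h4⟩ := (mem_realization_iff x).1 hx
    refine ⟨a, b, hab, h1, h2, h3, h4, ?_, ?_⟩
    · by_contra h; push Not at h; have := h4 u h.1 h.2; linarith
    · by_contra h; push Not at h; have := h4 u' h.1 h.2; linarith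
  have hm : 0 ≤ mid u u' a ∧ 0 ≤ mid u u' b ∧ mid u u' a + mid u u' b = 1 ∧
      ∀ w, w ≠ a → w ≠ b → mid u u' w = 0 := by
    have h1 := hab.ne
    have h2 := hab.ne.symm
    rcases hau with rfl | rfl <;> rcases hau' with rfl | rfl <;>
      refine ⟨?_, ?_, ?_, fun w h3 h4 => ?_⟩ <;> simp [mid, basisVec, *] <;> norm_num
  obtain ⟨m1, m2, m3, m4⟩ := hm
  have h1t : 0 ≤ 1 - t := by linarith
  refine (mem_realization_iff _).2 ⟨a, b, hab, by positivity, by positivity, ?_, fun w h h' => ?_⟩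
  · linear_combination (1 - t) * hs + t * m3
  · rw [hsupp w h h', m4 w h h']; simp

end Real

/-! ### Configurations of two points -/

section Conf2
variable {V : Type} [Fintype V] [DecidableEq V] (Γ : SimpleGraph V)

/-- Ordered pairs of distinct vertices. -/
abbrev OP (V : Type) := {p : V × V // p.1 ≠ p.2}

/-- The pair `(u, v)` exchanged to `(v, u)`. -/
def OP.sw {V : Type} (i : OP V) : OP V := ⟨(i.1.2, i.1.1), i.2.symm⟩

@[simp] theorem OP.sw_sw {V : Type} (i : OP V) : i.sw.sw = i := rfl

/-- The configurations whose first point dominates at `u` and whose second point dominates at `v`,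
where `i = (u, v)`. These open sets cover the ordered configuration space. -/
def Ut (i : OP V) : Set (Conf 2 (realization Γ)) :=
  {f | (f.1 1 : V → ℝ) i.1.1 < (f.1 0 : V → ℝ) i.1.1 ∧
    (f.1 0 : V → ℝ) i.1.2 < (f.1 1 : V → ℝ) i.1.2}

variable {Γ}

/-- An ordered configuration from two distinct points. -/
def mkC (a b : V → ℝ) (ha : a ∈ realization Γ) (hb : b ∈ realization Γ) (h : a ≠ b) :
    Conf 2 (realization Γ) :=
  ⟨![⟨a, ha⟩, ⟨b, hb⟩], by
    intro x y hxy
    fin_cases x <;> fin_cases y <;> simp_all [Subtype.ext_iff]⟩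

/-- Exchange of the two points. -/
def swC (f : Conf 2 (realization Γ)) : Conf 2 (realization Γ) :=
  ⟨f.1 ∘ Equiv.swap 0 1, f.2.comp (Equiv.injective _)⟩

@[simp] theorem swC_zero (f : Conf 2 (realization Γ)) : (swC f).1 0 = f.1 1 := by simp [swC]
@[simp] theorem swC_one (f : Conf 2 (realization Γ)) : (swC f).1 1 = f.1 0 := by simp [swC]
@[simp] theorem mkC_zero (a b : V → ℝ) (ha : a ∈ realization Γ) (hb : b ∈ realization Γ) (h : a ≠ b) :
    (mkC a b ha hb h).1 0 = ⟨a, ha⟩ := rfl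
@[simp] theorem mkC_one (a b : V → ℝ) (ha : a ∈ realization Γ) (hb : b ∈ realization Γ) (h : a ≠ b) :
    (mkC a b ha hb h).1 1 = ⟨b, hb⟩ := rfl

theorem conf_ext {f g : Conf 2 (realization Γ)} (h0 : f.1 0 = g.1 0) (h1 : f.1 1 = g.1 1) : f = g := by
  apply Subtype.ext; funext k; fin_cases k <;> assumption

@[simp] theorem swC_swC (f : Conf 2 (realization Γ)) : swC (swC f) = f :=
  conf_ext (by simp) (by simp)

theorem continuous_swC : Continuous (swC (Γ := Γ)) := by
  unfold swC
  apply Continuous.subtype_mk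
  apply continuous_pi
  intro k
  exact (continuous_apply _).comp continuous_subtype_val

/-- The quotient map to unordered configurations. -/
def qC (f : Conf 2 (realization Γ)) : UConf 2 (realization Γ) := Quot.mk _ f

theorem permRel_iff (f g : Conf 2 (realization Γ)) :
    permRel 2 (realization Γ) f g ↔ f = g ∨ f = swC g := by
  constructor
  · rintro ⟨σ, h⟩
    have h0 := congrFun h 0
    have h1 := congrFun h 1
    have hne : σ 0 ≠ σ 1 := fun h => by simpa using σ.injective h
    simp only [Function.comp] at h0 h1
    rcases Fin.exists_fin_two.1 ⟨σ 0, rfl⟩ with h2 | h2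
    · left
      have h3 : σ 1 = 1 := by rw [h2] at hne; omega
      rw [h2] at h0; rw [h3] at h1
      exact conf_ext h0 h1
    · right
      have h3 : σ 1 = 0 := by rw [h2] at hne; omega
      rw [h2] at h0; rw [h3] at h1
      exact conf_ext (by simpa using h0) (by simpa using h1)
  · rintro (rfl | rfl)
    · exact ⟨1, rfl⟩
    · exact ⟨Equiv.swap 0 1, rfl⟩

theorem qC_eq_iff (f g : Conf 2 (realization Γ)) : qC f = qC g ↔ f = g ∨ f = swC g := by
  rw [← permRel_iff]
  have he : Equivalence (permRel 2 (realization Γ)) := by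
    refine ⟨fun f => ⟨1, rfl⟩, ?_, ?_⟩
    · intro f g h
      rw [permRel_iff] at h ⊢
      rcases h with rfl | rfl <;> simp
    · intro f g k h h'
      rw [permRel_iff] at h h' ⊢
      rcases h with rfl | rfl <;> rcases h' with rfl | rfl <;> simp
  exact ⟨fun h => by
    have := Quot.eqvGen_exact h
    rwa [he.eqvGen_iff] at this, fun h => Quot.sound h⟩

@[simp] theorem qC_swC (f : Conf 2 (realization Γ)) : qC (swC f) = qC f :=
  (qC_eq_iff _ _).2 (Or.inr rfl)

theorem qC_surj : Function.Surjective (qC (Γ := Γ)) := Quot.mk_surjective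

theorem continuous_qC : Continuous (qC (Γ := Γ)) := continuous_quot_mk

theorem isOpenMap_qC : IsOpenMap (qC (Γ := Γ)) := by
  intro U hU
  have : IsOpen (qC ⁻¹' (qC '' U)) := by
    have : qC ⁻¹' (qC '' U) = U ∪ swC ⁻¹' U := by
      ext f
      constructor
      · rintro ⟨g, hg, h⟩
        rcases (qC_eq_iff _ _).1 h with rfl | rfl
        · exact Or.inl hg
        · exact Or.inr hg
      · rintro (h | h)
        · exact ⟨f, h, rfl⟩
        · exact ⟨swC f, h, by simp⟩
    rw [this]
    exact hU.union (hU.preimage continuous_swC)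
  exact this

theorem Ut_sw (f : Conf 2 (realization Γ)) (i : OP V) : swC f ∈ Ut Γ i ↔ f ∈ Ut Γ i.sw := by
  simp only [Ut, OP.sw, Set.mem_ofPred_eq, swC_zero, swC_one]
  exact and_comm

theorem isOpen_Ut (i : OP V) : IsOpen (Ut Γ i) := by
  have h : ∀ (k : Fin 2) (v : V), Continuous fun f : Conf 2 (realization Γ) => (f.1 k : V → ℝ) v :=
    fun k v => (continuous_apply v).comp (continuous_subtype_val.comp
      ((continuous_apply k).comp continuous_subtype_val))
  exact (isOpen_lt (h 1 _) (h 0 _)).inter (isOpen_lt (h 0 _) (h 1 _))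

theorem Ut_cover (f : Conf 2 (realization Γ)) : ∃ i, f ∈ Ut Γ i := by
  have key : ∀ x y : V → ℝ, x ∈ realization Γ → y ∈ realization Γ → x ≠ y → ∃ u, y u < x u := by
    intro x y hx hy hne
    by_contra! h
    apply hne
    funext u
    have h1 : ∑ w, (y w - x w) = 0 := by rw [Finset.sum_sub_distrib, real_sum hx, real_sum hy]; simp
    have := (Finset.sum_eq_zero_iff_of_nonneg (fun w _ => sub_nonneg.2 (h w))).1 h1 u (Finset.mem_univ _)
    linarith
  have hne : (f.1 0 : V → ℝ) ≠ f.1 1 := fun h => by simpa using f.2 (Subtype.ext h)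
  obtain ⟨u, hu⟩ := key _ _ (f.1 0).2 (f.1 1).2 hne
  obtain ⟨v, hv⟩ := key _ _ (f.1 1).2 (f.1 0).2 hne.symm
  exact ⟨⟨(u, v), fun h => by simp only at h; subst h; linarith⟩, hu, hv⟩

theorem Ut_ne {f : Conf 2 (realization Γ)} {i j : OP V} (hi : f ∈ Ut Γ i) (hj : f ∈ Ut Γ j) :
    i.1.1 ≠ j.1.2 := by
  intro h
  have h1 := hi.1
  have h2 := hj.2
  rw [h] at h1
  linarith

theorem Ut_pos {f : Conf 2 (realization Γ)} {i : OP V} (hi : f ∈ Ut Γ i) :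
    0 < (f.1 0 : V → ℝ) i.1.1 ∧ 0 < (f.1 1 : V → ℝ) i.1.2 :=
  ⟨(real_nonneg (f.1 1).2 _).trans_lt hi.1, (real_nonneg (f.1 0).2 _).trans_lt hi.2⟩

/-- Two indices whose open sets meet. -/
def nb (Γ : SimpleGraph V) (i j : OP V) : Prop :=
  (i.1.1 = j.1.1 ∨ Γ.Adj i.1.1 j.1.1) ∧ (i.1.2 = j.1.2 ∨ Γ.Adj i.1.2 j.1.2) ∧ i.1.1 ≠ j.1.2 ∧
    j.1.1 ≠ i.1.2

theorem nb_of_mem {f : Conf 2 (realization Γ)} {i j : OP V} (hi : f ∈ Ut Γ i) (hj : f ∈ Ut Γ j) :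
    nb Γ i j := by
  refine ⟨?_, ?_, Ut_ne hi hj, Ut_ne hj hi⟩
  · by_cases h : i.1.1 = j.1.1
    · exact Or.inl h
    · exact Or.inr (real_supp (f.1 0).2 (Ut_pos hi).1 (Ut_pos hj).1 h).1
  · by_cases h : i.1.2 = j.1.2
    · exact Or.inl h
    · exact Or.inr (real_supp (f.1 1).2 (Ut_pos hi).2 (Ut_pos hj).2 h).1

theorem mid_lt {i j : OP V} (h : nb Γ i j) :
    (mid i.1.2 j.1.2 i.1.1 < mid i.1.1 j.1.1 i.1.1 ∧ mid i.1.1 j.1.1 i.1.2 < mid i.1.2 j.1.2 i.1.2) ∧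
    (mid i.1.2 j.1.2 j.1.1 < mid i.1.1 j.1.1 j.1.1 ∧
      mid i.1.1 j.1.1 j.1.2 < mid i.1.2 j.1.2 j.1.2) := by
  obtain ⟨-, -, h3, h4⟩ := h
  have h5 := i.2
  have h6 := j.2
  refine ⟨⟨?_, ?_⟩, ⟨?_, ?_⟩⟩
  · simp only [mid, basisVec, if_neg h5, if_neg h3, if_true]; split_ifs <;> norm_num
  · simp only [mid, basisVec, if_neg h5.symm, if_neg h4.symm, if_true]; split_ifs <;> norm_num
  · simp only [mid, basisVec, if_neg h6, if_neg h4, if_true]; split_ifs <;> norm_num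
  · simp only [mid, basisVec, if_neg h6.symm, if_neg h3.symm, if_true]; split_ifs <;> norm_num

/-- The centre of `Ut i ∩ Ut j`. -/
def ctr (hv : ∀ v, ∃ w, Γ.Adj v w) (i j : OP V) (h : nb Γ i j) : Conf 2 (realization Γ) :=
  mkC (mid i.1.1 j.1.1) (mid i.1.2 j.1.2) (mid_mem hv h.1) (mid_mem hv h.2.1) fun he => by
    have := (mid_lt h).1.1
    rw [he] at this
    exact lt_irrefl _ this

theorem ctr_mem (hv : ∀ v, ∃ w, Γ.Adj v w) (i j : OP V) (h : nb Γ i j) :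
    ctr hv i j h ∈ Ut Γ i ∩ Ut Γ j := mid_lt h

theorem lin_lt {a b c d t : ℝ} (h0 : 0 ≤ t) (h1 : t ≤ 1) (hab : a < b) (hcd : c < d) :
    (1 - t) * a + t * c < (1 - t) * b + t * d := by
  rcases h0.eq_or_lt with rfl | h0
  · simpa using hab
  · nlinarith [mul_pos h0 (sub_pos.2 hcd), mul_nonneg (sub_nonneg.2 h1) (sub_pos.2 hab).le]

theorem push_mem {f : Conf 2 (realization Γ)} {i j : OP V} (hi : f ∈ Ut Γ i) (hj : f ∈ Ut Γ j)
    {t : ℝ} (h0 : 0 ≤ t) (h1 : t ≤ 1) :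
    (fun w => (1 - t) * (f.1 1 : V → ℝ) w + t * mid i.1.2 j.1.2 w) i.1.1 <
      (fun w => (1 - t) * (f.1 0 : V → ℝ) w + t * mid i.1.1 j.1.1 w) i.1.1 :=
  lin_lt h0 h1 hi.1 (mid_lt (nb_of_mem hi hj)).1.1

/-- Straight-line motion of a configuration in `Ut i ∩ Ut j` towards the centre. -/
def push (i j : OP V) (f : (Ut Γ i ∩ Ut Γ j : Set _)) (t : unitInterval) :
    (Ut Γ i ∩ Ut Γ j : Set (Conf 2 (realization Γ))) :=
  ⟨mkC (fun w => (1 - t.1) * (f.1.1 0 : V → ℝ) w + t.1 * mid i.1.1 j.1.1 w)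
    (fun w => (1 - t.1) * (f.1.1 1 : V → ℝ) w + t.1 * mid i.1.2 j.1.2 w)
    (real_star (f.1.1 0).2 (Ut_pos f.2.1).1 (Ut_pos f.2.2).1 t.2.1 t.2.2)
    (real_star (f.1.1 1).2 (Ut_pos f.2.1).2 (Ut_pos f.2.2).2 t.2.1 t.2.2) (fun he => by
      have := push_mem f.2.1 f.2.2 t.2.1 t.2.2
      rw [he] at this
      exact lt_irrefl _ this),
   ⟨lin_lt t.2.1 t.2.2 f.2.1.1 (mid_lt (nb_of_mem f.2.1 f.2.2)).1.1,
    lin_lt t.2.1 t.2.2 f.2.1.2 (mid_lt (nb_of_mem f.2.1 f.2.2)).1.2⟩,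
   ⟨lin_lt t.2.1 t.2.2 f.2.2.1 (mid_lt (nb_of_mem f.2.1 f.2.2)).2.1,
    lin_lt t.2.1 t.2.2 f.2.2.2 (mid_lt (nb_of_mem f.2.1 f.2.2)).2.2⟩⟩

theorem continuous_push (i j : OP V) :
    Continuous fun p : unitInterval × (Ut Γ i ∩ Ut Γ j : Set (Conf 2 (realization Γ))) =>
      push i j p.2 p.1 := by
  have hk : ∀ k : Fin 2, Continuous fun p : unitInterval ×
      (Ut Γ i ∩ Ut Γ j : Set (Conf 2 (realization Γ))) => ((p.2.1.1 k : V → ℝ)) := fun k =>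
    continuous_subtype_val.comp ((continuous_apply k).comp
      (continuous_subtype_val.comp (continuous_subtype_val.comp continuous_snd)))
  have hk' : ∀ (k : Fin 2) (w : V), Continuous fun p : unitInterval ×
      (Ut Γ i ∩ Ut Γ j : Set (Conf 2 (realization Γ))) => ((p.2.1.1 k : V → ℝ) w) := fun k w =>
    (continuous_apply w).comp (hk k)
  apply Continuous.subtype_mk
  apply Continuous.subtype_mk
  apply continuous_pi
  intro k
  fin_cases k
  · apply Continuous.subtype_mk
    apply continuous_pi
    intro w
    have := hk' 0 w
    fun_prop
  · apply Continuous.subtype_mk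
    apply continuous_pi
    intro w
    have := hk' 1 w
    fun_prop

theorem push_zero (i j : OP V) (f : (Ut Γ i ∩ Ut Γ j : Set (Conf 2 (realization Γ)))) :
    push i j f 0 = f := by
  apply Subtype.ext
  apply conf_ext <;> apply Subtype.ext <;> funext w <;> simp [push]

theorem push_one (hv : ∀ v, ∃ w, Γ.Adj v w) (i j : OP V)
    (f : (Ut Γ i ∩ Ut Γ j : Set (Conf 2 (realization Γ)))) :
    push i j f 1 = ⟨ctr hv i j (nb_of_mem f.2.1 f.2.2), ctr_mem hv i j _⟩ := by
  apply Subtype.ext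
  apply conf_ext <;> apply Subtype.ext <;> funext w <;> simp [push, ctr]

end Conf2

/-! ### The cover of the unordered configuration space and its groupoid -/

section UC
variable {V : Type} [Fintype V] [DecidableEq V] (Γ : SimpleGraph V)

/-- The image of `Ut i` in the unordered configuration space. -/
def BS (i : OP V) : Set (UConf 2 (realization Γ)) := qC '' Ut Γ i

variable {Γ}

theorem isOpen_BS (i : OP V) : IsOpen (BS Γ i) := isOpenMap_qC _ (isOpen_Ut i)

theorem BS_cover (x : UConf 2 (realization Γ)) : ∃ i, x ∈ BS Γ i := by
  obtain ⟨f, rfl⟩ := qC_surj x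
  obtain ⟨i, hi⟩ := Ut_cover f
  exact ⟨i, f, hi, rfl⟩

theorem mem_BS {f : Conf 2 (realization Γ)} {i : OP V} (h : f ∈ Ut Γ i) : qC f ∈ BS Γ i :=
  ⟨f, h, rfl⟩

theorem qC_mem_BS (f : Conf 2 (realization Γ)) (i : OP V) :
    qC f ∈ BS Γ i ↔ f ∈ Ut Γ i ∨ f ∈ Ut Γ i.sw := by
  constructor
  · rintro ⟨g, hg, h⟩
    rcases (qC_eq_iff _ _).1 h with rfl | rfl
    · exact Or.inl hg
    · exact Or.inr ((Ut_sw _ _).1 hg)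
  · rintro (h | h)
    · exact ⟨f, h, rfl⟩
    · exact ⟨swC f, (Ut_sw _ _).2 h, by simp⟩

theorem BS_sw (i : OP V) : BS Γ i.sw = BS Γ i := by
  ext x
  obtain ⟨f, rfl⟩ := qC_surj x
  rw [qC_mem_BS, qC_mem_BS, OP.sw_sw, or_comm]

theorem BS_eq {i j : OP V} (h : j = i.sw) : BS Γ j = BS Γ i := by rw [h, BS_sw]

theorem nb_self (i : OP V) : nb Γ i i := ⟨Or.inl rfl, Or.inl rfl, i.2, i.2⟩

theorem Ut_swC_disj {f : Conf 2 (realization Γ)} {i : OP V} (h : f ∈ Ut Γ i) (h' : swC f ∈ Ut Γ i) :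
    False := by
  have h1 := h.1
  have h2 := h'.1
  simp only [swC_zero, swC_one] at h2
  linarith

theorem isSimplyConnected_BS (hv : ∀ v, ∃ w, Γ.Adj v w) (i : OP V) : IsSimplyConnected (BS Γ i) := by
  have hcon : ContractibleSpace (Ut Γ i ∩ Ut Γ i : Set (Conf 2 (realization Γ))) := by
    rw [contractible_iff_id_nullhomotopic]
    refine ⟨⟨ctr hv i i (nb_self i), ctr_mem hv i i _⟩, ⟨?_⟩⟩
    exact
      { toFun := fun p => push i i p.2 p.1
        continuous_toFun := continuous_push i i
        map_zero_left := fun f => push_zero i i f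
        map_one_left := fun f => push_one hv i i f }
  have hsc : SimplyConnectedSpace (Ut Γ i ∩ Ut Γ i : Set (Conf 2 (realization Γ))) := inferInstance
  have hsc2 : IsSimplyConnected (Set.univ : Set (Ut Γ i)) := by
    have h1 : IsSimplyConnected (Ut Γ i ∩ Ut Γ i : Set (Conf 2 (realization Γ))) := hsc
    rw [Set.inter_self] at h1
    have h2 : Ut Γ i = Subtype.val '' (Set.univ : Set (Ut Γ i)) := by simp
    rw [h2] at h1
    exact (Topology.IsEmbedding.isSimplyConnected_image Topology.IsEmbedding.subtypeVal).1 h1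
  have hemb : Topology.IsOpenEmbedding (fun f : Ut Γ i => qC f.1) := by
    refine Topology.IsOpenEmbedding.of_continuous_injective_isOpenMap
      (continuous_qC.comp continuous_subtype_val) ?_
      (isOpenMap_qC.comp (isOpen_Ut i).isOpenMap_subtype_val)
    rintro ⟨f, hf⟩ ⟨g, hg⟩ h
    rcases (qC_eq_iff _ _).1 h with h | h
    · exact Subtype.ext h
    · have h : f = swC g := h
      rw [h] at hf
      exact (Ut_swC_disj hg hf).elim
  have h3 : BS Γ i = (fun f : Ut Γ i => qC f.1) '' Set.univ := by
    ext x; simp [BS]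
  rw [h3]
  exact (hemb.isEmbedding.isSimplyConnected_image).2 hsc2

/-- Points of `q (Ut i ∩ Ut j)` are joined to each other inside `BS i ∩ BS j`. -/
theorem joined_inter (hv : ∀ v, ∃ w, Γ.Adj v w) {i j : OP V} {f : Conf 2 (realization Γ)}
    (hi : f ∈ Ut Γ i) (hj : f ∈ Ut Γ j) :
    JoinedIn (BS Γ i ∩ BS Γ j) (qC f) (qC (ctr hv i j (nb_of_mem hi hj))) := by
  have hc := continuous_push (Γ := Γ) i j
  refine ⟨{ toFun := fun t => qC (push i j ⟨f, hi, hj⟩ t).1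
            continuous_toFun := continuous_qC.comp (continuous_subtype_val.comp
              (hc.comp (continuous_id.prodMk continuous_const)))
            source' := by rw [push_zero]
            target' := by rw [push_one hv] }, fun t => ?_⟩
  exact ⟨⟨_, (push i j ⟨f, hi, hj⟩ t).2.1, rfl⟩, ⟨_, (push i j ⟨f, hi, hj⟩ t).2.2, rfl⟩⟩

variable (hv : ∀ v, ∃ w, Γ.Adj v w)

/-- The basepoint of `BS i`: the two points sit at the vertices of the pair `i`. -/
def cc (i : OP V) : UConf 2 (realization Γ) := qC (ctr hv i i (nb_self i))

theorem cc_mem (i : OP V) : cc hv i ∈ BS Γ i := mem_BS (ctr_mem hv i i _).1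

/-- Vertex-to-vertex path class through a point `x` of `BS i ∩ BS j`. -/
def tau {x : UConf 2 (realization Γ)} {i j : OP V} (hi : x ∈ BS Γ i) (hj : x ∈ BS Γ j) :
    Path.Homotopic.Quotient (cc hv i) (cc hv j) :=
  (sp (isSimplyConnected_BS hv i) (cc_mem hv i) hi).trans
    (sp (isSimplyConnected_BS hv j) hj (cc_mem hv j))

theorem tau_trans {x : UConf 2 (realization Γ)} {i j k : OP V} (hi : x ∈ BS Γ i) (hj : x ∈ BS Γ j)
    (hk : x ∈ BS Γ k) : (tau hv hi hj).trans (tau hv hj hk) = tau hv hi hk := by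
  unfold tau
  rw [Path.Homotopic.Quotient.trans_assoc, ← sp_symm (isSimplyConnected_BS hv j) (cc_mem hv j),
    symm_trans_cancel]

theorem tau_self {x : UConf 2 (realization Γ)} {i : OP V} (hi hi' : x ∈ BS Γ i) :
    tau hv hi hi' = .refl _ := by
  unfold tau; rw [sp_trans, sp_self]

theorem tau_symm {x : UConf 2 (realization Γ)} {i j : OP V} (hi : x ∈ BS Γ i) (hj : x ∈ BS Γ j) :
    (tau hv hi hj).symm = tau hv hj hi :=
  (eq_symm_of_trans _ _ (by rw [tau_trans, tau_self])).symm

theorem tau_congr {x y : UConf 2 (realization Γ)} {i j : OP V} (hi : x ∈ BS Γ i) (hj : x ∈ BS Γ j)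
    (hi' : y ∈ BS Γ i) (hj' : y ∈ BS Γ j) (h : JoinedIn (BS Γ i ∩ BS Γ j) x y) :
    tau hv hi hj = tau hv hi' hj' := by
  unfold tau
  rw [← sp_trans (isSimplyConnected_BS hv i) (cc_mem hv i) hi hi',
    ← sp_trans (isSimplyConnected_BS hv j) hj' hj (cc_mem hv j),
    sp_congr (isSimplyConnected_BS hv i) (isSimplyConnected_BS hv j) hi hi' hj hj' h,
    ← sp_symm (isSimplyConnected_BS hv j) hj hj', Path.Homotopic.Quotient.trans_assoc,
    trans_symm_cancel]

/-- The elementary arrow between two overlapping indices. -/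
def TT (i j : OP V) (h : nb Γ i j) : Path.Homotopic.Quotient (cc hv i) (cc hv j) :=
  tau hv (mem_BS (ctr_mem hv i j h).1) (mem_BS (ctr_mem hv i j h).2)

/-- The constant path, seen as an arrow from `(u, v)` to `(v, u)`. -/
def iota (i j : OP V) (h : j = i.sw) : Path.Homotopic.Quotient (cc hv i) (cc hv j) :=
  tau hv (x := cc hv i) (cc_mem hv i) (by rw [BS_eq h]; exact cc_mem hv i)

theorem tau_eq_TT {f : Conf 2 (realization Γ)} {i j : OP V} (hi : f ∈ Ut Γ i) (hj : f ∈ Ut Γ j)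
    (h1 : qC f ∈ BS Γ i) (h2 : qC f ∈ BS Γ j) :
    tau hv h1 h2 = TT hv i j (nb_of_mem hi hj) :=
  tau_congr hv _ _ _ _ (joined_inter hv hi hj)

theorem tau_eq_iota {x : UConf 2 (realization Γ)} {i j : OP V} (h : j = i.sw) (hi : x ∈ BS Γ i)
    (hi' : x ∈ BS Γ j) : tau hv hi hi' = iota hv i j h := by
  refine tau_congr hv _ _ _ _ ?_
  rw [BS_eq h, Set.inter_self]
  exact (isSimplyConnected_BS hv i).isPathConnected.joinedIn x hi _ (cc_mem hv i)

theorem TT_self (i : OP V) (h : nb Γ i i) : TT hv i i h = .refl _ := tau_self hv _ _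

theorem TT_symm (i j : OP V) (h : nb Γ i j) (h' : nb Γ j i) : TT hv j i h' = (TT hv i j h).symm := by
  have h1 := ctr_mem hv i j h
  rw [TT, TT, tau_symm]
  exact (tau_eq_TT hv h1.2 h1.1 _ _).symm

theorem TT_trans {f : Conf 2 (realization Γ)} {i j k : OP V} (hi : f ∈ Ut Γ i) (hj : f ∈ Ut Γ j)
    (hk : f ∈ Ut Γ k) : (TT hv i j (nb_of_mem hi hj)).trans (TT hv j k (nb_of_mem hj hk)) =
      TT hv i k (nb_of_mem hi hk) := by
  have h : ∀ {i}, f ∈ Ut Γ i → qC f ∈ BS Γ i := mem_BS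
  rw [← tau_eq_TT hv hi hj (h hi) (h hj), ← tau_eq_TT hv hj hk (h hj) (h hk),
    ← tau_eq_TT hv hi hk (h hi) (h hk), tau_trans]

theorem iota_iota (i j : OP V) (h : j = i.sw) (h' : i = j.sw) :
    (iota hv i j h).trans (iota hv j i h') = .refl _ := by
  have hm : cc hv i ∈ BS Γ j := by rw [BS_eq h]; exact cc_mem hv i
  rw [← tau_eq_iota hv h' hm (cc_mem hv i), iota, tau_trans, tau_self]

theorem TT_sw (i j i' j' : OP V) (h : nb Γ i j) (h' : nb Γ i' j') (hi' : i' = i.sw) (hj' : j' = j.sw)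
    (hj'' : j = j'.sw) :
    TT hv i j h = (iota hv i i' hi').trans ((TT hv i' j' h').trans (iota hv j' j hj'')) := by
  have h1 := ctr_mem hv i j h
  have hsw : qC (swC (ctr hv i j h)) = qC (ctr hv i j h) := qC_swC _
  have hi : qC (ctr hv i j h) ∈ BS Γ i := mem_BS h1.1
  have hj : qC (ctr hv i j h) ∈ BS Γ j := mem_BS h1.2
  have mi : qC (ctr hv i j h) ∈ BS Γ i' := by rwa [BS_eq hi']
  have mj : qC (ctr hv i j h) ∈ BS Γ j' := by rwa [BS_eq hj']
  have h3 : tau hv mi mj = TT hv i' j' h' := by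
    have := tau_eq_TT hv (f := swC (ctr hv i j h)) (i := i') (j := j')
      ((Ut_sw _ _).2 (by rw [hi']; exact h1.1)) ((Ut_sw _ _).2 (by rw [hj']; exact h1.2))
      (hsw ▸ mi) (hsw ▸ mj)
    rw [← this]
    congr 1 <;> simp
  rw [← h3, ← tau_eq_iota hv hi' hi mi, ← tau_eq_iota hv hj'' mj hj, tau_trans, tau_trans]
  rfl

/-- Every path class between basepoints is a product of elementary arrows and exchanges. -/
theorem arrow_ind (Q : ∀ i j, Path.Homotopic.Quotient (cc hv i) (cc hv j) → Prop)
    (hcomp : ∀ i j k (p : Path.Homotopic.Quotient (cc hv i) (cc hv j))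
      (r : Path.Homotopic.Quotient (cc hv j) (cc hv k)), Q i j p → Q j k r → Q i k (p.trans r))
    (hT : ∀ i j h, Q i j (TT hv i j h)) (hι : ∀ i j h, Q i j (iota hv i j h)) :
    ∀ i j p, Q i j p := by
  have htau : ∀ {x} {i j : OP V} (hi : x ∈ BS Γ i) (hj : x ∈ BS Γ j), Q i j (tau hv hi hj) := by
    intro x i j hi hj
    have hi0 := hi
    obtain ⟨f, hf, rfl⟩ := hi0
    rcases (qC_mem_BS f j).1 hj with h | h
    · rw [tau_eq_TT hv hf h]
      exact hT _ _ _
    · have h1 : qC f ∈ BS Γ j.sw := mem_BS h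
      rw [← tau_trans hv hi h1 hj, tau_eq_TT hv hf h, tau_eq_iota hv (j.sw_sw).symm h1 hj]
      exact hcomp _ _ _ _ _ (hT _ _ _) (hι _ _ _)
  have key : ∀ x y (p : Path.Homotopic.Quotient x y), ∀ i j (hi : x ∈ BS Γ i) (hj : y ∈ BS Γ j),
      Q i j ((sp (isSimplyConnected_BS hv i) (cc_mem hv i) hi).trans
        (p.trans (sp (isSimplyConnected_BS hv j) hj (cc_mem hv j)))) := by
    refine path_ind (BS Γ) isOpen_BS BS_cover _ ?_ ?_
    · intro x y z p r hp hr i j hi hj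
      obtain ⟨k, hk⟩ := BS_cover y
      have := hcomp _ _ _ _ _ (hp i k hi hk) (hr k j hk hj)
      simp only [Path.Homotopic.Quotient.trans_assoc] at this ⊢
      rwa [← sp_symm (isSimplyConnected_BS hv k) (cc_mem hv k), symm_trans_cancel] at this
    · intro k x y γ hγ i j hi hj
      have hγ' : ∀ t, γ t ∈ BS Γ k := fun t => hγ ⟨t, rfl⟩
      have hxk : x ∈ BS Γ k := by simpa using hγ' 0
      have hyk : y ∈ BS Γ k := by simpa using hγ' 1
      have := hcomp _ _ _ _ _ (htau hi hxk) (htau hyk hj)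
      rw [sp_of_path (isSimplyConnected_BS hv k) hxk hyk γ hγ',
        ← sp_trans (isSimplyConnected_BS hv k) hxk (cc_mem hv k) hyk]
      simpa only [tau, Path.Homotopic.Quotient.trans_assoc] using this
  intro i j p
  have := key _ _ p i j (cc_mem hv i) (cc_mem hv j)
  simpa only [sp_self, Path.Homotopic.Quotient.refl_trans, Path.Homotopic.Quotient.trans_refl]
    using this

end UC

/-! ### Transport functors from labelings of the one-cells -/

section Lab
variable {V : Type} [Fintype V] [DecidableEq V] {Γ : SimpleGraph V}

/-- `Cell Γ c a b`: a token moves along the edge `a b` while the other token rests at `c`. -/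
abbrev Cell (Γ : SimpleGraph V) (c a b : V) : Prop := Γ.Adj a b ∧ c ≠ a ∧ c ≠ b

/-- Disjoint edges `a b` and `c d`: the two-cells of the discrete configuration space. -/
abbrev DE (Γ : SimpleGraph V) (a b c d : V) : Prop :=
  Γ.Adj a b ∧ Γ.Adj c d ∧ a ≠ c ∧ a ≠ d ∧ b ≠ c ∧ b ≠ d

theorem Cell.symm {c a b : V} (h : Cell Γ c a b) : Cell Γ c b a := ⟨h.1.symm, h.2.2, h.2.1⟩

theorem nb_cell {c a b : V} (h : Cell Γ c a b) : nb Γ ⟨(c, a), h.2.1⟩ ⟨(c, b), h.2.2⟩ :=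
  ⟨Or.inl rfl, Or.inr h.1, h.2.2, h.2.1⟩

/-- The arrow moving the second token along `a b`, the first one resting at `c`. -/
def EE (hv : ∀ v, ∃ w, Γ.Adj v w) {c a b : V} (h : Cell Γ c a b) :
    Path.Homotopic.Quotient (cc hv ⟨(c, a), h.2.1⟩) (cc hv ⟨(c, b), h.2.2⟩) :=
  TT hv _ _ (nb_cell h)

variable {H : Type*} [Group H]

/-- A labeling of one-cells by group elements, compatible with reversal and with two-cells. -/
structure IsLab (Γ : SimpleGraph V) (l : V → V → V → H) : Prop where
  inv : ∀ c a b, Cell Γ c a b → l c b a = (l c a b)⁻¹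
  sq : ∀ a b c d, DE Γ a b c d → l c a b * l b c d = l a c d * l d a b

/-- The labeling extended by `1` to degenerate cells. -/
def labL (l : V → V → V → H) (c a b : V) : H := if a = b then 1 else l c a b

/-- The transition element between overlapping indices. -/
def labG (l : V → V → V → H) (i j : OP V) : H :=
  labL l i.1.2 i.1.1 j.1.1 * labL l j.1.1 i.1.2 j.1.2

theorem labL_sq {l : V → V → V → H} (hl : IsLab Γ l) {a b c d : V} (hab : a = b ∨ Γ.Adj a b)
    (hcd : c = d ∨ Γ.Adj c d) (h1 : a ≠ c) (h2 : a ≠ d) (h3 : b ≠ c) (h4 : b ≠ d) :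
    labL l c a b * labL l b c d = labL l a c d * labL l d a b := by
  unfold labL
  by_cases h5 : a = b
  · subst h5; simp
  by_cases h6 : c = d
  · subst h6; simp
  rw [if_neg h5, if_neg h6, if_neg h5, if_neg h6]
  exact hl.sq a b c d ⟨hab.resolve_left h5, hcd.resolve_left h6, h1, h2, h3, h4⟩

theorem labL_add {l : V → V → V → H} (hl : IsLab Γ l) {x : V → ℝ} (hx : x ∈ realization Γ)
    {c a b d : V} (ha : 0 < x a) (hb : 0 < x b) (hd : 0 < x d) (hca : c ≠ a) (hcb : c ≠ b) :
    labL l c a b * labL l c b d = labL l c a d := by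
  unfold labL
  by_cases h1 : a = b
  · subst h1; simp
  by_cases h2 : b = d
  · subst h2; simp
  have h3 : a = d := by
    by_contra h3
    have := (real_supp hx ha hb h1).2.2 d (Ne.symm h3) (Ne.symm h2)
    linarith
  subst h3
  rw [if_neg h1, if_neg h2, if_pos rfl, hl.inv c a b ⟨(real_supp hx ha hb h1).1, hca, hcb⟩]
  simp

theorem labG_trans {l : V → V → V → H} (hl : IsLab Γ l) {f : Conf 2 (realization Γ)} {i j k : OP V}
    (hi : f ∈ Ut Γ i) (hj : f ∈ Ut Γ j) (hk : f ∈ Ut Γ k) :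
    labG l i j * labG l j k = labG l i k := by
  unfold labG
  have n1 := nb_of_mem hi hj
  have n2 := nb_of_mem hj hk
  have n3 := nb_of_mem hi hk
  have h1 := labL_sq hl (a := i.1.2) (b := j.1.2) (c := j.1.1) (d := k.1.1) n1.2.1 n2.1
    n1.2.2.2.symm n3.2.2.2.symm j.2.symm n2.2.2.2.symm
  have h2 := labL_add hl (f.1 0).2 (c := i.1.2) (Ut_pos hi).1 (Ut_pos hj).1 (Ut_pos hk).1 i.2.symm
    n1.2.2.2.symm
  have h3 := labL_add hl (f.1 1).2 (c := k.1.1) (Ut_pos hi).2 (Ut_pos hj).2 (Ut_pos hk).2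
    n3.2.2.2 n2.2.2.2
  rw [← h2, ← h3]
  simp only [mul_assoc]
  congr 1
  simp only [← mul_assoc]
  rw [h1]

theorem labG_sw {l : V → V → V → H} (hl : IsLab Γ l) {i j : OP V} (h : nb Γ i j) :
    labG l i.sw j.sw = labG l i j := by
  unfold labG
  exact labL_sq hl (a := i.1.2) (b := j.1.2) (c := i.1.1) (d := j.1.1) h.2.1 h.1 i.2.symm
    h.2.2.2.symm h.2.2.1.symm j.2.symm

/-- The Čech cocycle attached to a labeling. -/
def labC (Γ : SimpleGraph V) (l : V → V → V → H) (i j : OP V) (x : UConf 2 (realization Γ)) : H :=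
  if x ∈ qC '' (Ut Γ i ∩ Ut Γ j) then labG l i j else labG l i j.sw

theorem Ut_disj_sw {f : Conf 2 (realization Γ)} {j : OP V} (h : f ∈ Ut Γ j) (h' : f ∈ Ut Γ j.sw) :
    False := Ut_swC_disj h ((Ut_sw f j).2 h')

theorem qC_mem_inter {f : Conf 2 (realization Γ)} {i j : OP V} (hi : f ∈ Ut Γ i) :
    qC f ∈ qC '' (Ut Γ i ∩ Ut Γ j) ↔ f ∈ Ut Γ j := by
  constructor
  · rintro ⟨g, ⟨h1, h2⟩, h⟩
    rcases (qC_eq_iff _ _).1 h with rfl | rfl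
    · exact h2
    · exact (Ut_swC_disj hi h1).elim
  · exact fun h => ⟨f, ⟨hi, h⟩, rfl⟩

theorem labC_pos {l : V → V → V → H} {f : Conf 2 (realization Γ)} {i j : OP V} (hi : f ∈ Ut Γ i)
    (hj : f ∈ Ut Γ j) : labC Γ l i j (qC f) = labG l i j := by
  rw [labC, if_pos ((qC_mem_inter hi).2 hj)]

theorem labC_neg {l : V → V → V → H} {f : Conf 2 (realization Γ)} {i j : OP V} (hi : f ∈ Ut Γ i)
    (hj : f ∈ Ut Γ j.sw) : labC Γ l i j (qC f) = labG l i j.sw := by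
  rw [labC, if_neg fun h => Ut_disj_sw ((qC_mem_inter hi).1 h) hj]

theorem labC_coc {l : V → V → V → H} (hl : IsLab Γ l) (i j k : OP V) (x : UConf 2 (realization Γ))
    (hi : x ∈ BS Γ i) (hj : x ∈ BS Γ j) (hk : x ∈ BS Γ k) :
    labC Γ l i j x * labC Γ l j k x = labC Γ l i k x := by
  obtain ⟨f, hf, rfl⟩ := hi
  rcases (qC_mem_BS f j).1 hj with hj | hj <;> rcases (qC_mem_BS f k).1 hk with hk | hk
  · rw [labC_pos hf hj, labC_pos hj hk, labC_pos hf hk, labG_trans hl hf hj hk]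
  · rw [labC_pos hf hj, labC_neg hj hk, labC_neg hf hk, labG_trans hl hf hj hk]
  · have h1 : swC f ∈ Ut Γ j := (Ut_sw _ _).2 hj
    have h2 : swC f ∈ Ut Γ k.sw := (Ut_sw _ _).2 hk
    rw [labC_neg hf hj, labC_pos hf hk, ← qC_swC, labC_neg h1 h2,
      ← labG_sw hl (nb_of_mem h1 h2), OP.sw_sw, labG_trans hl hf hj hk]
  · have h1 : swC f ∈ Ut Γ j := (Ut_sw _ _).2 hj
    have h2 : swC f ∈ Ut Γ k := (Ut_sw _ _).2 hk
    rw [labC_neg hf hj, labC_neg hf hk, ← qC_swC, labC_pos h1 h2,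
      ← labG_sw hl (nb_of_mem h1 h2), labG_trans hl hf hj hk]

theorem labC_loc (l : V → V → V → H) (i j : OP V) (x : UConf 2 (realization Γ))
    (hx : x ∈ BS Γ i ∩ BS Γ j) : ∀ᶠ y in nhds x, labC Γ l i j y = labC Γ l i j x := by
  obtain ⟨⟨f, hf, rfl⟩, hj⟩ := hx
  have hop : ∀ k, IsOpen (qC '' (Ut Γ i ∩ Ut Γ k)) := fun k =>
    isOpenMap_qC _ ((isOpen_Ut i).inter (isOpen_Ut k))
  rcases (qC_mem_BS f j).1 hj with hj | hj
  · filter_upwards [(hop j).mem_nhds ⟨f, ⟨hf, hj⟩, rfl⟩]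
    rintro _ ⟨g, ⟨h1, h2⟩, rfl⟩
    rw [labC_pos hf hj, labC_pos h1 h2]
  · filter_upwards [(hop j.sw).mem_nhds ⟨f, ⟨hf, hj⟩, rfl⟩]
    rintro _ ⟨g, ⟨h1, h2⟩, rfl⟩
    rw [labC_neg hf hj, labC_neg h1 h2]

/-- A compatible labeling of the one-cells extends to a functor on path classes between
basepoints, trivial on the exchanges. -/
theorem exists_transport (hv : ∀ v, ∃ w, Γ.Adj v w) {l : V → V → V → H} (hl : IsLab Γ l) :
    ∃ F : ∀ {i j : OP V}, Path.Homotopic.Quotient (cc hv i) (cc hv j) → H,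
      (∀ i j k (p : Path.Homotopic.Quotient (cc hv i) (cc hv j))
        (r : Path.Homotopic.Quotient (cc hv j) (cc hv k)), F (p.trans r) = F p * F r) ∧
      (∀ c a b (h : Cell Γ c a b), F (EE hv h) = l c a b) ∧
      ∀ i j h, F (iota hv i j h) = 1 := by
  obtain ⟨M, h1, h2, h3⟩ := cech_transport (BS Γ) isOpen_BS BS_cover (isSimplyConnected_BS hv)
    (labC Γ l) (labC_loc l) (labC_coc hl)
  have key : ∀ {x} {i j : OP V} (hi : x ∈ BS Γ i) (hj : x ∈ BS Γ j),
      M i j (tau hv hi hj) = labC Γ l i j x := by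
    intro x i j hi hj
    rw [tau, h1 i i j _ _ _ _ _ (cc_mem hv i) hi (cc_mem hv j), h3, one_mul,
      ← Path.Homotopic.Quotient.refl_trans (sp _ hj _),
      h1 i j j _ _ _ _ _ hi hj (cc_mem hv j), h2 i j x hi hj, h3, mul_one]
  refine ⟨fun {i j} p => M i j p, ?_, ?_, ?_⟩
  · intro i j k p r
    exact h1 _ _ _ _ _ _ _ _ (cc_mem hv i) (cc_mem hv j) (cc_mem hv k)
  · intro c a b h
    refine (key (mem_BS (ctr_mem hv _ _ (nb_cell h)).1)
      (mem_BS (ctr_mem hv _ _ (nb_cell h)).2)).trans ?_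
    rw [labC_pos (ctr_mem hv _ _ _).1 (ctr_mem hv _ _ _).2]
    simp [labG, labL, h.1.ne]
  · intro i j h
    refine (key (cc_mem hv i) (by rw [BS_eq h]; exact cc_mem hv i)).trans ?_
    rw [cc, labC_neg (ctr_mem hv i i _).1]
    · subst h; simp [labG, labL]
    · subst h; exact (ctr_mem hv i i _).1

/-! ### Generators and relations among the elementary arrows -/

variable (hv : ∀ v, ∃ w, Γ.Adj v w)

theorem EE_symm {c a b : V} (h : Cell Γ c a b) : EE hv h.symm = (EE hv h).symm :=
  TT_symm hv _ _ _ _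

theorem OP.mk_sw {a b : V} (h : a ≠ b) (h' : b ≠ a) : (⟨(b, a), h'⟩ : OP V) = OP.sw ⟨(a, b), h⟩ :=
  rfl

theorem TT_first {u u' v : V} (h : Cell Γ v u u') (hn) :
    TT hv ⟨(u, v), h.2.1.symm⟩ ⟨(u', v), h.2.2.symm⟩ hn =
      (iota hv _ ⟨(v, u), h.2.1⟩ (OP.mk_sw _ _)).trans ((EE hv h).trans (iota hv ⟨(v, u'), h.2.2⟩ _ (OP.mk_sw _ _))) :=
  TT_sw hv _ _ _ _ _ _ (OP.mk_sw _ _) (OP.mk_sw _ _) rfl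

/-- Moving the two tokens along disjoint edges in either order gives the same arrow. -/
theorem EE_square {a b c d : V} (h : DE Γ a b c d) (h1 : Cell Γ c a b) (h2 : Cell Γ b c d)
    (h3 : Cell Γ a c d) (h4 : Cell Γ d a b) :
    (EE hv h1).trans ((iota hv _ ⟨(b, c), h2.2.1⟩ (OP.mk_sw _ _)).trans
      ((EE hv h2).trans (iota hv ⟨(b, d), h2.2.2⟩ ⟨(d, b), h4.2.2⟩ (OP.mk_sw _ _)))) =
    (iota hv _ ⟨(a, c), h3.2.1⟩ (OP.mk_sw _ _)).trans
      ((EE hv h3).trans ((iota hv ⟨(a, d), h3.2.2⟩ ⟨(d, a), h4.2.1⟩ (OP.mk_sw _ _)).trans (EE hv h4))) := by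
  obtain ⟨e1, e2, n1, n2, n3, n4⟩ := h
  have hn : nb Γ ⟨(c, a), n1.symm⟩ ⟨(d, b), n4.symm⟩ :=
    ⟨Or.inr e2, Or.inr e1, n3.symm, n2.symm⟩
  obtain ⟨hx, hy⟩ := ctr_mem hv _ _ hn
  have hz : ctr hv _ _ hn ∈ Ut Γ ⟨(c, b), n3.symm⟩ := ⟨hx.1, hy.2⟩
  have hw : ctr hv _ _ hn ∈ Ut Γ ⟨(d, a), n2.symm⟩ := ⟨hy.1, hx.2⟩
  have t1 := TT_trans hv hx hz hy
  have t2 := TT_trans hv hx hw hy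
  rw [TT_first hv h2] at t1
  rw [TT_first hv h3] at t2
  simp only [Path.Homotopic.Quotient.trans_assoc] at t2
  exact t1.trans t2.symm

/-- Every arrow between basepoints is a product of elementary moves and exchanges. -/
theorem EE_ind (Q : ∀ i j, Path.Homotopic.Quotient (cc hv i) (cc hv j) → Prop)
    (hrefl : ∀ i, Q i i (.refl _))
    (hcomp : ∀ i j k (p : Path.Homotopic.Quotient (cc hv i) (cc hv j))
      (r : Path.Homotopic.Quotient (cc hv j) (cc hv k)), Q i j p → Q j k r → Q i k (p.trans r))
    (hE : ∀ c a b (h : Cell Γ c a b), Q _ _ (EE hv h)) (hι : ∀ i j h, Q i j (iota hv i j h)) :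
    ∀ i j p, Q i j p := by
  refine arrow_ind hv Q hcomp ?_ hι
  rintro ⟨⟨u, v⟩, h0⟩ ⟨⟨u', v'⟩, h0'⟩ hn
  obtain ⟨hx, hy⟩ := ctr_mem hv _ _ hn
  have hz : ctr hv _ _ hn ∈ Ut Γ ⟨(u, v'), hn.2.2.1⟩ := ⟨hx.1, hy.2⟩
  rw [← TT_trans hv hx hz hy]
  refine hcomp _ _ _ _ _ ?_ ?_
  · rcases hn.2.1 with h | h
    · obtain rfl : v = v' := h
      rw [TT_self]; exact hrefl _
    · exact hE u v v' ⟨h, h0, hn.2.2.1⟩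
  · rcases hn.1 with h | h
    · obtain rfl : u = u' := h
      rw [TT_self]; exact hrefl _
    · rw [TT_first hv (⟨h, hn.2.2.1.symm, h0'.symm⟩ : Cell Γ v' u u')]
      exact hcomp _ _ _ _ _ (hι _ _ _) (hcomp _ _ _ _ _ (hE _ _ _ _) (hι _ _ _))

end Lab

/-! ### Collapsing two-cells through free faces -/

section Collapse
variable {V : Type} [Fintype V] [DecidableEq V] {Γ : SimpleGraph V}

/-- A symmetric set of two-cells: ordered quadruples `(a, b, c, d)` of disjoint edges `a b`, `c d`,
closed under the symmetries of the square. -/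
structure SqSym (Γ : SimpleGraph V) (S : V → V → V → V → Prop) : Prop where
  s1 : ∀ {a b c d}, S a b c d → S b a c d
  s2 : ∀ {a b c d}, S a b c d → S c d a b
  de : ∀ {a b c d}, S a b c d → DE Γ a b c d

/-- Every nonempty symmetric set of two-cells has a free face. -/
def NoCore (Γ : SimpleGraph V) : Prop :=
  ∀ S : V → V → V → V → Prop, SqSym Γ S →
    (∀ a b c d, S a b c d → ∃ d', d' ≠ d ∧ S a b c d') → ∀ a b c d, ¬ S a b c d

/-- `K` is a set of one-cells on which labelings compatible with the two-cells of `S` can be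
prescribed freely and are determined. -/
structure IsBasis (Γ : SimpleGraph V) (S : V → V → V → V → Prop) (K : V → V → V → Prop) : Prop where
  sym : ∀ c a b, K c a b → K c b a
  ext : ∀ (H : Type) [Group H] (k : V → V → V → H), (∀ c a b, k c b a = (k c a b)⁻¹) →
    ∃ l : V → V → V → H, (∀ c a b, l c b a = (l c a b)⁻¹) ∧
      (∀ a b c d, S a b c d → l c a b * l b c d = l a c d * l d a b) ∧
      ∀ c a b, K c a b → l c a b = k c a b
  gen : ∀ Z : V → V → V → Prop, (∀ c a b, Z c a b → Z c b a) → (∀ c a b, K c a b → Z c a b) →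
    (∀ a b c d, S a b c d → Z c a b → Z b c d → Z a c d → Z d a b) → ∀ c a b, Z c a b

/-- The orbit of the square `(a, b, c, d)` under its symmetries. -/
def Orb (a b c d x y z w : V) : Prop :=
  (((x = a ∧ y = b) ∨ (x = b ∧ y = a)) ∧ ((z = c ∧ w = d) ∨ (z = d ∧ w = c))) ∨
    (((x = c ∧ y = d) ∨ (x = d ∧ y = c)) ∧ ((z = a ∧ w = b) ∨ (z = b ∧ w = a)))

theorem Orb.s1 {a b c d x y z w : V} (h : Orb a b c d x y z w) : Orb a b c d y x z w :=
  h.imp (fun h => ⟨h.1.symm.imp And.symm And.symm, h.2⟩)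
    (fun h => ⟨h.1.symm.imp And.symm And.symm, h.2⟩)

theorem Orb.s2 {a b c d x y z w : V} (h : Orb a b c d x y z w) : Orb a b c d z w x y :=
  h.symm.imp And.symm And.symm

/-- Induction on the number of two-cells: a two-cell with a free face is removed, and that face
leaves the basis, its label being determined by the labels of the other three sides. -/
theorem exists_basis (hN : NoCore Γ) : ∀ (n : ℕ) (S : V → V → V → V → Prop), SqSym Γ S →
    (Finset.univ.filter (fun q : V × V × V × V => S q.1 q.2.1 q.2.2.1 q.2.2.2)).card = n →
    ∃ K : V → V → V → Prop, IsBasis Γ S K := by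
  intro n
  induction n using Nat.strong_induction_on with
  | _ n ih =>
  intro S hS hn
  by_cases hemp : ∀ a b c d, ¬ S a b c d
  · refine ⟨fun _ _ _ => True, ⟨fun _ _ _ _ => trivial, fun H _ k hk => ⟨k, hk, ?_, fun _ _ _ _ => rfl⟩, ?_⟩⟩
    · exact fun a b c d h => (hemp a b c d h).elim
    · exact fun Z _ h _ c a b => h c a b trivial
  have hfree : ∃ a b c d, S a b c d ∧ ∀ d', S a b c d' → d' = d := by
    by_contra hcon
    push Not at hcon
    refine hemp (hN S hS fun a b c d h => ?_)
    obtain ⟨d', h1, h2⟩ := hcon a b c d h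
    exact ⟨d', h2, h1⟩
  obtain ⟨a, b, c, d, hq, hfr⟩ := hfree
  have hde := hS.de hq
  obtain ⟨e1, e2, n1, n2, n3, n4⟩ := hde
  have e1 := e1.ne
  have e2 := e2.ne
  let O : V → V → V → V → Prop := Orb a b c d
  have hS' : SqSym Γ (fun x y z w => S x y z w ∧ ¬ O x y z w) := by
    exact ⟨fun h => ⟨hS.s1 h.1, fun h' => h.2 h'.s1⟩, fun h => ⟨hS.s2 h.1, fun h' => h.2 h'.s2⟩,
      fun h => hS.de h.1⟩
  have s3 : ∀ {x y z w}, S x y z w → S x y w z := fun h => hS.s2 (hS.s1 (hS.s2 h))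
  obtain ⟨K', hK'⟩ := ih _ (by
    rw [← hn]
    apply Finset.card_lt_card
    refine ⟨fun q hq' => ?_, fun hsub => ?_⟩
    · simp only [Finset.mem_filter, Finset.mem_univ, true_and] at hq' ⊢; exact hq'.1
    · have := hsub (x := (a, b, c, d)) (by simpa using hq)
      simp only [Finset.mem_filter, Finset.mem_univ, true_and] at this
      exact this.2 (Or.inl ⟨Or.inl ⟨rfl, rfl⟩, Or.inl ⟨rfl, rfl⟩⟩)) _ hS' rfl
  -- squares of the smaller set do not touch the free face `(c; a b)`
  have hav : ∀ x y z w, S x y z w ∧ ¬ O x y z w →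
      ¬ (z = c ∧ ((x = a ∧ y = b) ∨ (x = b ∧ y = a))) := by
    rintro x y z w ⟨h1, h2⟩ ⟨rfl, h | h⟩
    · obtain ⟨rfl, rfl⟩ := h
      exact h2 (Or.inl ⟨Or.inl ⟨rfl, rfl⟩, Or.inl ⟨rfl, hfr _ h1⟩⟩)
    · obtain ⟨rfl, rfl⟩ := h
      exact h2 (Or.inl ⟨Or.inr ⟨rfl, rfl⟩, Or.inl ⟨rfl, hfr _ (hS.s1 h1)⟩⟩)
  let ε : V → V → V → Prop := fun z x y => z = c ∧ ((x = a ∧ y = b) ∨ (x = b ∧ y = a))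
  have hε : ∀ z x y, ε z x y ↔ z = c ∧ ((x = a ∧ y = b) ∨ (x = b ∧ y = a)) := fun _ _ _ => Iff.rfl
  have hav' : ∀ x y z w, S x y z w ∧ ¬ O x y z w → ¬ ε z x y ∧ ¬ ε w x y ∧ ¬ ε x z w ∧ ¬ ε y z w := by
    intro x y z w h
    exact ⟨hav x y z w h, hav x y w z (hS'.s2 (hS'.s1 (hS'.s2 h))), hav z w x y (hS'.s2 h),
      hav z w y x (hS'.s2 (hS'.s1 h))⟩
  refine ⟨fun z x y => K' z x y ∧ ¬ ε z x y, ⟨fun z x y h => ⟨hK'.sym _ _ _ h.1, fun h' => h.2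
    ⟨h'.1, h'.2.symm.imp And.symm And.symm⟩⟩, ?_, ?_⟩⟩
  · intro H _ k hk
    obtain ⟨l, l1, l2, l3⟩ := hK'.ext H k hk
    have hεab : ∀ z x y, ε z x y → ε z y x := fun z x y h => ⟨h.1, h.2.symm.imp And.symm And.symm⟩
    let t : H := l a c d * l d a b * (l b c d)⁻¹
    let l' : V → V → V → H := fun z x y =>
      if z = c ∧ x = a ∧ y = b then t else if z = c ∧ x = b ∧ y = a then t⁻¹ else l z x y
    have l'n : ∀ z x y, ¬ ε z x y → l' z x y = l z x y := by
      intro z x y h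
      simp only [l']
      rw [if_neg fun h' => h ⟨h'.1, Or.inl h'.2⟩, if_neg fun h' => h ⟨h'.1, Or.inr h'.2⟩]
    have l'i : ∀ z x y, l' z y x = (l' z x y)⁻¹ := by
      intro z x y
      by_cases h1 : z = c ∧ x = a ∧ y = b
      · obtain ⟨rfl, rfl, rfl⟩ := h1
        simp [l', e1, e1.symm]
      by_cases h2 : z = c ∧ x = b ∧ y = a
      · obtain ⟨rfl, rfl, rfl⟩ := h2
        simp [l', e1, e1.symm]
      rw [l'n z x y (fun h => by simp only [ε] at h; grind), l'n z y x (fun h => by simp only [ε] at h; grind), l1]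
    refine ⟨l', l'i, ?_, fun z x y h => by rw [l'n z x y h.2, l3 z x y h.1]⟩
    have base : l' c a b * l' b c d = l' a c d * l' d a b := by
      rw [l'n b c d (fun h => by simp only [ε] at h; grind), l'n a c d (fun h => by simp only [ε] at h; grind),
        l'n d a b (fun h => by simp only [ε] at h; grind)]
      simp [l', t]
    have flip1 : ∀ x y z w, l' z x y * l' y z w = l' x z w * l' w x y →
        l' z y x * l' x z w = l' y z w * l' w y x := by
      intro x y z w h
      rw [l'i z x y, l'i w x y, inv_mul_eq_iff_eq_mul, ← mul_assoc, h]
      simp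
    intro x y z w h
    by_cases hx : O x y z w
    · have b2 := flip1 _ _ _ _ base
      have b3 := base.symm
      have b4 := b2.symm
      have b5 := flip1 _ _ _ _ b3
      have b6 := flip1 _ _ _ _ b4
      rcases hx with ⟨⟨rfl, rfl⟩ | ⟨rfl, rfl⟩, ⟨rfl, rfl⟩ | ⟨rfl, rfl⟩⟩ |
        ⟨⟨rfl, rfl⟩ | ⟨rfl, rfl⟩, ⟨rfl, rfl⟩ | ⟨rfl, rfl⟩⟩
      · exact base
      · exact b5.symm
      · exact b2
      · exact b6.symm
      · exact b3
      · exact b4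
      · exact b5
      · exact b6
    · obtain ⟨g1, g2, g3, g4⟩ := hav' x y z w ⟨h, hx⟩
      rw [l'n _ _ _ g1, l'n _ _ _ g2, l'n _ _ _ g3, l'n _ _ _ g4]
      exact l2 x y z w ⟨h, hx⟩
  · intro Z z1 z2 z3
    have hall := hK'.gen (fun z x y => Z z x y ∨ ε z x y) (fun z x y h => h.imp (z1 z x y)
      fun h => ⟨h.1, h.2.symm.imp And.symm And.symm⟩) (fun z x y h => by
        by_cases hx : ε z x y
        · exact Or.inr hx
        · exact Or.inl (z2 z x y ⟨h, hx⟩)) (by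
        intro x y z w h
        obtain ⟨g1, g2, g3, g4⟩ := hav' x y z w h
        intro h1 h2 h3
        exact Or.inl (z3 x y z w h.1 (h1.resolve_right g1) (h2.resolve_right g4)
          (h3.resolve_right g3)))
    have hc : Z c a b := by
      refine z3 a b d c (s3 hq) ?_ ?_ ?_
      · exact (hall d a b).resolve_right (fun h => by rw [hε] at h; grind)
      · exact (hall b d c).resolve_right (fun h => by rw [hε] at h; grind)
      · exact (hall a d c).resolve_right (fun h => by rw [hε] at h; grind)
    intro z x y
    rcases hall z x y with h | h
    · exact h
    · obtain ⟨rfl, ⟨rfl, rfl⟩ | ⟨rfl, rfl⟩⟩ := h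
      · exact hc
      · exact z1 _ _ _ hc

end Collapse

/-! ### Connectedness -/

section Conn
open CategoryTheory
variable {V : Type} [Fintype V] [DecidableEq V] {Γ : SimpleGraph V} (hv : ∀ v, ∃ w, Γ.Adj v w)

/-- Two basepoints are joined by an arrow. -/
def RR (u v u' v' : V) : Prop := ∃ (h : u ≠ v) (h' : u' ≠ v'),
  Nonempty (Path.Homotopic.Quotient (cc hv ⟨(u, v), h⟩) (cc hv ⟨(u', v'), h'⟩))

theorem RR.trans {u v u' v' u'' v'' : V} (h1 : RR hv u v u' v') (h2 : RR hv u' v' u'' v'') :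
    RR hv u v u'' v'' := by
  obtain ⟨a, b, ⟨p⟩⟩ := h1
  obtain ⟨c, d, ⟨q⟩⟩ := h2
  exact ⟨a, d, ⟨p.trans q⟩⟩

theorem RR.symm {u v u' v' : V} (h1 : RR hv u v u' v') : RR hv u' v' u v := by
  obtain ⟨a, b, ⟨p⟩⟩ := h1
  exact ⟨b, a, ⟨p.symm⟩⟩

theorem RR_refl {u v : V} (h : u ≠ v) : RR hv u v u v := ⟨h, h, ⟨.refl _⟩⟩

theorem RR_sw {u v : V} (h : u ≠ v) : RR hv u v v u := ⟨h, h.symm, ⟨iota hv _ _ rfl⟩⟩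

theorem RR_snd {c a b : V} (h : Cell Γ c a b) : RR hv c a c b := ⟨_, _, ⟨EE hv h⟩⟩

theorem RR_fst {c a b : V} (h : Cell Γ c a b) : RR hv a c b c :=
  ((RR_sw hv h.2.1.symm).trans hv (RR_snd hv h)).trans hv (RR_sw hv h.2.2)

/-- One token reaches the end of a given walk: whenever the next vertex is occupied, the token
sitting there continues the walk instead. -/
theorem RR_walk {u w : V} (p : Γ.Walk u w) : ∀ v, u ≠ v → ∃ v', RR hv u v w v' := by
  induction p with
  | nil => exact fun v h => ⟨v, RR_refl hv h⟩
  | @cons u x w h p ih =>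
    intro v hne
    by_cases hx : v = x
    · subst hx
      obtain ⟨v', h'⟩ := ih u hne.symm
      exact ⟨v', (RR_sw hv hne).trans hv h'⟩
    · obtain ⟨v', h'⟩ := ih v (Ne.symm hx)
      exact ⟨v', (RR_fst hv ⟨h, hne.symm, hx⟩).trans hv h'⟩

/-- The occupied positions change from `r, v` to `r, w` along a walk from `v` to `w`. When the walk
runs into `r`, the token there goes on and the one behind it, at a neighbour `x` of `r`, takes its
place; the second statement covers the walks starting at `r`. -/
theorem RR_around {r v w : V} (p : Γ.Walk v w) (hw : r ≠ w) :
    (r ≠ v → RR hv r v r w) ∧ (v = r → ∀ x, Γ.Adj x r → RR hv r x r w) := by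
  induction p with
  | nil => exact ⟨fun h => RR_refl hv h, fun h => (hw h.symm).elim⟩
  | @cons v y w h p ih =>
    obtain ⟨ih1, ih2⟩ := ih hw
    constructor
    · intro hr
      by_cases hy : r = y
      · subst hy
        exact ih2 rfl v h
      · exact (RR_snd hv ⟨h, hr, hy⟩).trans hv (ih1 hy)
    · rintro rfl x hx
      refine RR.trans hv ?_ (ih1 h.ne)
      by_cases hxy : x = y
      · subst hxy; exact RR_refl hv h.ne
      · -- the tokens at `v`, `x` are moved to `y`, `x` and then to `y`, `v`
        exact ((RR_fst hv ⟨h, hx.ne, hxy⟩).trans hv (RR_snd hv ⟨hx, Ne.symm hxy, h.ne.symm⟩)).trans hv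
          (RR_sw hv h.ne.symm)

theorem RR_all (hc : Γ.Connected) {u v u' v' : V} (h : u ≠ v) (h' : u' ≠ v') : RR hv u v u' v' := by
  obtain ⟨p⟩ := hc.preconnected u u'
  obtain ⟨w, hw⟩ := RR_walk hv p v h
  obtain ⟨q⟩ := hc.preconnected w v'
  refine hw.trans hv ((RR_around hv q h').1 ?_)
  exact hw.2.1

theorem nonempty_arrow (hc : Γ.Connected) (i j : OP V) :
    Nonempty (Path.Homotopic.Quotient (cc hv i) (cc hv j)) := by
  obtain ⟨_, _, h⟩ := RR_all hv hc i.2 j.2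
  exact h

theorem joined_cc (x : UConf 2 (realization Γ)) : ∃ i, Nonempty (Path.Homotopic.Quotient x (cc hv i)) := by
  obtain ⟨i, hi⟩ : ∃ i, x ∈ BS Γ i := by
    have := BS_cover (Γ := Γ) x
    exact this
  exact ⟨i, ⟨sp (isSimplyConnected_BS hv i) hi (cc_mem hv i)⟩⟩

/-! ### The groupoid of arrows between basepoints -/

/-- The full subgroupoid of the fundamental groupoid on the basepoints, indexed by ordered pairs. -/
structure BGd (hv : ∀ v, ∃ w, Γ.Adj v w) where
  /-- the underlying pair -/
  idx : OP V

instance : Groupoid (BGd hv) where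
  Hom i j := Path.Homotopic.Quotient (cc hv i.idx) (cc hv j.idx)
  id i := .refl _
  comp p q := p.trans q
  inv p := p.symm
  id_comp p := Path.Homotopic.Quotient.refl_trans p
  comp_id p := Path.Homotopic.Quotient.trans_refl p
  assoc p q r := Path.Homotopic.Quotient.trans_assoc p q r
  inv_comp p := Path.Homotopic.Quotient.symm_trans p
  comp_inv p := Path.Homotopic.Quotient.trans_symm p

theorem BGd_connected (hc : Γ.Connected) (i : OP V) : IsConnected (BGd hv) := by
  haveI : Nonempty (BGd hv) := ⟨⟨i⟩⟩
  haveI : IsPreconnected (BGd hv) := zigzag_isPreconnected fun a b => by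
    obtain ⟨p⟩ := nonempty_arrow hv hc a.idx b.idx
    exact Zigzag.of_hom (show a ⟶ b from p)
  exact {}

/-- Freeness passes from the connected groupoid on the vertex configurations to its vertex groups,
which are the fundamental groups at all basepoints up to isomorphism. -/
theorem free_of_groupoid (hc : Γ.Connected) [IsFreeGroupoid (BGd hv)]
    (x : UConf 2 (realization Γ)) : IsFreeGroupType (FundamentalGroup (UConf 2 (realization Γ)) x) := by
  obtain ⟨i, ⟨p⟩⟩ := joined_cc hv x
  haveI := BGd_connected hv hc i
  have hfree : IsFreeGroup (End (⟨i⟩ : BGd hv)) := inferInstance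
  obtain ⟨p, -⟩ := Path.Homotopic.Quotient.mk_surjective p
  let e1 : FundamentalGroup (UConf 2 (realization Γ)) x ≃* FundamentalGroup _ (cc hv i) :=
    FundamentalGroup.fundamentalGroupMulEquivOfPath p
  let e2 : FundamentalGroup (UConf 2 (realization Γ)) (cc hv i) ≃* End (⟨i⟩ : BGd hv) :=
    { toFun := fun q => q
      invFun := fun q => q
      left_inv := fun _ => rfl
      right_inv := fun _ => rfl
      map_mul' := fun _ _ => rfl }
  exact ⟨_, ⟨(e1.trans e2).trans (IsFreeGroup.toFreeGroup _)⟩⟩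
end Conn

/-! ### Freeness of the groupoid from a basis of one-cells -/

section Free
open CategoryTheory
variable {V : Type} [Fintype V] [DecidableEq V] {Γ : SimpleGraph V} (hv : ∀ v, ∃ w, Γ.Adj v w)

/-- An injective numbering of the vertices, used to orient cells and pairs. -/
def num (v : V) : ℕ := Fintype.equivFin V v

theorem num_inj {u v : V} (h : num u = num v) : u = v :=
  (Fintype.equivFin V).injective (Fin.ext h)

/-- Generating arrows moving the second token along a basis cell. -/
structure KGen (Γ : SimpleGraph V) (K : V → V → V → Prop) (i j : OP V) : Prop where
  fst : i.1.1 = j.1.1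
  adj : Γ.Adj i.1.2 j.1.2
  mem : K i.1.1 i.1.2 j.1.2
  lt : num i.1.2 < num j.1.2

/-- Generating exchange arrows. -/
structure IGen (i j : OP V) : Prop where
  eq : j = i.sw
  lt : num i.1.1 < num i.1.2

theorem KGen.nb {K : V → V → V → Prop} {i j : OP V} (h : KGen Γ K i j) : nb Γ i j := by
  refine ⟨Or.inl h.fst, Or.inr h.adj, ?_, ?_⟩
  · rw [h.fst]; exact j.2
  · rw [← h.fst]; exact i.2

theorem not_KGen_IGen {K : V → V → V → Prop} {i j : OP V} (h : KGen Γ K i j) (h' : IGen i j) :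
    False := by
  have h1 := h.fst
  rw [h'.eq] at h1
  exact i.2 h1

/-- The generating quiver. -/
abbrev GenT (Γ : SimpleGraph V) (K : V → V → V → Prop) (i j : OP V) : Type :=
  PLift (KGen Γ K i j ∨ IGen i j)

/-- The arrow of a generator. -/
def genOf {K : V → V → V → Prop} {i j : OP V} (g : GenT Γ K i j) :
    Path.Homotopic.Quotient (cc hv i) (cc hv j) :=
  if h : KGen Γ K i j then TT hv i j h.nb else iota hv i j (g.down.resolve_left h).eq

theorem genOf_K {K : V → V → V → Prop} {c a b : V} (h : Cell Γ c a b) (hK : K c a b)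
    (hlt : num a < num b) (g : GenT Γ K ⟨(c, a), h.2.1⟩ ⟨(c, b), h.2.2⟩) :
    genOf hv g = EE hv h := by
  have h' : KGen Γ K ⟨(c, a), h.2.1⟩ ⟨(c, b), h.2.2⟩ := ⟨rfl, h.1, hK, hlt⟩
  rw [genOf, dif_pos h']; rfl

theorem genOf_I {K : V → V → V → Prop} {i j : OP V} (h : IGen i j) (g : GenT Γ K i j) :
    genOf hv g = iota hv i j h.eq := by
  rw [genOf, dif_neg fun h' => not_KGen_IGen h' h]

/-- Existence of the functor with prescribed values on generators. -/
theorem exists_functor {K : V → V → V → Prop} (hK : IsBasis Γ (DE Γ) K) (H : Type) [Group H]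
    (f : ∀ i j, GenT Γ K i j → H) :
    ∃ F : ∀ {i j : OP V}, Path.Homotopic.Quotient (cc hv i) (cc hv j) → H,
      (∀ i j k (p : Path.Homotopic.Quotient (cc hv i) (cc hv j))
        (r : Path.Homotopic.Quotient (cc hv j) (cc hv k)), F (p.trans r) = F p * F r) ∧
      ∀ i j g, F (genOf hv g) = f i j g := by
  -- the twist absorbing the labels of the exchanges
  let t : V → V → H := fun u v =>
    if h : u ≠ v ∧ num v < num u then f ⟨(v, u), h.1.symm⟩ ⟨(u, v), h.1⟩ ⟨Or.inr ⟨rfl, h.2⟩⟩ else 1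
  let k₀ : V → V → V → H := fun c a b =>
    if h : Cell Γ c a b ∧ K c a b ∧ num a < num b then
      t c a * f ⟨(c, a), h.1.2.1⟩ ⟨(c, b), h.1.2.2⟩ ⟨Or.inl ⟨rfl, h.1.1, h.2.1, h.2.2⟩⟩ * (t c b)⁻¹
    else 1
  let k : V → V → V → H := fun c a b => if num a < num b then k₀ c a b else (k₀ c b a)⁻¹
  have hk : ∀ c a b, k c b a = (k c a b)⁻¹ := by
    intro c a b
    simp only [k]
    rcases lt_trichotomy (num a) (num b) with h | h | h
    · rw [if_pos h, if_neg h.not_gt]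
    · have : k₀ c a b = 1 := dif_neg fun h' => h'.2.2.ne h
      have : k₀ c b a = 1 := dif_neg fun h' => h'.2.2.ne h.symm
      simp [h, *]
    · rw [if_pos h, if_neg h.not_gt, inv_inv]
  obtain ⟨l, l1, l2, l3⟩ := hK.ext H k hk
  obtain ⟨M, m1, m2, m3⟩ := exists_transport hv (l := l) ⟨fun c a b _ => l1 c a b, l2⟩
  refine ⟨fun {i j} p => (t i.1.1 i.1.2)⁻¹ * M p * t j.1.1 j.1.2, ?_, ?_⟩
  · intro i j k p r
    simp only [m1]
    group
  · intro i j g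
    rcases g with ⟨hg | hg⟩
    · obtain ⟨⟨c, a⟩, hca⟩ := i
      obtain ⟨⟨c', b⟩, hcb⟩ := j
      obtain ⟨h1, h2, h3, h4⟩ := hg
      obtain rfl : c = c' := h1
      have hcell : Cell Γ c a b := ⟨h2, hca, hcb⟩
      change _ * M (genOf hv _) * _ = _
      rw [genOf_K hv hcell h3 h4, m2, l3 c a b h3]
      have : k c a b = t c a * f ⟨(c, a), hca⟩ ⟨(c, b), hcb⟩ ⟨Or.inl ⟨rfl, h2, h3, h4⟩⟩ * (t c b)⁻¹ := by
        have h5 : num a < num b := h4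
        simp only [k]
        rw [if_pos h5]
        exact dif_pos ⟨hcell, h3, h4⟩
      rw [this]
      group
    · obtain ⟨⟨u, v⟩, huv⟩ := i
      obtain ⟨h1, h2⟩ := hg
      subst h1
      change _ * M (genOf hv _) * _ = _
      rw [genOf_I hv ⟨rfl, h2⟩, m3]
      have t1 : t u v = 1 := dif_neg fun h => lt_asymm h.2 h2
      have t2 : t v u = f ⟨(u, v), huv⟩ ⟨(v, u), huv.symm⟩ ⟨Or.inr ⟨rfl, h2⟩⟩ := dif_pos ⟨huv.symm, h2⟩
      change (t u v)⁻¹ * 1 * t v u = _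
      rw [t1, t2]
      simp
      rfl

/-- Uniqueness of a functor with given values on generators. -/
theorem functor_unique {K : V → V → V → Prop} (hK : IsBasis Γ (DE Γ) K) (H : Type) [Group H]
    (F G : ∀ i j : OP V, Path.Homotopic.Quotient (cc hv i) (cc hv j) → H)
    (hF : ∀ i j k (p : Path.Homotopic.Quotient (cc hv i) (cc hv j))
        (r : Path.Homotopic.Quotient (cc hv j) (cc hv k)), F _ _ (p.trans r) = F _ _ p * F _ _ r)
    (hG : ∀ i j k (p : Path.Homotopic.Quotient (cc hv i) (cc hv j))
        (r : Path.Homotopic.Quotient (cc hv j) (cc hv k)), G _ _ (p.trans r) = G _ _ p * G _ _ r)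
    (h : ∀ i j (g : GenT Γ K i j), F _ _ (genOf hv g) = G _ _ (genOf hv g)) :
    ∀ i j p, F i j p = G i j p := by
  have F1 : ∀ i, F i i (.refl _) = 1 := fun i => by
    have := hF i i i (.refl _) (.refl _)
    rw [Path.Homotopic.Quotient.refl_trans] at this
    exact left_eq_mul.1 this
  have G1 : ∀ i, G i i (.refl _) = 1 := fun i => by
    have := hG i i i (.refl _) (.refl _)
    rw [Path.Homotopic.Quotient.refl_trans] at this
    exact left_eq_mul.1 this
  have Fi : ∀ i j p, F j i p.symm = (F i j p)⁻¹ := fun i j p => by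
    rw [eq_inv_iff_mul_eq_one, ← hF, Path.Homotopic.Quotient.symm_trans, F1]
  have Gi : ∀ i j p, G j i p.symm = (G i j p)⁻¹ := fun i j p => by
    rw [eq_inv_iff_mul_eq_one, ← hG, Path.Homotopic.Quotient.symm_trans, G1]
  have hι : ∀ i j hij, F i j (iota hv i j hij) = G i j (iota hv i j hij) := by
    intro i j hij
    have hji : i = j.sw := by rw [hij]; rfl
    rcases lt_trichotomy (num i.1.1) (num i.1.2) with hlt | hlt | hlt
    · have := h i j ⟨Or.inr ⟨hij, hlt⟩⟩
      rwa [genOf_I hv ⟨hij, hlt⟩] at this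
    · exact (i.2 (num_inj hlt)).elim
    · have hlt' : num j.1.1 < num j.1.2 := by rw [hij]; exact hlt
      have := h j i ⟨Or.inr ⟨hji, hlt'⟩⟩
      rw [genOf_I hv ⟨hji, hlt'⟩] at this
      have e := iota_iota hv i j hij hji
      have e1 := hF _ _ _ (iota hv i j hij) (iota hv j i hji)
      have e2 := hG _ _ _ (iota hv i j hij) (iota hv j i hji)
      rw [e, F1] at e1
      rw [e, G1] at e2
      rw [eq_inv_of_mul_eq_one_left e1.symm, eq_inv_of_mul_eq_one_left e2.symm, this]
  have hE := hK.gen (fun c a b => ∀ hc : Cell Γ c a b, F _ _ (EE hv hc) = G _ _ (EE hv hc)) (by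
      intro c a b h1 hc
      have := h1 hc.symm
      rw [EE_symm hv hc.symm, Fi, Gi, this]) (by
      intro c a b h1 hc
      rcases lt_trichotomy (num a) (num b) with hlt | hlt | hlt
      · have := h ⟨(c, a), hc.2.1⟩ ⟨(c, b), hc.2.2⟩ ⟨Or.inl ⟨rfl, hc.1, h1, hlt⟩⟩
        rwa [genOf_K hv hc h1 hlt] at this
      · exact (hc.1.ne (num_inj hlt)).elim
      · have := h ⟨(c, b), hc.2.2⟩ ⟨(c, a), hc.2.1⟩ ⟨Or.inl ⟨rfl, hc.symm.1, hK.sym _ _ _ h1, hlt⟩⟩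
        rw [genOf_K hv hc.symm (hK.sym _ _ _ h1) hlt, EE_symm hv hc, Fi, Gi] at this
        exact inv_injective this) (by
      intro a b c d hS h1 h2 h3 hc
      obtain ⟨e1, e2, n1, n2, n3, n4⟩ := hS
      have c1 : Cell Γ c a b := ⟨e1, n1.symm, n3.symm⟩
      have c2 : Cell Γ b c d := ⟨e2, n3, n4⟩
      have c3 : Cell Γ a c d := ⟨e2, n1, n2⟩
      have sqq := EE_square hv ⟨e1, e2, n1, n2, n3, n4⟩ c1 c2 c3 hc
      have s1 := congrArg (F _ _) sqq
      have s2 := congrArg (G _ _) sqq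
      simp only [hF, hι] at s1
      simp only [hG] at s2
      rw [h1 c1, h2 c2, h3 c3, s2] at s1
      simpa using s1.symm)
  refine EE_ind hv (fun i j p => F i j p = G i j p) (fun i => by rw [F1, G1]) ?_ ?_ hι
  · intro i j k p r h1 h2
    rw [hF, hG, h1, h2]
  · exact fun c a b hc => hE c a b hc

/-- The groupoid of arrows between basepoints is free on a basis of cells and the exchanges. -/
@[reducible]
def freeGroupoid {K : V → V → V → Prop} (hK : IsBasis Γ (DE Γ) K) : IsFreeGroupoid (BGd hv) where
  quiverGenerators := ⟨fun i j : BGd hv => GenT Γ K i.idx j.idx⟩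
  of := fun {i j} g => genOf hv (i := BGd.idx i) (j := BGd.idx j) g
  unique_lift := by
    intro X _ f
    obtain ⟨F, hF, hF'⟩ := exists_functor hv hK Xᵐᵒᵖ
      (fun i j g => MulOpposite.op (@f (⟨i⟩ : BGd hv) (⟨j⟩ : BGd hv) g))
    have F1 : ∀ i : OP V, F (Path.Homotopic.Quotient.refl (cc hv i)) = 1 := fun i => by
      have := hF i i i (.refl _) (.refl _)
      rw [Path.Homotopic.Quotient.refl_trans] at this
      exact left_eq_mul.1 this
    let Φ : BGd hv ⥤ SingleObj X :=
      { obj := fun _ => SingleObj.star X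
        map := fun {i j} p => (show X from (F (i := i.idx) (j := j.idx) p).unop)
        map_id := fun i => congrArg MulOpposite.unop (F1 i.idx)
        map_comp := fun p q => congrArg MulOpposite.unop (hF _ _ _ p q) }
    refine ⟨Φ, ?_, ?_⟩
    · intro a b g
      exact congrArg MulOpposite.unop (hF' (BGd.idx a) (BGd.idx b) g)
    · intro Ψ hΨ
      have key := functor_unique hv hK Xᵐᵒᵖ (fun i j p => F p)
        (fun i j p => MulOpposite.op (show X from Ψ.map (X := ⟨i⟩) (Y := ⟨j⟩) p)) hF
        (fun i j k p r => congrArg MulOpposite.op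
          (Ψ.map_comp (X := ⟨i⟩) (Y := ⟨j⟩) (Z := ⟨k⟩) p r))
        (fun i j g => (hF' i j g).trans (congrArg MulOpposite.op (hΨ (⟨i⟩ : BGd hv) (⟨j⟩ : BGd hv) g).symm))
      refine CategoryTheory.Functor.ext (fun _ => rfl) ?_
      intro i j p
      have := congrArg MulOpposite.unop (key i.idx j.idx p)
      simp only [eqToHom_refl, Category.id_comp, Category.comp_id]
      exact this.symm

/-- If every set of two-cells collapses, the braid group is free. -/
theorem free_of_noCore (hv : ∀ v, ∃ w, Γ.Adj v w) (hN : NoCore Γ) (hc : Γ.Connected)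
    (x : UConf 2 (realization Γ)) : IsFreeGroupType (FundamentalGroup (UConf 2 (realization Γ)) x) := by
  obtain ⟨K, hK⟩ := exists_basis hN _ (DE Γ)
    ⟨fun h => ⟨h.1.symm, h.2.1, h.2.2.2.2.1, h.2.2.2.2.2, h.2.2.1, h.2.2.2.1⟩,
     fun h => ⟨h.2.1, h.1, h.2.2.1.symm, h.2.2.2.2.1.symm, h.2.2.2.1.symm, h.2.2.2.2.2.symm⟩,
     fun h => h⟩ rfl
  letI := freeGroupoid hv hK
  exact free_of_groupoid hv hc x

end Free

/-! ### Lifting labelings when the braid group is free -/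

section LiftLab
open CategoryTheory
variable {V : Type} [Fintype V] [DecidableEq V] {Γ : SimpleGraph V}

/-- Free groups are projective. -/
theorem exists_lift_hom {G Q R : Type} [Group G] [Group Q] [Group R] (hG : IsFreeGroupType G)
    (q : Q →* R) (hq : Function.Surjective q) (φ : G →* R) : ∃ ψ : G →* Q, ∀ g, q (ψ g) = φ g := by
  obtain ⟨S, ⟨e⟩⟩ := hG
  choose s hs using hq
  let ψ₀ : FreeGroup S →* Q := FreeGroup.lift fun x => s (φ (e.symm (FreeGroup.of x)))
  have h : q.comp ψ₀ = φ.comp e.symm.toMonoidHom := by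
    apply FreeGroup.ext_hom
    intro x
    simp [ψ₀, hs]
  refine ⟨ψ₀.comp e.toMonoidHom, fun g => ?_⟩
  have := DFunLike.congr_fun h (e g)
  simpa using this

/-- If the braid group is free, a compatible labeling lifts along any surjection of groups. -/
theorem lift_labels (hv : ∀ v, ∃ w, Γ.Adj v w) (hc : Γ.Connected) (x : UConf 2 (realization Γ))
    (hfree : IsFreeGroupType (FundamentalGroup (UConf 2 (realization Γ)) x)) {Q R : Type} [Group Q]
    [Group R] (q : Q →* R) (hq : Function.Surjective q) {l₀ : V → V → V → R} (hl₀ : IsLab Γ l₀) :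
    ∃ l : V → V → V → Q, IsLab Γ l ∧ ∀ c a b, Cell Γ c a b → q (l c a b) = l₀ c a b := by
  obtain ⟨i₀, ⟨p₀⟩⟩ := joined_cc hv x
  obtain ⟨p₀, -⟩ := Path.Homotopic.Quotient.mk_surjective p₀
  have hfree' : IsFreeGroupType (FundamentalGroup (UConf 2 (realization Γ)) (cc hv i₀)) := by
    obtain ⟨S, ⟨e⟩⟩ := hfree
    exact ⟨S, ⟨(FundamentalGroup.fundamentalGroupMulEquivOfPath p₀).symm.trans e⟩⟩
  obtain ⟨P, hP, hPE, hPι⟩ := exists_transport hv hl₀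
  let φ : FundamentalGroup (UConf 2 (realization Γ)) (cc hv i₀) →* R :=
    MonoidHom.mk' (fun p => (P (i := i₀) (j := i₀) p)⁻¹) (fun p r => by
      have := hP i₀ i₀ i₀ r p
      refine (congrArg Inv.inv this).trans ?_
      rw [mul_inv_rev])
  obtain ⟨ψ, hψ⟩ := exists_lift_hom hfree' q hq φ
  have ht : ∀ i, Nonempty (Path.Homotopic.Quotient (cc hv i₀) (cc hv i)) :=
    nonempty_arrow hv hc i₀
  let t := fun i => (ht i).some
  choose s hs using fun i => hq (P (t i))
  have P1 : ∀ i : OP V, P (Path.Homotopic.Quotient.refl (cc hv i)) = 1 := fun i => by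
    have := hP i i i (.refl _) (.refl _)
    rw [Path.Homotopic.Quotient.refl_trans] at this
    exact left_eq_mul.1 this
  have Pi : ∀ i j (p : Path.Homotopic.Quotient (cc hv i) (cc hv j)), P p.symm = (P p)⁻¹ :=
    fun i j p => by rw [eq_inv_iff_mul_eq_one, ← hP, Path.Homotopic.Quotient.symm_trans, P1]
  let F : ∀ i j : OP V, Path.Homotopic.Quotient (cc hv i) (cc hv j) → Q := fun i j p =>
    (s i)⁻¹ * (ψ ((t i).trans (p.trans (t j).symm)))⁻¹ * s j
  have hFq : ∀ i j p, q (F i j p) = P p := by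
    intro i j p
    have h1 : q (ψ ((t i).trans (p.trans (t j).symm))) = (P ((t i).trans (p.trans (t j).symm)))⁻¹ :=
      hψ _
    simp only [F, map_mul, map_inv, h1, hs, hP, Pi]
    group
  have hF : ∀ i j k (p : Path.Homotopic.Quotient (cc hv i) (cc hv j))
      (r : Path.Homotopic.Quotient (cc hv j) (cc hv k)), F i k (p.trans r) = F i j p * F j k r := by
    intro i j k p r
    have h1 : (t i).trans ((p.trans r).trans (t k).symm) =
        ((t i).trans (p.trans (t j).symm)).trans ((t j).trans (r.trans (t k).symm)) := by
      simp only [Path.Homotopic.Quotient.trans_assoc]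
      rw [symm_trans_cancel]
    have h2 : ψ ((t i).trans ((p.trans r).trans (t k).symm)) =
        ψ ((t j).trans (r.trans (t k).symm)) * ψ ((t i).trans (p.trans (t j).symm)) := by
      rw [h1]
      exact MonoidHom.map_mul ψ ((t j).trans (r.trans (t k).symm)) ((t i).trans (p.trans (t j).symm))
    simp only [F]
    rw [h2]
    group
  have F1 : ∀ i, F i i (.refl _) = 1 := fun i => by
    have := hF i i i (.refl _) (.refl _)
    rw [Path.Homotopic.Quotient.refl_trans] at this
    exact left_eq_mul.1 this
  have Fi : ∀ i j p, F j i p.symm = (F i j p)⁻¹ := fun i j p => by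
    rw [eq_inv_iff_mul_eq_one, ← hF, Path.Homotopic.Quotient.symm_trans, F1]
  -- a gauge transformation trivializing the exchanges
  let g : OP V → Q := fun i =>
    if num i.1.1 < num i.1.2 then 1 else F i.sw i (iota hv i.sw i (OP.sw_sw i).symm)
  have hgq : ∀ i, q (g i) = 1 := by
    intro i
    by_cases h : num i.1.1 < num i.1.2
    · simp [g, h]
    · simp only [g, if_neg h, hFq, hPι]
  have hg : ∀ i j (h : j = i.sw), g i * F i j (iota hv i j h) = g j := by
    intro i j h
    have hji : i = j.sw := by rw [h]; rfl
    rcases lt_trichotomy (num i.1.1) (num i.1.2) with hlt | hlt | hlt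
    · have h1 : g i = 1 := if_pos hlt
      have h2 : g j = F j.sw j (iota hv j.sw j (OP.sw_sw j).symm) := by
        apply if_neg; rw [h]; exact hlt.not_gt
      rw [h1, h2, one_mul]
      subst h
      rfl
    · exact (i.2 (num_inj hlt)).elim
    · have h1 : g j = 1 := by
        apply if_pos; rw [h]; exact hlt
      have h2 : g i = F i.sw i (iota hv i.sw i (OP.sw_sw i).symm) := if_neg hlt.not_gt
      subst h
      rw [h1, h2, ← hF, iota_iota, F1]
  refine ⟨fun c a b => if h : Cell Γ c a b then
    g ⟨(c, a), h.2.1⟩ * F _ _ (EE hv h) * (g ⟨(c, b), h.2.2⟩)⁻¹ else 1, ⟨?_, ?_⟩, ?_⟩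
  · intro c a b h
    rw [dif_pos h, dif_pos h.symm, EE_symm hv h, Fi]
    group
  · intro a b c d hS
    obtain ⟨e1, e2, n1, n2, n3, n4⟩ := hS
    have c1 : Cell Γ c a b := ⟨e1, n1.symm, n3.symm⟩
    have c2 : Cell Γ b c d := ⟨e2, n3, n4⟩
    have c3 : Cell Γ a c d := ⟨e2, n1, n2⟩
    have c4 : Cell Γ d a b := ⟨e1, n2.symm, n4.symm⟩
    have sqq := congrArg (F _ _) (EE_square hv ⟨e1, e2, n1, n2, n3, n4⟩ c1 c2 c3 c4)
    simp only [hF] at sqq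
    rw [dif_pos c1, dif_pos c2, dif_pos c3, dif_pos c4]
    rw [← hg ⟨(c, b), c1.2.2⟩ ⟨(b, c), c2.2.1⟩ (OP.mk_sw _ _),
      ← hg ⟨(c, a), c1.2.1⟩ ⟨(a, c), c3.2.1⟩ (OP.mk_sw _ _),
      ← hg ⟨(b, d), c2.2.2⟩ ⟨(d, b), c4.2.2⟩ (OP.mk_sw _ _),
      ← hg ⟨(a, d), c3.2.2⟩ ⟨(d, a), c4.2.1⟩ (OP.mk_sw _ _)]
    simp only [mul_assoc, mul_inv_rev, inv_mul_cancel_left, mul_inv_cancel_left] at sqq ⊢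
    have s2 := congrArg (· * ((F _ _ (iota hv ⟨(b, d), c2.2.2⟩ ⟨(d, b), c4.2.2⟩ (OP.mk_sw _ _)))⁻¹ *
      (g ⟨(b, d), c2.2.2⟩)⁻¹)) sqq
    simp only [mul_assoc, mul_inv_cancel_left] at s2
    rw [s2]
  · intro c a b h
    beta_reduce
    rw [dif_pos h]
    simp [hgq, hFq, hPE]

end LiftLab

/-! ### The two combinatorial obstructions -/

section Obs
open CategoryTheory
variable {V : Type} [Fintype V] [DecidableEq V] {Γ : SimpleGraph V}

/-- A nonempty set of vertices inducing a subgraph of minimum degree at least two. -/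
def Cyc (Γ : SimpleGraph V) (W : Finset V) : Prop :=
  W.Nonempty ∧ ∀ v ∈ W, ∃ x ∈ W, ∃ y ∈ W, x ≠ y ∧ Γ.Adj v x ∧ Γ.Adj v y

/-- No two disjoint cycles, phrased through sets of minimum degree two; see `noDC_iff`. -/
def NoDC (Γ : SimpleGraph V) : Prop := ∀ W₁ W₂, Cyc Γ W₁ → Cyc Γ W₂ → ¬ Disjoint W₁ W₂

/-- The sign labeling of the one-cells lifts to integers. Here `A` is a tournament modulo two
and `m c a b` is the lift of the cell `(c; a b)`. -/
def Lift (Γ : SimpleGraph V) : Prop := ∃ (A : V → V → ℤ) (m : V → V → V → ℤ),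
  (∀ u v, u ≠ v → Odd (A u v + A v u)) ∧
  (∀ c a b, Cell Γ c a b → m c b a = - m c a b ∧ Even (m c a b + A c a + A c b)) ∧
  ∀ a b c d, DE Γ a b c d → m c a b + m b c d = m a c d + m d a b

/-- The sign of the permutation of the two tokens, read with respect to a numbering of the
vertices, is a labeling in `ℤ/2`; freeness lifts it along `ℤ → ℤ/2`. -/
theorem lift_of_free (hv : ∀ v, ∃ w, Γ.Adj v w) (hc : Γ.Connected) (x : UConf 2 (realization Γ))
    (hfree : IsFreeGroupType (FundamentalGroup (UConf 2 (realization Γ)) x)) : Lift Γ := by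
  let A : V → V → ℤ := fun u v => if num u < num v then 1 else 0
  have hA : ∀ u v, u ≠ v → A u v + A v u = 1 := by
    intro u v h
    rcases lt_trichotomy (num u) (num v) with h' | h' | h'
    · simp [A, h', h'.not_gt]
    · exact (h (num_inj h')).elim
    · simp [A, h', h'.not_gt]
  let q : Multiplicative ℤ →* Multiplicative (ZMod 2) :=
    AddMonoidHom.toMultiplicative (Int.castAddHom (ZMod 2))
  have hq : Function.Surjective q := fun z => by
    obtain ⟨n, hn⟩ := ZMod.intCast_surjective (Multiplicative.toAdd z)
    exact ⟨Multiplicative.ofAdd n, hn⟩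
  let l₀ : V → V → V → Multiplicative (ZMod 2) := fun c a b =>
    Multiplicative.ofAdd ((A c a + A c b : ℤ) : ZMod 2)
  have ev : ∀ {x y : ℤ}, ((x : ℤ) : ZMod 2) = y ↔ Even (x - y) := by
    intro x y
    rw [← sub_eq_zero, ← Int.cast_sub, ZMod.intCast_eq_zero_iff_even]
  have hl₀ : IsLab Γ l₀ := by
    constructor
    · intro c a b h
      change ((_ : ℤ) : ZMod 2) = - ((_ : ℤ) : ZMod 2)
      rw [← Int.cast_neg, ev]
      exact ⟨A c a + A c b, by ring⟩
    · rintro a b c d ⟨-, -, n1, n2, n3, n4⟩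
      change ((_ : ℤ) : ZMod 2) + ((_ : ℤ) : ZMod 2) = ((_ : ℤ) : ZMod 2) + ((_ : ℤ) : ZMod 2)
      rw [← Int.cast_add, ← Int.cast_add, ev]
      have h1 := hA _ _ n1
      have h2 := hA _ _ n2
      have h3 := hA _ _ n3
      have h4 := hA _ _ n4
      exact ⟨1 - A a c - A d b, by linarith⟩
  obtain ⟨l, hl, hlq⟩ := lift_labels hv hc x hfree q hq hl₀
  refine ⟨A, fun c a b => Multiplicative.toAdd (l c a b), fun u v h => by rw [hA u v h]; exact odd_one,
    fun c a b h => ⟨congrArg Multiplicative.toAdd (hl.inv c a b h), ?_⟩, fun a b c d h => hl.sq a b c d h⟩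
  have := hlq c a b h
  change ((Multiplicative.toAdd (l c a b) : ℤ) : ZMod 2) = ((A c a + A c b : ℤ) : ZMod 2) at this
  rw [ev] at this
  obtain ⟨k, hk⟩ := this
  exact ⟨k + A c a + A c b, by linarith⟩

/-! ### Commuting loops -/

/-- The product of the labels along a walk. -/
def lw {Q : Type} [Group Q] (l : V → V → V → Q) (c : V) : ∀ {a b : V}, Γ.Walk a b → Q
  | _, _, .nil => 1
  | a, _, .cons (v := v) _ p => l c a v * lw l c p

theorem lw_edge {Q : Type} [Group Q] {l : V → V → V → Q} (hl : IsLab Γ l) {a b c d : V}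
    (p : Γ.Walk a b) (h : Γ.Adj c d) (hc : c ∉ p.support) (hd : d ∉ p.support) :
    lw l c p * l b c d = l a c d * lw l d p := by
  induction p with
  | nil => simp [lw]
  | @cons a v b h' p ih =>
    simp only [SimpleGraph.Walk.support_cons, List.mem_cons, not_or] at hc hd
    have h1 : v ∈ p.support := p.start_mem_support
    have := hl.sq a v c d ⟨h', h, Ne.symm hc.1, Ne.symm hd.1, fun e => hc.2 (e ▸ h1),
      fun e => hd.2 (e ▸ h1)⟩
    simp only [lw]
    rw [mul_assoc, ih hc.2 hd.2, ← mul_assoc, this, mul_assoc]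

/-- Products along two disjoint walks satisfy the relation of a square. -/
theorem lw_square {Q : Type} [Group Q] {l : V → V → V → Q} (hl : IsLab Γ l) {a b c d : V}
    (p : Γ.Walk a b) (r : Γ.Walk c d) (h : List.Disjoint p.support r.support) :
    lw l c p * lw l b r = lw l a r * lw l d p := by
  induction r with
  | nil => simp [lw]
  | @cons c v d h' r ih =>
    rw [SimpleGraph.Walk.support_cons, List.disjoint_cons_right] at h
    simp only [lw]
    rw [← mul_assoc, lw_edge hl p h' h.1 fun e => h.2 e r.start_mem_support, mul_assoc, ih h.2,
      mul_assoc]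

/-- The mod two count of two given edges, as a compatible labeling. -/
def cntL (e₁ e₂ : Sym2 V) (_ a b : V) : Multiplicative (ZMod 2 × ZMod 2) :=
  Multiplicative.ofAdd (if s(a, b) = e₁ then 1 else 0, if s(a, b) = e₂ then 1 else 0)

theorem lw_cntL (e₁ e₂ : Sym2 V) (c : V) {a b : V} (p : Γ.Walk a b) :
    lw (cntL e₁ e₂) c p = Multiplicative.ofAdd
      (((p.edges.count e₁ : ℕ) : ZMod 2), ((p.edges.count e₂ : ℕ) : ZMod 2)) := by
  induction p with
  | nil => rfl
  | @cons a v b h' p ih =>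
    simp only [lw, ih, SimpleGraph.Walk.edges_cons, List.count_cons]
    rw [cntL, ← ofAdd_add]
    congr 1
    ext
    · by_cases h : s(a, v) = e₁ <;> simp [h, add_comm]
    · by_cases h : s(a, v) = e₂ <;> simp [h, add_comm]

/-- Abelianization of the dihedral group of order eight. -/
def dihQ : DihedralGroup 4 →* Multiplicative (ZMod 2 × ZMod 2) where
  toFun
    | .r i => Multiplicative.ofAdd ((i.cast : ZMod 2), 0)
    | .sr i => Multiplicative.ofAdd ((i.cast : ZMod 2), 1)
  map_one' := by decide
  map_mul' := by decide

theorem dihQ_surj : Function.Surjective dihQ := by decide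

/-- The generators of the abelianization do not have commuting lifts. -/
theorem dihQ_comm : ∀ x y : DihedralGroup 4, dihQ x = Multiplicative.ofAdd (1, 0) →
    dihQ y = Multiplicative.ofAdd (0, 1) → x * y ≠ y * x := by decide

/-- Two disjoint cycles give commuting elements of the braid group. The labeling counting one edge
of each cycle modulo two maps them to the two generators of `(ℤ/2)²`; if it lifted to the dihedral
group of order eight, the lifts of these generators would commute. -/
theorem no_disjoint_cycle_walks (hv : ∀ v, ∃ w, Γ.Adj v w) (hc : Γ.Connected)
    (x : UConf 2 (realization Γ))
    (hfree : IsFreeGroupType (FundamentalGroup (UConf 2 (realization Γ)) x)) {a c : V}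
    (p : Γ.Walk a a) (r : Γ.Walk c c) (hp : p.IsCycle) (hr : r.IsCycle)
    (hd : List.Disjoint p.support r.support) : False := by
  have hpe : ∃ e, e ∈ p.edges := by
    cases p with
    | nil => exact (hp.ne_nil rfl).elim
    | cons h p => exact ⟨_, by rw [SimpleGraph.Walk.edges_cons]; exact List.mem_cons_self⟩
  have hre : ∃ e, e ∈ r.edges := by
    cases r with
    | nil => exact (hr.ne_nil rfl).elim
    | cons h p => exact ⟨_, by rw [SimpleGraph.Walk.edges_cons]; exact List.mem_cons_self⟩
  obtain ⟨e₁, h₁⟩ := hpe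
  obtain ⟨e₂, h₂⟩ := hre
  have h₁' : e₁ ∉ r.edges := by
    intro h
    induction e₁ with
    | _ u v => exact hd (p.fst_mem_support_of_mem_edges h₁) (r.fst_mem_support_of_mem_edges h)
  have h₂' : e₂ ∉ p.edges := by
    intro h
    induction e₂ with
    | _ u v => exact hd (p.fst_mem_support_of_mem_edges h) (r.fst_mem_support_of_mem_edges h₂)
  have hl₀ : IsLab Γ (cntL e₁ e₂) := by
    constructor
    · intro c a b _
      have : ∀ z : Multiplicative (ZMod 2 × ZMod 2), z = z⁻¹ := by decide
      rw [← this]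
      simp only [cntL, Sym2.eq_swap]
    · intro a b c d _
      exact mul_comm _ _
  obtain ⟨l, hl, hlq⟩ := lift_labels hv hc x hfree dihQ dihQ_surj hl₀
  have hlw : ∀ {u v : V} (c : V) (s : Γ.Walk u v), c ∉ s.support →
      dihQ (lw l c s) = lw (cntL e₁ e₂) c s := by
    intro u v c s hs
    induction s with
    | nil => simp [lw]
    | @cons u w v h s ih =>
      simp only [SimpleGraph.Walk.support_cons, List.mem_cons, not_or] at hs
      simp only [lw, map_mul]
      rw [ih hs.2, hlq c u w ⟨h, hs.1, fun e => hs.2 (e ▸ s.start_mem_support)⟩]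
  have hcp : c ∉ p.support := fun h => hd h r.start_mem_support
  have har : a ∉ r.support := fun h => hd p.start_mem_support h
  refine dihQ_comm (lw l c p) (lw l a r) ?_ ?_ (lw_square hl p r hd)
  · rw [hlw c p hcp, lw_cntL, List.count_eq_one_of_mem hp.edges_nodup h₁, List.count_eq_zero_of_not_mem h₂']
    rfl
  · rw [hlw a r har, lw_cntL, List.count_eq_one_of_mem hr.edges_nodup h₂, List.count_eq_zero_of_not_mem h₁']
    rfl

/-! ### Cycles and sets of minimum degree two -/

/-- A set of minimum degree two contains a cycle: otherwise it would induce a forest, and the first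
vertex of a longest path in it would have only one neighbour. -/
theorem Cyc.exists_cycle {W : Finset V} (hW : Cyc Γ W) :
    ∃ (a : V) (p : Γ.Walk a a), p.IsCycle ∧ ∀ v ∈ p.support, v ∈ W := by
  haveI : Nonempty (W : Set V) := ⟨⟨_, hW.1.choose_spec⟩⟩
  have hnot : ¬ (Γ.induce (W : Set V)).IsAcyclic := by
    intro hac
    obtain ⟨u, v, p, hp, hmax⟩ :=
      SimpleGraph.Walk.exists_isPath_forall_isPath_length_le_length (Γ.induce (W : Set V))
    obtain ⟨x, hx, y, hy, hxy, hux, huy⟩ := hW.2 u u.2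
    have key : ∀ (z : V) (hz : z ∈ W), Γ.Adj u z → (⟨z, hz⟩ : (W : Set V)) = p.snd := by
      intro z hz hadj
      have hadj' : (Γ.induce (W : Set V)).Adj u ⟨z, hz⟩ := hadj
      have hmem : (⟨z, hz⟩ : (W : Set V)) ∈ p.support := by
        by_contra hn
        have := hmax _ _ _ (hp.cons (h := hadj'.symm) hn)
        simp at this
      exact hac.eq_snd_of_adj_start hp hadj' hmem
    exact hxy (congrArg Subtype.val ((key x hx hux).trans (key y hy huy).symm))
  simp only [SimpleGraph.IsAcyclic, not_forall, not_not] at hnot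
  obtain ⟨a, p, hp⟩ := hnot
  refine ⟨_, p.map (SimpleGraph.Embedding.induce (W : Set V)).toHom, ?_, ?_⟩
  · exact hp.map Subtype.val_injective
  · intro v hv
    rw [SimpleGraph.Walk.support_map, List.mem_map] at hv
    obtain ⟨w, -, rfl⟩ := hv
    exact w.2

theorem noDC_of_free (hv : ∀ v, ∃ w, Γ.Adj v w) (hc : Γ.Connected) (x : UConf 2 (realization Γ))
    (hfree : IsFreeGroupType (FundamentalGroup (UConf 2 (realization Γ)) x)) : NoDC Γ := by
  intro W W' h h' hd
  obtain ⟨a, p, hp, hpW⟩ := h.exists_cycle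
  obtain ⟨c, r, hr, hrW⟩ := h'.exists_cycle
  exact no_disjoint_cycle_walks hv hc x hfree p r hp hr fun z hz hz' =>
    Finset.disjoint_left.1 hd (hpW z hz) (hrW z hz')

theorem isCycleSubgraph_of_cycle {a : V} (p : Γ.Walk a a) (hp : p.IsCycle) :
    IsCycleSubgraph p.toSubgraph := by
  refine ⟨?_, p.toSubgraph_connected, fun v hv => ?_⟩
  · cases p with
    | nil => exact (hp.ne_nil rfl).elim
    | @cons _ w _ h p => exact ⟨s(a, w), by simp⟩
  · exact hp.ncard_neighborSet_toSubgraph_eq_two (by simpa using hv)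

theorem noDC_iff : NoDC Γ ↔ ¬ ∃ C₁ C₂ : Γ.Subgraph, IsCycleSubgraph C₁ ∧ IsCycleSubgraph C₂ ∧
    Disjoint C₁.verts C₂.verts := by
  constructor
  · rintro h ⟨C₁, C₂, h₁, h₂, hd⟩
    have key : ∀ C : Γ.Subgraph, IsCycleSubgraph C → Cyc Γ C.verts.toFinset := by
      intro C hC
      obtain ⟨e, he⟩ := hC.1
      refine ⟨?_, fun v hv => ?_⟩
      · induction e with
        | _ u w => exact ⟨u, by simpa using C.edge_vert he⟩
      · obtain ⟨x, y, hxy, hn⟩ := Set.ncard_eq_two.1 (hC.2.2 v (by simpa using hv))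
        have hx : C.Adj v x := by
          have : x ∈ C.neighborSet v := by rw [hn]; simp
          exact this
        have hy : C.Adj v y := by
          have : y ∈ C.neighborSet v := by rw [hn]; simp
          exact this
        exact ⟨x, by simpa using C.edge_vert hx.symm, y, by simpa using C.edge_vert hy.symm, hxy,
          hx.adj_sub, hy.adj_sub⟩
    refine h _ _ (key C₁ h₁) (key C₂ h₂) ?_
    rw [Finset.disjoint_left]
    intro z hz hz'
    exact Set.disjoint_left.1 hd (by simpa using hz) (by simpa using hz')
  · intro h W W' hW hW' hd
    obtain ⟨a, p, hp, hpW⟩ := hW.exists_cycle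
    obtain ⟨c, r, hr, hrW⟩ := hW'.exists_cycle
    refine h ⟨_, _, isCycleSubgraph_of_cycle p hp, isCycleSubgraph_of_cycle r hr, ?_⟩
    rw [Set.disjoint_left]
    intro z hz hz'
    rw [SimpleGraph.Walk.mem_verts_toSubgraph] at hz hz'
    exact Finset.disjoint_left.1 hd (hpW z hz) (hrW z hz')

end Obs

/-! ### Angles: an embedding in the plane lifts the sign labeling -/

section Angle
open Complex

/-- Nonvanishing functions on simply connected spaces lift through the covering `exp`. -/
theorem exists_log {X : Type} [TopologicalSpace X] [LocallyPathConnectedSpace X]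
    [SimplyConnectedSpace X] {g : X → ℂ} (hg : Continuous g) (h0 : ∀ t, g t ≠ 0) :
    ∃ L : X → ℂ, Continuous L ∧ ∀ t, exp (L t) = g t := by
  let x₀ : X := Classical.arbitrary X
  obtain ⟨L, ⟨-, hL⟩, -⟩ := isCoveringMap_exp.existsUnique_continuousMap_lifts
    (⟨fun t => ⟨g t, h0 t⟩, hg.subtype_mk _⟩ : C(X, {z : ℂ // z ≠ 0})) x₀ (log (g x₀))
    (Subtype.ext (exp_log (h0 _)))
  exact ⟨L, L.continuous, fun t => congrArg Subtype.val (congrFun hL t)⟩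

/-- Two continuous logarithms of proportional functions have the same increments. -/
theorem log_incr {L L' : ℝ → ℂ} (hL : Continuous L) (hL' : Continuous L') {k : ℂ}
    (h : ∀ t, exp (L t) = k * exp (L' t)) : L 1 - L 0 = L' 1 - L' 0 := by
  have hd : ∀ t, exp (L t - L' t) = k := fun t => by
    rw [exp_sub, h, mul_div_assoc, div_self (exp_ne_zero _), mul_one]
  have := isCoveringMap_exp.eq_of_comp_eq (g₁ := fun t => L t - L' t)
    (g₂ := fun _ : ℝ => L 0 - L' 0) (hL.sub hL') continuous_const
    (funext fun t => Subtype.ext ((hd t).trans (hd 0).symm)) 0 rfl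
  have := congrFun this 1
  linear_combination this

/-- The parametrization of the edge `a b` by the unit interval, constant outside of it. -/
def epath {V : Type} [DecidableEq V] (a b : V) (t : ℝ) : V → ℝ := fun w =>
  (1 - max 0 (min 1 t)) * basisVec a w + max 0 (min 1 t) * basisVec b w

variable {V : Type} [Fintype V] [DecidableEq V] {Γ : SimpleGraph V}

theorem epath_cont (a b : V) : Continuous (epath a b) := by
  unfold epath; fun_prop

theorem epath_zero (a b : V) : epath a b 0 = basisVec a := by
  funext w; simp [epath]

theorem epath_one (a b : V) : epath a b 1 = basisVec b := by
  funext w; simp [epath]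

theorem epath_symm (a b : V) (t : ℝ) : epath a b (1 - t) = epath b a t := by
  funext w
  have : max 0 (min 1 (1 - t)) = 1 - max 0 (min 1 t) := by
    rcases le_total t 0 with h | h <;> rcases le_total t 1 with h' | h' <;>
      simp [h, h'] <;> linarith
  rw [epath, epath, this]; ring

theorem epath_mem {a b : V} (h : Γ.Adj a b) (t : ℝ) : epath a b t ∈ realization Γ := by
  have h1 : 0 ≤ max 0 (min 1 t) := le_max_left _ _
  have h2 : max 0 (min 1 t) ≤ 1 := max_le zero_le_one (min_le_left _ _)
  have := h.ne
  refine (mem_realization_iff _).2 ⟨a, b, h, ?_, ?_, ?_, ?_⟩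
  all_goals simp only [epath, basisVec]
  · simp [this]
  · simp [this.symm]
  · simp [this, this.symm]
  · intro w hw hw'; simp [hw, hw']

theorem epath_ne {a b c : V} (hc : c ≠ a) (hc' : c ≠ b) (t : ℝ) : basisVec c ≠ epath a b t := by
  intro h
  have := congrFun h c
  simp [epath, basisVec, hc, hc'] at this

theorem epath_ne' {a b c d : V} (h1 : a ≠ c) (h2 : a ≠ d) (h3 : b ≠ c) (h4 : b ≠ d) (s t : ℝ) :
    epath c d t ≠ epath a b s := by
  intro h
  have e1 := congrFun h a
  have e2 := congrFun h b
  by_cases hab : a = b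
  · subst hab
    simp [epath, basisVec, h1, h2] at e1
  · simp only [epath, basisVec, if_neg h1, if_neg h2, if_neg h3, if_neg h4, if_neg hab,
      if_neg (Ne.symm hab), if_true] at e1 e2
    linarith

/-- The integer attached to a one-cell `(c; a b)` is the change of the argument of the vector from
the moving point to `c`, in multiples of `π`, corrected by a choice of logarithm at each unordered
pair of vertices. The square relation holds because the difference of two points moving on disjoint
edges has a continuous logarithm on the square of parameters. -/
theorem lift_of_embedding (hv : ∀ v, ∃ w, Γ.Adj v w) (f : realization Γ → ℝ × ℝ)
    (hf : Topology.IsEmbedding f) : Lift Γ := by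
  let F : realization Γ → ℂ := fun x => ⟨(f x).1, (f x).2⟩
  have hFc : Continuous F := by
    have := hf.continuous
    have h : F = fun x => ((f x).1 : ℂ) + (f x).2 * I := by
      funext x; apply Complex.ext <;> simp [F]
    rw [h]
    fun_prop
  have hFi : ∀ x y, F x = F y → x = y := fun x y h => hf.injective
    (Prod.ext (congrArg Complex.re h) (congrArg Complex.im h))
  let P : V → ℂ := fun v => F ⟨basisVec v, basisVec_mem hv v⟩
  have hP : ∀ u v, u ≠ v → P u - P v ≠ 0 := by
    intro u v huv h
    have h := congrArg Subtype.val (hFi _ _ (sub_eq_zero.1 h))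
    have h := congrFun h u
    simp [basisVec, huv] at h
  let E : ∀ {a b : V}, Γ.Adj a b → ℝ → ℂ := fun h t => F ⟨epath _ _ t, epath_mem h t⟩
  have hEc : ∀ {a b : V} (h : Γ.Adj a b), Continuous (E h) := fun h =>
    hFc.comp ((epath_cont _ _).subtype_mk _)
  have hE0 : ∀ {a b : V} (h : Γ.Adj a b), E h 0 = P a := fun h =>
    congrArg F (Subtype.ext (epath_zero _ _))
  have hE1 : ∀ {a b : V} (h : Γ.Adj a b), E h 1 = P b := fun h =>
    congrArg F (Subtype.ext (epath_one _ _))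
  -- the increment of the logarithm along a one-cell
  have hZ : ∀ c a b, Cell Γ c a b → ∃ Z : ℂ, ∀ (h : Γ.Adj a b) (k : ℂ) (L : ℝ → ℂ), Continuous L →
      (∀ t, exp (L t) = k * (P c - E h t)) → L 1 - L 0 = Z := by
    rintro c a b ⟨h, h1, h2⟩
    obtain ⟨L', hL'c, hL'⟩ := exists_log (g := fun t => P c - E h t) (continuous_const.sub (hEc h)) (by
      intro t ht
      exact epath_ne h1 h2 t (congrArg Subtype.val (hFi _ _ (sub_eq_zero.1 ht))))
    refine ⟨L' 1 - L' 0, fun _ k L hL hk => log_incr hL hL'c (k := k) fun t => ?_⟩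
    rw [hk, hL']
  choose! Z hZ using hZ
  let A : V → V → ℤ := fun u v => if num u < num v then 0 else 1
  let B : V → V → ℂ := fun u v => if num u < num v then log (P u - P v) else log (P v - P u)
  have hlt : ∀ u v : V, u ≠ v → (num u < num v ∧ ¬ num v < num u) ∨ (num v < num u ∧ ¬ num u < num v) := by
    intro u v h
    rcases lt_trichotomy (num u) (num v) with h' | h' | h'
    · exact .inl ⟨h', h'.not_gt⟩
    · exact (h (num_inj h')).elim
    · exact .inr ⟨h', h'.not_gt⟩
  have hB : ∀ u v, u ≠ v → B u v = B v u := by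
    intro u v h
    rcases hlt u v h with ⟨h1, h2⟩ | ⟨h1, h2⟩ <;> simp [B, h1, h2]
  have hBA : ∀ u v, u ≠ v → exp (B u v + A u v * (Real.pi * I)) = P u - P v := by
    intro u v h
    rcases hlt u v h with ⟨h1, h2⟩ | ⟨h1, h2⟩
    · simp [B, A, h1, exp_log (hP u v h)]
    · simp [B, A, h2, exp_add, exp_log (hP v u h.symm), exp_pi_mul_I]
  have hm : ∀ c a b, Cell Γ c a b → ∃ m : ℤ, Z c a b = B c b - B c a + m * (Real.pi * I) ∧
      Even (m + A c a + A c b) := by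
    rintro c a b ⟨h, h1, h2⟩
    obtain ⟨L, hLc, hL⟩ := exists_log (g := fun t => P c - E h t) (continuous_const.sub (hEc h)) (by
      intro t ht
      exact epath_ne h1 h2 t (congrArg Subtype.val (hFi _ _ (sub_eq_zero.1 ht))))
    have hz := hZ c a b ⟨h, h1, h2⟩ h 1 L hLc (fun t => by rw [hL, one_mul])
    have e0 := hL 0
    have e1 := hL 1
    rw [hE0 h, ← hBA c a h1, exp_eq_exp_iff_exists_int] at e0
    rw [hE1 h, ← hBA c b h2, exp_eq_exp_iff_exists_int] at e1
    obtain ⟨n, hn⟩ := e0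
    obtain ⟨n', hn'⟩ := e1
    refine ⟨A c b - A c a + 2 * (n' - n), ?_, ⟨A c b + (n' - n), by ring⟩⟩
    rw [← hz, hn, hn']
    push_cast
    ring
  choose! m hm using hm
  have hpi : (Real.pi * I : ℂ) ≠ 0 := by simp [Real.pi_ne_zero, I_ne_zero]
  refine ⟨A, m, ?_, ?_, ?_⟩
  · intro u v h
    rcases hlt u v h with ⟨h1, h2⟩ | ⟨h1, h2⟩ <;> simp [A, h1, h2]
  · rintro c a b ⟨h, h1, h2⟩
    refine ⟨?_, (hm c a b ⟨h, h1, h2⟩).2⟩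
    obtain ⟨L, hLc, hL⟩ := exists_log (g := fun t => P c - E h t) (continuous_const.sub (hEc h)) (by
      intro t ht
      exact epath_ne h1 h2 t (congrArg Subtype.val (hFi _ _ (sub_eq_zero.1 ht))))
    have hz := hZ c a b ⟨h, h1, h2⟩ h 1 L hLc (fun t => by rw [hL, one_mul])
    have hz' := hZ c b a ⟨h.symm, h2, h1⟩ h.symm 1 (fun t => L (1 - t)) (by fun_prop)
      (fun t => by
        rw [hL, one_mul]
        congr 1
        exact congrArg F (Subtype.ext (epath_symm _ _ _)))
    simp only [sub_self, sub_zero] at hz'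
    have e1 := (hm c a b ⟨h, h1, h2⟩).1
    have e2 := (hm c b a ⟨h.symm, h2, h1⟩).1
    have : ((m c b a : ℂ) + m c a b) * (Real.pi * I) = 0 := by
      linear_combination -e1 - e2 - hz - hz'
    have := (mul_eq_zero.1 this).resolve_right hpi
    have : m c b a + m c a b = 0 := by exact_mod_cast this
    linarith
  · rintro a b c d ⟨h, h', n1, n2, n3, n4⟩
    obtain ⟨L, hLc, hL⟩ := exists_log (X := ℝ × ℝ) (g := fun q => E h' q.2 - E h q.1)
      (((hEc h').comp continuous_snd).sub ((hEc h).comp continuous_fst)) (by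
      intro q hq
      exact epath_ne' n1 n2 n3 n4 q.1 q.2 (congrArg Subtype.val (hFi _ _ (sub_eq_zero.1 hq))))
    have z1 := hZ c a b ⟨h, n1.symm, n3.symm⟩ h 1 (fun s => L (s, 0)) (by fun_prop)
      (fun s => by rw [hL, one_mul, hE0 h'])
    have z2 := hZ d a b ⟨h, n2.symm, n4.symm⟩ h 1 (fun s => L (s, 1)) (by fun_prop)
      (fun s => by rw [hL, one_mul, hE1 h'])
    have z3 := hZ a c d ⟨h', n1, n2⟩ h' (-1) (fun s => L (0, s)) (by fun_prop)
      (fun s => by rw [hL, hE0 h]; ring)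
    have z4 := hZ b c d ⟨h', n3, n4⟩ h' (-1) (fun s => L (1, s)) (by fun_prop)
      (fun s => by rw [hL, hE1 h]; ring)
    have e1 := (hm c a b ⟨h, n1.symm, n3.symm⟩).1
    have e2 := (hm d a b ⟨h, n2.symm, n4.symm⟩).1
    have e3 := (hm a c d ⟨h', n1, n2⟩).1
    have e4 := (hm b c d ⟨h', n3, n4⟩).1
    have b1 := hB a c n1
    have b2 := hB a d n2
    have b3 := hB b c n3
    have b4 := hB b d n4
    have : ((m c a b : ℂ) + m b c d - m a c d - m d a b) * (Real.pi * I) = 0 := by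
      linear_combination -e1 - e4 + e3 + e2 - z1 - z4 + z3 + z2 - b1 + b2 + b3 - b4
    have := (mul_eq_zero.1 this).resolve_right hpi
    have : m c a b + m b c d - m a c d - m d a b = 0 := by exact_mod_cast this
    linarith

end Angle

/-! ### The two Kuratowski graphs -/

section Kuratowski
variable {V : Type} [Fintype V] [DecidableEq V] {Γ : SimpleGraph V}

/-- The sign labeling of `K₃,₃` does not lift: in a suitable signed sum of all squares every label
that survives has coefficient `±2`, and half of the sum is odd. -/
theorem no_K33 (hL : Lift Γ) {v0 v1 v2 v3 v4 v5 : V}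
    (n01 : v0 ≠ v1) (n02 : v0 ≠ v2) (n03 : v0 ≠ v3) (n04 : v0 ≠ v4) (n05 : v0 ≠ v5)
    (n12 : v1 ≠ v2) (n13 : v1 ≠ v3) (n14 : v1 ≠ v4) (n15 : v1 ≠ v5) (n23 : v2 ≠ v3)
    (n24 : v2 ≠ v4) (n25 : v2 ≠ v5) (n34 : v3 ≠ v4) (n35 : v3 ≠ v5) (n45 : v4 ≠ v5)
    (e03 : Γ.Adj v0 v3) (e04 : Γ.Adj v0 v4) (e05 : Γ.Adj v0 v5) (e13 : Γ.Adj v1 v3)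
    (e14 : Γ.Adj v1 v4) (e15 : Γ.Adj v1 v5) (e23 : Γ.Adj v2 v3) (e24 : Γ.Adj v2 v4)
    (e25 : Γ.Adj v2 v5) : False := by
  obtain ⟨A, m, hA, hm, hs⟩ := hL
  have key : 2 * (- m v3 v2 v4 + m v3 v2 v5 + m v4 v2 v3 - m v4 v2 v5 - m v5 v2 v3 + m v5 v2 v4) = 0 := by
    linear_combination hs _ _ _ _ ⟨e03, e14, n01, n04, n13.symm, n34⟩
      - hs _ _ _ _ ⟨e03, e15, n01, n05, n13.symm, n35⟩
      - hs _ _ _ _ ⟨e03, e24, n02, n04, n23.symm, n34⟩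
      + hs _ _ _ _ ⟨e03, e25, n02, n05, n23.symm, n35⟩
      - hs _ _ _ _ ⟨e04, e13, n01, n03, n14.symm, n34.symm⟩
      + hs _ _ _ _ ⟨e04, e15, n01, n05, n14.symm, n45⟩
      + hs _ _ _ _ ⟨e04, e23, n02, n03, n24.symm, n34.symm⟩
      - hs _ _ _ _ ⟨e04, e25, n02, n05, n24.symm, n45⟩
      + hs _ _ _ _ ⟨e05, e13, n01, n03, n15.symm, n35.symm⟩
      - hs _ _ _ _ ⟨e05, e14, n01, n04, n15.symm, n45.symm⟩
      - hs _ _ _ _ ⟨e05, e23, n02, n03, n25.symm, n35.symm⟩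
      + hs _ _ _ _ ⟨e05, e24, n02, n04, n25.symm, n45.symm⟩
      - hs _ _ _ _ ⟨e13, e24, n12, n14, n23.symm, n34⟩
      + hs _ _ _ _ ⟨e13, e25, n12, n15, n23.symm, n35⟩
      + hs _ _ _ _ ⟨e14, e23, n12, n13, n24.symm, n34.symm⟩
      - hs _ _ _ _ ⟨e14, e25, n12, n15, n24.symm, n45⟩
      - hs _ _ _ _ ⟨e15, e23, n12, n13, n25.symm, n35.symm⟩
      + hs _ _ _ _ ⟨e15, e24, n12, n14, n25.symm, n45.symm⟩
  obtain ⟨j23, hj23⟩ := hA _ _ n23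
  obtain ⟨j24, hj24⟩ := hA _ _ n24
  obtain ⟨j25, hj25⟩ := hA _ _ n25
  obtain ⟨j34, hj34⟩ := hA _ _ n34
  obtain ⟨j35, hj35⟩ := hA _ _ n35
  obtain ⟨j45, hj45⟩ := hA _ _ n45
  obtain ⟨k324, hk324⟩ := (hm _ _ _ ⟨e24, n23.symm, n34⟩).2
  obtain ⟨k325, hk325⟩ := (hm _ _ _ ⟨e25, n23.symm, n35⟩).2
  obtain ⟨k423, hk423⟩ := (hm _ _ _ ⟨e23, n24.symm, n34.symm⟩).2
  obtain ⟨k425, hk425⟩ := (hm _ _ _ ⟨e25, n24.symm, n45⟩).2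
  obtain ⟨k523, hk523⟩ := (hm _ _ _ ⟨e23, n25.symm, n35.symm⟩).2
  obtain ⟨k524, hk524⟩ := (hm _ _ _ ⟨e24, n25.symm, n45.symm⟩).2
  clear hA hm hs
  omega

/-- The sign labeling of `K₅` does not lift. -/
theorem no_K5 (hL : Lift Γ) {v0 v1 v2 v3 v4 : V}
    (n01 : v0 ≠ v1) (n02 : v0 ≠ v2) (n03 : v0 ≠ v3) (n04 : v0 ≠ v4) (n12 : v1 ≠ v2)
    (n13 : v1 ≠ v3) (n14 : v1 ≠ v4) (n23 : v2 ≠ v3) (n24 : v2 ≠ v4) (n34 : v3 ≠ v4)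
    (e01 : Γ.Adj v0 v1) (e02 : Γ.Adj v0 v2) (e03 : Γ.Adj v0 v3) (e04 : Γ.Adj v0 v4)
    (e12 : Γ.Adj v1 v2) (e13 : Γ.Adj v1 v3) (e14 : Γ.Adj v1 v4) (e23 : Γ.Adj v2 v3)
    (e24 : Γ.Adj v2 v4) (e34 : Γ.Adj v3 v4) : False := by
  obtain ⟨A, m, hA, hm, hs⟩ := hL
  have key : 2 * (m v1 v2 v4 - m v0 v2 v4 - m v2 v1 v4 + m v0 v1 v4 - m v0 v1 v2 + m v4 v1 v2) = 0 := by
    linear_combination - hs _ _ _ _ ⟨e01, e23, n02, n03, n12, n13⟩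
      + hs _ _ _ _ ⟨e01, e24, n02, n04, n12, n14⟩
      - hs _ _ _ _ ⟨e01, e34, n03, n04, n13, n14⟩
      + hs _ _ _ _ ⟨e02, e13, n01, n03, n12.symm, n23⟩
      - hs _ _ _ _ ⟨e02, e14, n01, n04, n12.symm, n24⟩
      + hs _ _ _ _ ⟨e02, e34, n03, n04, n23, n24⟩
      + hs _ _ _ _ ⟨e03, e12, n01, n02, n13.symm, n23.symm⟩
      - hs _ _ _ _ ⟨e03, e14, n01, n04, n13.symm, n34⟩
      + hs _ _ _ _ ⟨e03, e24, n02, n04, n23.symm, n34⟩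
      + hs _ _ _ _ ⟨e04, e12, n01, n02, n14.symm, n24.symm⟩
      - hs _ _ _ _ ⟨e04, e13, n01, n03, n14.symm, n34.symm⟩
      + hs _ _ _ _ ⟨e04, e23, n02, n03, n24.symm, n34.symm⟩
      - hs _ _ _ _ ⟨e12, e34, n13, n14, n23, n24⟩
      - hs _ _ _ _ ⟨e13, e24, n12, n14, n23.symm, n34⟩
      - hs _ _ _ _ ⟨e14, e23, n12, n13, n24.symm, n34.symm⟩
  obtain ⟨j01, hj01⟩ := hA _ _ n01
  obtain ⟨j02, hj02⟩ := hA _ _ n02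
  obtain ⟨j04, hj04⟩ := hA _ _ n04
  obtain ⟨j12, hj12⟩ := hA _ _ n12
  obtain ⟨j14, hj14⟩ := hA _ _ n14
  obtain ⟨j24, hj24⟩ := hA _ _ n24
  obtain ⟨k124, hk124⟩ := (hm _ _ _ ⟨e24, n12, n14⟩).2
  obtain ⟨k024, hk024⟩ := (hm _ _ _ ⟨e24, n02, n04⟩).2
  obtain ⟨k214, hk214⟩ := (hm _ _ _ ⟨e14, n12.symm, n24⟩).2
  obtain ⟨k014, hk014⟩ := (hm _ _ _ ⟨e14, n01, n04⟩).2
  obtain ⟨k012, hk012⟩ := (hm _ _ _ ⟨e12, n01, n02⟩).2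
  obtain ⟨k412, hk412⟩ := (hm _ _ _ ⟨e12, n14.symm, n24.symm⟩).2
  clear hA hm hs
  omega

end Kuratowski

/-! ### Straight-line drawings -/

section Draw
variable {V : Type} [Fintype V] [DecidableEq V] {Γ : SimpleGraph V}

/-- A straight-line drawing of the graph in the plane: vertices are distinct, no vertex lies on an
edge not containing it, and disjoint edges are drawn disjointly. -/
structure IsDrawing (Γ : SimpleGraph V) (p : V → ℝ × ℝ) : Prop where
  inj : Function.Injective p
  cell : ∀ c a b, Cell Γ c a b → p c ∉ segment ℝ (p a) (p b)
  sq : ∀ a b c d, DE Γ a b c d → Disjoint (segment ℝ (p a) (p b)) (segment ℝ (p c) (p d))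

/-- The determinant of two plane vectors. -/
def crs (u v : ℝ × ℝ) : ℝ := u.1 * v.2 - u.2 * v.1

theorem IsDrawing.mono {Γ' : SimpleGraph V} {p : V → ℝ × ℝ} (h : IsDrawing Γ' p) (hle : Γ ≤ Γ') :
    IsDrawing Γ p :=
  ⟨h.inj, fun c a b ⟨h1, h2⟩ => h.cell c a b ⟨hle h1, h2⟩,
    fun a b c d ⟨h1, h2, h3⟩ => h.sq a b c d ⟨hle h1, hle h2, h3⟩⟩

/-- Two edges with exactly one common vertex meet only there. -/
theorem IsDrawing.meet {p : V → ℝ × ℝ} (h : IsDrawing Γ p) {a b c : V} (hab : Γ.Adj a b)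
    (hac : Γ.Adj a c) (hbc : b ≠ c) {s t : ℝ} (hs : 0 ≤ s) (hs' : s ≤ 1) (ht : 0 ≤ t) (ht' : t ≤ 1)
    (he : (1 - s) • p a + s • p b = (1 - t) • p a + t • p c) : s = 0 ∧ t = 0 := by
  have he' : s • (p b - p a) = t • (p c - p a) := by
    have e1 := congrArg Prod.fst he
    have e2 := congrArg Prod.snd he
    simp only [Prod.fst_add, Prod.snd_add, Prod.smul_fst, Prod.smul_snd, smul_eq_mul] at e1 e2
    apply Prod.ext <;>
    simp only [Prod.fst_sub, Prod.snd_sub, Prod.smul_fst, Prod.smul_snd, smul_eq_mul] <;> linarith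
  have key : ∀ {b c : V} {s t : ℝ}, Γ.Adj a c → Γ.Adj a b → b ≠ c → 0 ≤ s → 0 ≤ t → s ≤ t →
      s • (p b - p a) = t • (p c - p a) → t = 0 := by
    intro b c s t hac hab hbc hs ht hst he
    by_contra hne
    have htp : 0 < t := lt_of_le_of_ne ht (Ne.symm hne)
    refine h.cell c a b ⟨hab, hac.ne', hbc.symm⟩ ⟨1 - s / t, s / t, ?_, by positivity, by ring, ?_⟩
    · have : s / t ≤ 1 := (div_le_one htp).2 hst
      linarith
    · have e1 := congrArg Prod.fst he
      have e2 := congrArg Prod.snd he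
      simp only [Prod.fst_sub, Prod.snd_sub, Prod.smul_fst, Prod.smul_snd, smul_eq_mul] at e1 e2
      apply Prod.ext <;>
      simp only [Prod.fst_add, Prod.snd_add, Prod.smul_fst, Prod.smul_snd, smul_eq_mul] <;>
      field_simp <;> linarith
  rcases le_total s t with hst | hst
  · have := key hac hab hbc hs ht hst he'
    exact ⟨by linarith, this⟩
  · have := key hab hac hbc.symm ht hs hst he'.symm
    exact ⟨this, by linarith⟩

theorem mem_seg {x y z : ℝ × ℝ} : z ∈ segment ℝ x y ↔ ∃ s : ℝ, 0 ≤ s ∧ s ≤ 1 ∧ (1 - s) • x + s • y = z := by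
  constructor
  · rintro ⟨u, v, hu, hv, huv, rfl⟩
    exact ⟨v, hv, by linarith, by rw [show 1 - v = u by linarith]⟩
  · rintro ⟨s, h0, h1, rfl⟩
    exact ⟨1 - s, s, by linarith, h0, by ring, rfl⟩

/-- A straight-line drawing extends linearly over the edges to an injective continuous map of a
compact space. -/
theorem IsDrawing.embedding {p : V → ℝ × ℝ} (h : IsDrawing Γ p) :
    ∃ f : realization Γ → ℝ × ℝ, Topology.IsEmbedding f := by
  let g : (V → ℝ) → ℝ × ℝ := fun x => ∑ v, x v • p v
  have hg : Continuous g := by fun_prop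
  have hcomp : IsCompact (realization Γ) := by
    unfold realization
    refine isCompact_iUnion fun u => isCompact_iUnion fun v => isCompact_iUnion fun _ => ?_
    rw [segment_eq_image]
    exact isCompact_Icc.image (by fun_prop)
  haveI : CompactSpace (realization Γ) := isCompact_iff_compactSpace.1 hcomp
  refine ⟨fun x => g x, (Continuous.isClosedEmbedding (by fun_prop) ?_).isEmbedding⟩
  have hval : ∀ x : V → ℝ, ∀ a b, a ≠ b → x a + x b = 1 → (∀ w, w ≠ a → w ≠ b → x w = 0) →
      g x = (1 - x b) • p a + x b • p b := by
    intro x a b hab h1 h2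
    have : g x = ∑ v ∈ {a, b}, x v • p v := by
      symm
      apply Finset.sum_subset (Finset.subset_univ _)
      intro w _ hw
      simp only [Finset.mem_insert, Finset.mem_singleton, not_or] at hw
      rw [h2 w hw.1 hw.2, zero_smul]
    rw [this, Finset.sum_pair hab, show 1 - x b = x a by linarith]
  have hext : ∀ x y : V → ℝ, ∀ a b : V, (∀ w, w ≠ a → w ≠ b → x w = 0) →
      (∀ w, w ≠ a → w ≠ b → y w = 0) → x a = y a → x b = y b → x = y := by
    intro x y a b h1 h2 h3 h4
    funext w
    by_cases ha : w = a
    · rw [ha, h3]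
    · by_cases hb : w = b
      · rw [hb, h4]
      · rw [h1 w ha hb, h2 w ha hb]
  rintro ⟨x, hx⟩ ⟨y, hy⟩ hxy
  apply Subtype.ext
  change x = y
  change g x = g y at hxy
  obtain ⟨a, b, hab, xa, xb, xs, x0⟩ := (mem_realization_iff x).1 hx
  obtain ⟨c, d, hcd, yc, yd, ys, y0⟩ := (mem_realization_iff y).1 hy
  -- edges with exactly one common vertex
  have key1 : ∀ {a b c : V}, Γ.Adj a b → Γ.Adj a c → b ≠ c → 0 ≤ x a → 0 ≤ x b → x a + x b = 1 →
      (∀ w, w ≠ a → w ≠ b → x w = 0) → 0 ≤ y a → 0 ≤ y c → y a + y c = 1 →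
      (∀ w, w ≠ a → w ≠ c → y w = 0) → x = y := by
    intro a b c hab hac hbc xa xb xs x0 ya yc ys y0
    rw [hval x a b hab.ne xs x0, hval y a c hac.ne ys y0] at hxy
    obtain ⟨e1, e2⟩ := h.meet hab hac hbc xb (by linarith) yc (by linarith) hxy
    funext w
    by_cases ha : w = a
    · rw [ha]; linarith
    · have : x w = 0 := by
        by_cases hb : w = b
        · rw [hb, e1]
        · exact x0 w ha hb
      rw [this]
      by_cases hc : w = c
      · rw [hc, e2]
      · exact (y0 w ha hc).symm
  have key2 : ∀ {a b : V}, Γ.Adj a b → 0 ≤ x a → 0 ≤ x b → x a + x b = 1 →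
      (∀ w, w ≠ a → w ≠ b → x w = 0) → 0 ≤ y a → 0 ≤ y b → y a + y b = 1 →
      (∀ w, w ≠ a → w ≠ b → y w = 0) → x = y := by
    intro a b hab xa xb xs x0 ya yb ys y0
    rw [hval x a b hab.ne xs x0, hval y a b hab.ne ys y0] at hxy
    have e : (x b - y b) • (p b - p a) = 0 := by
      have : (x b - y b) • (p b - p a) =
        ((1 - x b) • p a + x b • p b) - ((1 - y b) • p a + y b • p b) := by module
      rw [this, hxy, sub_self]
    have e : x b - y b = 0 := (smul_eq_zero.1 e).resolve_right
      (sub_ne_zero.2 fun e => hab.ne (h.inj e.symm))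
    exact hext x y a b x0 y0 (by linarith) (by linarith)
  have sw : ∀ {z : V → ℝ} {a b : V}, (∀ w, w ≠ a → w ≠ b → z w = 0) → (∀ w, w ≠ b → w ≠ a → z w = 0) :=
    fun hz w h1 h2 => hz w h2 h1
  by_cases h1 : a = c
  · subst h1
    by_cases h2 : b = d
    · subst h2
      exact key2 hab xa xb xs x0 yc yd ys y0
    · exact key1 hab hcd h2 xa xb xs x0 yc yd ys y0
  by_cases h2 : a = d
  · subst h2
    by_cases h3 : b = c
    · subst h3
      exact key2 hab xa xb xs x0 yd yc (by linarith) (sw y0)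
    · exact key1 hab hcd.symm h3 xa xb xs x0 yd yc (by linarith) (sw y0)
  by_cases h3 : b = c
  · subst h3
    exact key1 hab.symm hcd h2 xb xa (by linarith) (sw x0) yc yd ys y0
  by_cases h4 : b = d
  · subst h4
    exact key1 hab.symm hcd.symm h1 xb xa (by linarith) (sw x0) yd yc (by linarith) (sw y0)
  exfalso
  have hdis := Set.disjoint_left.1 (h.sq a b c d ⟨hab, hcd, h1, h2, h3, h4⟩)
  refine hdis (?_ : g x ∈ _) ?_
  · rw [hval x a b hab.ne xs x0]
    exact mem_seg.2 ⟨x b, xb, by linarith, rfl⟩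
  · rw [hxy, hval y c d hcd.ne ys y0]
    exact mem_seg.2 ⟨y d, yd, by linarith, rfl⟩

/-! ### Adding a vertex to a drawing -/

theorem eventually_seg {q M : ℝ × ℝ} {K : Set (ℝ × ℝ)} (hK : IsClosed K)
    (hd : Disjoint (segment ℝ q M) K) : ∀ᶠ z in nhds M, Disjoint (segment ℝ q z) K := by
  have : ∀ᶠ z in nhds M, ∀ s ∈ Set.Icc (0 : ℝ) 1, (1 - s) • q + s • z ∈ Kᶜ := by
    apply isCompact_Icc.eventually_forall_of_forall_eventually
    intro s hs
    have hc : Continuous (fun w : (ℝ × ℝ) × ℝ => (1 - w.2) • q + w.2 • w.1) := by fun_prop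
    exact hc.continuousAt.eventually (hK.isOpen_compl.mem_nhds
      (Set.disjoint_left.1 hd (mem_seg.2 ⟨s, hs.1, hs.2, rfl⟩)))
  filter_upwards [this] with z hz
  rw [Set.disjoint_left]
  intro y hy
  obtain ⟨s, h0, h1, rfl⟩ := mem_seg.1 hy
  exact hz s ⟨h0, h1⟩

theorem isClosed_seg (x y : ℝ × ℝ) : IsClosed (segment ℝ x y) := by
  rw [segment_eq_image]
  exact (isCompact_Icc.image (by fun_prop)).isClosed

/-- A direction not parallel to any line through two vertices. -/
theorem exists_direction {p : V → ℝ × ℝ} (hp : Function.Injective p) :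
    ∃ u : ℝ × ℝ, u ≠ 0 ∧ ∀ a b, a ≠ b → crs u (p b - p a) ≠ 0 := by
  let B : Set ℝ := Set.range fun w : V × V => (p w.2 - p w.1).2 / (p w.2 - p w.1).1
  obtain ⟨s, hs⟩ := (Set.finite_range _ : B.Finite).infinite_compl.nonempty
  refine ⟨(1, s), fun h => one_ne_zero (congrArg Prod.fst h), fun a b hab h => ?_⟩
  simp only [crs, one_mul] at h
  by_cases h0 : (p b - p a).1 = 0
  · rw [h0, mul_zero, sub_zero] at h
    exact hab (hp (sub_eq_zero.1 (Prod.ext h0 h : p b - p a = 0)).symm)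
  · exact hs ⟨(a, b), by rw [div_eq_iff h0]; linarith⟩

/-- A new vertex joined to the two ends of an edge (or to one vertex) can be added to a drawing. -/
theorem IsDrawing.add {p : V → ℝ × ℝ} (h : IsDrawing Γ p) {z a b : V} (hz : ∀ w, ¬ Γ.Adj z w)
    (hza : z ≠ a) (hzb : z ≠ b) (hab : a = b ∨ Γ.Adj a b) {Γ' : SimpleGraph V}
    (hΓ : ∀ x y, Γ'.Adj x y → x ≠ z → y ≠ z → Γ.Adj x y)
    (hΓz : ∀ y, Γ'.Adj z y → y = a ∨ y = b) : ∃ p', IsDrawing Γ' p' := by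
  obtain ⟨u, hu0, hu⟩ := exists_direction h.inj
  set M : ℝ × ℝ := (1 - (1/2 : ℝ)) • p a + (1/2 : ℝ) • p b with hM
  have hM' : M = (1 - (1/2 : ℝ)) • p b + (1/2 : ℝ) • p a := by rw [hM]; module
  -- the half edges avoid what they should
  have half : ∀ {a b : V}, a = b ∨ Γ.Adj a b → z ≠ a → z ≠ b →
      M = (1 - (1/2 : ℝ)) • p a + (1/2 : ℝ) • p b →
      (∀ w, w ≠ a → w ≠ z → p w ∉ segment ℝ (p a) M) ∧
      ∀ c d, Γ.Adj c d → a ≠ c → a ≠ d → Disjoint (segment ℝ (p a) M) (segment ℝ (p c) (p d)) := by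
    intro a b hab hza hzb hM
    rcases hab with rfl | hab
    · have : M = p a := by rw [hM]; module
      rw [this, segment_same]
      refine ⟨fun w hw _ hm => hw (h.inj hm), fun c d hcd hc hd => ?_⟩
      rw [Set.disjoint_singleton_left]
      exact h.cell a c d ⟨hcd, hc, hd⟩
    · have hsub : ∀ y ∈ segment ℝ (p a) M, ∃ s : ℝ, 0 ≤ s ∧ s ≤ 1/2 ∧ (1 - s) • p a + s • p b = y := by
        intro y hy
        obtain ⟨s, h0, h1, rfl⟩ := mem_seg.1 hy
        exact ⟨s / 2, by linarith, by linarith, by rw [hM]; module⟩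
      have hnb : p b ∉ segment ℝ (p a) M := by
        intro hm
        obtain ⟨s, h0, h1, e⟩ := hsub _ hm
        have : (1 - s) • (p b - p a) = 0 := by
          have : (1 - s) • (p b - p a) = p b - ((1 - s) • p a + s • p b) := by module
          rw [this, e, sub_self]
        have := (smul_eq_zero.1 this).resolve_right (sub_ne_zero.2 fun e => hab.ne (h.inj e.symm))
        linarith
      have meet' : ∀ d, Γ.Adj b d → a ≠ d → Disjoint (segment ℝ (p a) M) (segment ℝ (p b) (p d)) := by
        intro d hbd had
        rw [Set.disjoint_left]
        intro y hy hy'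
        obtain ⟨s, h0, h1, rfl⟩ := hsub _ hy
        obtain ⟨t, t0, t1, e⟩ := mem_seg.1 hy'
        have := (h.meet hab.symm hbd had (s := 1 - s) (t := t) (by linarith) (by linarith) t0 t1
          (by rw [e]; module)).1
        linarith
      refine ⟨fun w hw hwz hm => ?_, fun c d hcd hc hd => ?_⟩
      · by_cases hwb : w = b
        · subst hwb; exact hnb hm
        · obtain ⟨s, h0, h1, e⟩ := hsub _ hm
          exact h.cell w a b ⟨hab, hw, hwb⟩ (mem_seg.2 ⟨s, h0, by linarith, e⟩)
      · by_cases hbc : b = c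
        · subst hbc; exact meet' d hcd hd
        by_cases hbd : b = d
        · subst hbd; rw [segment_symm ℝ (p c)]; exact meet' c hcd.symm hc
        rw [Set.disjoint_left]
        intro y hy
        obtain ⟨s, h0, h1, e⟩ := hsub _ hy
        exact Set.disjoint_left.1 (h.sq a b c d ⟨hab, hcd, hc, hd, hbc, hbd⟩)
          (mem_seg.2 ⟨s, h0, by linarith, e⟩)
  obtain ⟨a1, a2⟩ := half hab hza hzb hM
  obtain ⟨b1, b2⟩ := half (hab.imp Eq.symm SimpleGraph.Adj.symm) hzb hza hM'
  have hlim : Filter.Tendsto (fun t : ℝ => M + t • u) (nhdsWithin 0 (Set.Ioi 0)) (nhds M) := by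
    have : Continuous (fun t : ℝ => M + t • u) := by fun_prop
    have := this.tendsto 0
    simp only [zero_smul, add_zero] at this
    exact this.mono_left nhdsWithin_le_nhds
  have hev : ∀ᶠ t : ℝ in nhdsWithin 0 (Set.Ioi 0), 0 < t ∧ (∀ w, p w ≠ M → p w ≠ M + t • u) ∧
      (∀ c d, M ∉ segment ℝ (p c) (p d) → M + t • u ∉ segment ℝ (p c) (p d)) ∧
      (∀ w, w ≠ a → w ≠ z → p w ∉ segment ℝ (p a) (M + t • u)) ∧
      (∀ w, w ≠ b → w ≠ z → p w ∉ segment ℝ (p b) (M + t • u)) ∧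
      (∀ c d, Γ.Adj c d → a ≠ c → a ≠ d →
        Disjoint (segment ℝ (p a) (M + t • u)) (segment ℝ (p c) (p d))) ∧
      (∀ c d, Γ.Adj c d → b ≠ c → b ≠ d →
        Disjoint (segment ℝ (p b) (M + t • u)) (segment ℝ (p c) (p d))) := by
    simp only [Filter.eventually_and, Filter.eventually_all]
    have sing : ∀ {q y : ℝ × ℝ}, y ∉ segment ℝ q M →
        ∀ᶠ t : ℝ in nhdsWithin 0 (Set.Ioi 0), y ∉ segment ℝ q (M + t • u) := by
      intro q y hy
      filter_upwards [hlim.eventually (eventually_seg (isClosed_singleton (x := y))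
        (Set.disjoint_singleton_right.2 hy))] with t ht
      exact Set.disjoint_singleton_right.1 ht
    refine ⟨self_mem_nhdsWithin, fun w hw => ?_, fun c d hcd => ?_, fun w h1 h2 => sing (a1 w h1 h2),
      fun w h1 h2 => sing (b1 w h1 h2), fun c d h1 h2 h3 => ?_, fun c d h1 h2 h3 => ?_⟩
    · filter_upwards [hlim.eventually (isOpen_ne.mem_nhds hw.symm)] with t ht
      exact Ne.symm ht
    · exact hlim.eventually ((isClosed_seg _ _).isOpen_compl.mem_nhds hcd)
    · exact hlim.eventually (eventually_seg (isClosed_seg _ _) (a2 c d h1 h2 h3))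
    · exact hlim.eventually (eventually_seg (isClosed_seg _ _) (b2 c d h1 h2 h3))
  obtain ⟨t, t0, q1, q2, qa1, qb1, qa2, qb2⟩ := hev.exists
  set Z := M + t • u with hZ
  have r1 : ∀ w, p w ≠ Z := by
    intro w
    by_cases hw : p w = M
    · intro e
      rw [hw, hZ] at e
      have : t • u = 0 := by simpa using e
      exact hu0 ((smul_eq_zero.1 this).resolve_left t0.ne')
    · exact q1 w hw
  have r2 : ∀ c d, Γ.Adj c d → Z ∉ segment ℝ (p c) (p d) := by
    intro c d hcd hm
    by_cases hMm : M ∈ segment ℝ (p c) (p d)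
    · obtain ⟨s, -, -, e⟩ := mem_seg.1 hMm
      obtain ⟨s', -, -, e'⟩ := mem_seg.1 hm
      have e3 : t • u = (s' - s) • (p d - p c) := by
        have : t • u = Z - M := by rw [hZ]; module
        rw [this, ← e, ← e']; module
      have e1 := congrArg Prod.fst e3
      have e2 := congrArg Prod.snd e3
      simp only [Prod.smul_fst, Prod.smul_snd, smul_eq_mul] at e1 e2
      have : t * crs u (p d - p c) = 0 := by
        rw [crs]; linear_combination (p d - p c).2 * e1 - (p d - p c).1 * e2
      exact hu c d hcd.ne ((mul_eq_zero.1 this).resolve_left t0.ne')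
    · exact q2 c d hMm hm
  have qz1 : ∀ y, y = a ∨ y = b → ∀ w, w ≠ y → w ≠ z → p w ∉ segment ℝ (p y) Z := by
    rintro y (rfl | rfl); exacts [qa1, qb1]
  have qz2 : ∀ y, y = a ∨ y = b → ∀ c d, Γ.Adj c d → y ≠ c → y ≠ d →
      Disjoint (segment ℝ (p y) Z) (segment ℝ (p c) (p d)) := by
    rintro y (rfl | rfl); exacts [qa2, qb2]
  have uz : Function.update p z Z z = Z := Function.update_self _ _ _
  have un : ∀ {w}, w ≠ z → Function.update p z Z w = p w := fun hw => Function.update_of_ne hw _ _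
  refine ⟨Function.update p z Z, ?_, ?_, ?_⟩
  · intro x y hxy
    by_cases hx : x = z
    · by_cases hy : y = z
      · rw [hx, hy]
      · rw [hx, uz, un hy] at hxy; exact (r1 y hxy.symm).elim
    · by_cases hy : y = z
      · rw [hy, uz, un hx] at hxy; exact (r1 x hxy).elim
      · rw [un hx, un hy] at hxy; exact h.inj hxy
  · rintro c x y ⟨hxy, hc, hc'⟩
    by_cases hx : x = z
    · subst hx
      rw [uz, un hc, un hxy.ne', segment_symm]
      exact qz1 y (hΓz y hxy) c hc' hc
    by_cases hy : y = z
    · subst hy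
      rw [uz, un hc', un hx]
      exact qz1 x (hΓz x hxy.symm) c hc hc'
    by_cases hcz : c = z
    · subst hcz
      rw [uz, un hx, un hy]
      exact r2 x y (hΓ x y hxy hx hy)
    rw [un hx, un hy, un hcz]
    exact h.cell c x y ⟨hΓ x y hxy hx hy, hc, hc'⟩
  · rintro x y c d ⟨hxy, hcd, n1, n2, n3, n4⟩
    by_cases hx : x = z
    · subst hx
      rw [uz, un n1.symm, un n2.symm, un hxy.ne', segment_symm]
      exact qz2 y (hΓz y hxy) c d (hΓ _ _ hcd n1.symm n2.symm) n3 n4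
    by_cases hy : y = z
    · subst hy
      rw [uz, un n3.symm, un n4.symm, un hx]
      exact qz2 x (hΓz x hxy.symm) c d (hΓ _ _ hcd n3.symm n4.symm) n1 n2
    by_cases hc : c = z
    · subst hc
      rw [uz, un hx, un hy, un hcd.ne', segment_symm ℝ Z]
      exact (qz2 d (hΓz d hcd) x y (hΓ _ _ hxy hx hy) n2.symm n4.symm).symm
    by_cases hd : d = z
    · subst hd
      rw [uz, un hx, un hy, un hc]
      exact (qz2 c (hΓz c hcd.symm) x y (hΓ _ _ hxy hx hy) n1.symm n3.symm).symm
    rw [un hx, un hy, un hc, un hd]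
    exact h.sq x y c d ⟨hΓ _ _ hxy hx hy, hΓ _ _ hcd hc hd, n1, n2, n3, n4⟩

/-! ### Drawings on a parabola -/

theorem parabola_convex {q : ℝ × ℝ} {x y : ℝ} (h : q ∈ segment ℝ ((x, x ^ 2) : ℝ × ℝ) (y, y ^ 2)) :
    q.1 ^ 2 ≤ q.2 ∧ (q.2 = q.1 ^ 2 → q = (x, x ^ 2) ∨ q = (y, y ^ 2)) := by
  obtain ⟨s, h0, h1, rfl⟩ := mem_seg.1 h
  simp only [Prod.smul_mk, Prod.mk_add_mk, smul_eq_mul]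
  have key : ((1 - s) * x ^ 2 + s * y ^ 2) - ((1 - s) * x + s * y) ^ 2 = s * (1 - s) * (x - y) ^ 2 := by
    ring
  refine ⟨?_, fun e => ?_⟩
  · have : 0 ≤ s * (1 - s) * (x - y) ^ 2 := by
      have : 0 ≤ 1 - s := by linarith
      positivity
    linarith
  · have : s * (1 - s) * (x - y) ^ 2 = 0 := by linarith
    rcases mul_eq_zero.1 this with h | h
    · rcases mul_eq_zero.1 h with h | h
      · left; rw [h]; simp
      · right; rw [show s = 1 by linarith]; simp
    · left
      have : y = x := by
        have := pow_eq_zero_iff (two_ne_zero) |>.1 h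
        linarith
      rw [this]; ext <;> simp <;> ring

/-- A graph is drawn by placing all vertices but the apex `v` on a parabola, in the order
given by `h`, provided that the chords do not cross; the apex is placed far below. -/
theorem exists_parabola_drawing (v : V) (h : V → ℤ) (hinj : Function.Injective h)
    (hcr : ∀ a b c d, DE Γ a b c d → a ≠ v → b ≠ v → c ≠ v → d ≠ v →
      0 < ((h c - h a) * (h c - h b)) * ((h d - h a) * (h d - h b))) : ∃ p, IsDrawing Γ p := by
  obtain ⟨M, hM, hM0⟩ : ∃ M : ℝ, (∀ w, (h w : ℝ) ^ 2 < M) ∧ 0 < M := by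
    refine ⟨∑ w, (h w : ℝ) ^ 2 + 1, fun w => ?_, ?_⟩
    · have := Finset.single_le_sum (f := fun w => (h w : ℝ) ^ 2) (fun i _ => by positivity)
        (Finset.mem_univ w)
      linarith
    · have : 0 ≤ ∑ w, (h w : ℝ) ^ 2 := Finset.sum_nonneg fun i _ => by positivity
      linarith
  let P : V → ℝ × ℝ := fun w => ((h w : ℝ), (h w : ℝ) ^ 2)
  have hP : Function.Injective P := fun x y e => hinj (by
    have h1 : (h x : ℝ) = h y := congrArg Prod.fst e
    exact_mod_cast h1)
  let p : V → ℝ × ℝ := Function.update P v (0, -M)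
  have pv : p v = (0, -M) := Function.update_self _ _ _
  have pn : ∀ {w}, w ≠ v → p w = P w := fun hw => Function.update_of_ne hw _ _
  -- edges at the apex lie below the parabola except for the far end
  have apex : ∀ (w : V) (q : ℝ × ℝ), q ∈ segment ℝ ((0, -M) : ℝ × ℝ) (P w) → q.1 ^ 2 ≤ q.2 → q = P w := by
    intro w q hq hle
    obtain ⟨s, h0, h1, rfl⟩ := mem_seg.1 hq
    simp only [P, Prod.smul_mk, Prod.mk_add_mk, smul_eq_mul] at hle ⊢
    have hw := hM w
    have key : (1 - s) * (s * (h w : ℝ) ^ 2 - M) =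
      ((1 - s) * -M + s * (h w : ℝ) ^ 2) - ((1 - s) * 0 + s * (h w : ℝ)) ^ 2 := by ring
    have hneg : s * (h w : ℝ) ^ 2 - M < 0 := by nlinarith [sq_nonneg (h w : ℝ)]
    have : 1 - s ≤ 0 := by
      by_contra hcon
      push Not at hcon
      have := mul_neg_of_pos_of_neg hcon hneg
      linarith
    rw [show s = 1 by linarith]
    simp
  have chord : ∀ {c a b : V}, c ≠ a → c ≠ b → P c ∉ segment ℝ (P a) (P b) := by
    intro c a b hca hcb hm
    rcases (parabola_convex hm).2 rfl with e | e
    · exact hca (hP e)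
    · exact hcb (hP e)
  have apd : ∀ {w c d : V}, w ≠ c → w ≠ d →
      Disjoint (segment ℝ ((0, -M) : ℝ × ℝ) (P w)) (segment ℝ (P c) (P d)) := by
    intro w c d hc hd
    rw [Set.disjoint_left]
    intro q hq hq'
    have := apex w q hq (parabola_convex hq').1
    rw [this] at hq'
    exact chord hc hd hq'
  have apn : ∀ {q : ℝ × ℝ}, q.1 ^ 2 ≤ q.2 → q ≠ (0, -M) := by
    rintro q hq rfl
    simp at hq
    linarith
  refine ⟨p, ?_, ?_, ?_⟩
  · intro x y hxy
    by_cases hx : x = v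
    · by_cases hy : y = v
      · rw [hx, hy]
      · rw [hx, pv, pn hy] at hxy; exact (apn le_rfl hxy.symm).elim
    · by_cases hy : y = v
      · rw [hy, pv, pn hx] at hxy; exact (apn le_rfl hxy).elim
      · rw [pn hx, pn hy] at hxy; exact hP hxy
  · rintro c a b ⟨hab, hca, hcb⟩ hm
    by_cases ha : a = v
    · subst ha
      rw [pv, pn hca, pn hab.ne'] at hm
      exact hcb (hP (apex b _ hm le_rfl))
    by_cases hb : b = v
    · subst hb
      rw [pv, pn hcb, pn ha, segment_symm] at hm
      exact hca (hP (apex a _ hm le_rfl))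
    by_cases hc : c = v
    · subst hc
      rw [pv, pn ha, pn hb] at hm
      exact apn (parabola_convex hm).1 rfl
    rw [pn ha, pn hb, pn hc] at hm
    exact chord hca hcb hm
  · rintro a b c d hde
    obtain ⟨hab, hcd, n1, n2, n3, n4⟩ := id hde
    by_cases ha : a = v
    · subst ha
      rw [pv, pn hab.ne', pn n1.symm, pn n2.symm]
      exact apd n3 n4
    by_cases hb : b = v
    · subst hb
      rw [pv, pn ha, pn n3.symm, pn n4.symm, segment_symm]
      exact apd n1 n2
    by_cases hc : c = v
    · subst hc
      rw [pv, pn ha, pn hb, pn hcd.ne']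
      exact (apd n2.symm n4.symm).symm
    by_cases hd : d = v
    · subst hd
      rw [pv, pn ha, pn hb, pn hc, segment_symm ℝ (P c)]
      exact (apd n1.symm n3.symm).symm
    rw [pn ha, pn hb, pn hc, pn hd, Set.disjoint_left]
    intro q hq hq'
    have hpos := hcr a b c d hde ha hb hc hd
    have hpos : (0 : ℝ) < (((h c : ℝ) - h a) * (h c - h b)) * ((h d - h a) * (h d - h b)) := by
      exact_mod_cast hpos
    obtain ⟨s, s0, s1, rfl⟩ := mem_seg.1 hq
    obtain ⟨t, t0, t1, e⟩ := mem_seg.1 hq'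
    have e1 := congrArg Prod.fst e
    have e2 := congrArg Prod.snd e
    simp only [P, Prod.smul_mk, Prod.mk_add_mk, smul_eq_mul] at e1 e2
    set X := ((h c : ℝ) - h a) * (h c - h b)
    set Y := ((h d : ℝ) - h a) * (h d - h b)
    -- the affine function vanishing on the chord `a b`, evaluated at the common point
    have key : (1 - t) * X + t * Y = 0 := by
      simp only [X, Y]; linear_combination e2 - ((h a : ℝ) + h b) * e1
    rcases pos_and_pos_or_neg_and_neg_of_mul_pos hpos with ⟨hX, hY⟩ | ⟨hX, hY⟩
    · have h1 := mul_nonneg (sub_nonneg.2 t1) hX.le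
      rcases eq_or_lt_of_le t0 with h0 | h0
      · rw [← h0] at key; linarith
      · have := mul_pos h0 hY; linarith
    · have h1 := mul_nonneg (sub_nonneg.2 t1) (neg_pos.2 hX).le
      rcases eq_or_lt_of_le t0 with h0 | h0
      · rw [← h0] at key; linarith
      · have := mul_pos h0 (neg_pos.2 hY); linarith

end Draw

/-! ### Cycles, linked sets and paths -/

section PathSec
variable {V : Type} [Fintype V] [DecidableEq V] {Γ : SimpleGraph V}

/-- The set of vertices `U` contains a cycle, in the form of a nonempty set of minimal degree at
least two. -/
def HasC (Γ : SimpleGraph V) (U : Set V) : Prop :=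
  ∃ W : Finset V, (∀ v ∈ W, v ∈ U) ∧ Cyc Γ W

theorem HasC.mono {U U' : Set V} (h : HasC Γ U) (hU : ∀ v ∈ U, v ∈ U') : HasC Γ U' := by
  obtain ⟨W, hW, hc⟩ := h
  exact ⟨W, fun v hv => hU v (hW v hv), hc⟩

theorem NoDC.elim (h : NoDC Γ) {U U' : Set V} (h1 : HasC Γ U) (h2 : HasC Γ U')
    (hd : ∀ v ∈ U, v ∈ U' → False) : False := by
  obtain ⟨W, hW, hc⟩ := h1
  obtain ⟨W', hW', hc'⟩ := h2
  exact h W W' hc hc' (Finset.disjoint_left.2 fun v hv hv' => hd v (hW v hv) (hW' v hv'))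

/-- The vertices `u` and `v` are joined inside `U`: some subset of `U` containing both has all
degrees at least two after adding an extra edge at `u` and an extra edge at `v`. This is what is
needed of a path from `u` to `v` inside `U` in order to close it up to a cycle. -/
def Joined (Γ : SimpleGraph V) (U : Set V) (u v : V) : Prop :=
  ∃ s : Finset V, (∀ w ∈ s, w ∈ U) ∧ u ∈ s ∧ v ∈ s ∧
    (u ≠ v → (∃ x ∈ s, Γ.Adj u x) ∧ ∃ x ∈ s, Γ.Adj v x) ∧
    ∀ w ∈ s, w ≠ u → w ≠ v → ∃ x ∈ s, ∃ y ∈ s, x ≠ y ∧ Γ.Adj w x ∧ Γ.Adj w y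

theorem Joined.mono {U U' : Set V} {u v : V} (h : Joined Γ U u v) (hU : ∀ v ∈ U, v ∈ U') :
    Joined Γ U' u v := by
  obtain ⟨W, hW, hc⟩ := h
  exact ⟨W, fun v hv => hU v (hW v hv), hc⟩

theorem Joined.refl (u : V) : Joined Γ {u} u u := ⟨{u}, by simp⟩

theorem Joined.symm {U : Set V} {u v : V} (h : Joined Γ U u v) : Joined Γ U v u := by
  obtain ⟨W, hW, h1, h2, h3, h4⟩ := h
  exact ⟨W, hW, h2, h1, fun h => (h3 h.symm).symm, fun w hw a b => h4 w hw b a⟩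

/-- Concatenation of disjoint paths through an edge. -/
theorem Joined.link {U U' : Set V} {u v u' v' : V} (h : Joined Γ U u v) (h' : Joined Γ U' u' v')
    (hd : ∀ v ∈ U, v ∈ U' → False) (hv : Γ.Adj v u') : Joined Γ (U ∪ U') u v' := by
  obtain ⟨s, hs, h1, h2, h3, h4⟩ := h
  obtain ⟨t, ht, h1', h2', h3', h4'⟩ := h'
  have hst : ∀ x ∈ s, x ∉ t := fun x hx hx' => hd x (hs x hx) (ht x hx')
  have hv' := hv.symm
  have inl : ∀ x ∈ s, x ∈ s ∪ t := fun x hx => Finset.mem_union_left _ hx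
  have inr : ∀ x ∈ t, x ∈ s ∪ t := fun x hx => Finset.mem_union_right _ hx
  refine ⟨s ∪ t, ?_, inl _ h1, inr _ h2', fun _ => ⟨?_, ?_⟩, ?_⟩
  · intro w hw
    rcases Finset.mem_union.1 hw with hw | hw
    exacts [Or.inl (hs w hw), Or.inr (ht w hw)]
  · by_cases e : u = v
    · exact ⟨u', inr _ h1', e ▸ hv⟩
    · obtain ⟨x, hx, hux⟩ := (h3 e).1
      exact ⟨x, inl _ hx, hux⟩
  · by_cases e : u' = v'
    · exact ⟨v, inl _ h2, e ▸ hv'⟩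
    · obtain ⟨x, hx, hux⟩ := (h3' e).2
      exact ⟨x, inr _ hx, hux⟩
  · intro w hw n1 n2
    rcases Finset.mem_union.1 hw with hw | hw
    · by_cases e : w = v
      · subst e
        obtain ⟨x, hx, hux⟩ := (h3 n1.symm).2
        exact ⟨x, inl _ hx, u', inr _ h1', fun e => hst x hx (e ▸ h1'), hux, hv⟩
      · obtain ⟨x, hx, y, hy, q⟩ := h4 w hw n1 e
        exact ⟨x, inl _ hx, y, inl _ hy, q⟩
    · by_cases e : w = u'
      · subst e
        obtain ⟨x, hx, hux⟩ := (h3' n2).1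
        exact ⟨x, inr _ hx, v, inl _ h2, fun e => hst _ h2 (e ▸ hx), hux, hv'⟩
      · obtain ⟨x, hx, y, hy, q⟩ := h4' w hw e n2
        exact ⟨x, inr _ hx, y, inr _ hy, q⟩

/-- Two disjoint joined sets close up to a cycle, unless both are single vertices. -/
theorem Joined.close {U U' : Set V} {u v u' v' : V} (h : Joined Γ U u v) (h' : Joined Γ U' u' v')
    (hd : ∀ v ∈ U, v ∈ U' → False) (hv : Γ.Adj v u') (hu : Γ.Adj u v') (hne : u ≠ v ∨ u' ≠ v') :
    HasC Γ (U ∪ U') := by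
  obtain ⟨s, hs, h1, h2, h3, h4⟩ := h
  obtain ⟨t, ht, h1', h2', h3', h4'⟩ := h'
  have hst : ∀ x ∈ s, x ∉ t := fun x hx hx' => hd x (hs x hx) (ht x hx')
  have hv' := hv.symm
  have hu' := hu.symm
  have inl : ∀ x ∈ s, x ∈ s ∪ t := fun x hx => Finset.mem_union_left _ hx
  have inr : ∀ x ∈ t, x ∈ s ∪ t := fun x hx => Finset.mem_union_right _ hx
  refine ⟨s ∪ t, ?_, ⟨u, inl _ h1⟩, ?_⟩
  · intro w hw
    rcases Finset.mem_union.1 hw with hw | hw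
    exacts [Or.inl (hs w hw), Or.inr (ht w hw)]
  · intro w hw
    rcases Finset.mem_union.1 hw with hw | hw
    · by_cases e : w = v
      · subst e
        by_cases e' : u = w
        · subst e'
          exact ⟨u', inr _ h1', v', inr _ h2', hne.resolve_left (fun h => h rfl), hv, hu⟩
        · obtain ⟨x, hx, hux⟩ := (h3 e').2
          exact ⟨x, inl _ hx, u', inr _ h1', fun e => hst x hx (e ▸ h1'), hux, hv⟩
      · by_cases e' : w = u
        · subst e'
          obtain ⟨x, hx, hux⟩ := (h3 e).1
          exact ⟨x, inl _ hx, v', inr _ h2', fun e => hst x hx (e ▸ h2'), hux, hu⟩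
        · obtain ⟨x, hx, y, hy, q⟩ := h4 w hw e' e
          exact ⟨x, inl _ hx, y, inl _ hy, q⟩
    · by_cases e : w = u'
      · subst e
        by_cases e' : w = v'
        · subst e'
          exact ⟨v, inl _ h2, u, inl _ h1, (hne.resolve_right (fun h => h rfl)).symm, hv', hu'⟩
        · obtain ⟨x, hx, hux⟩ := (h3' e').1
          exact ⟨x, inr _ hx, v, inl _ h2, fun e => hst _ h2 (e ▸ hx), hux, hv'⟩
      · by_cases e' : w = v'
        · subst e'
          obtain ⟨x, hx, hux⟩ := (h3' (Ne.symm e)).2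
          exact ⟨x, inr _ hx, u, inl _ h1, fun e => hst _ h1 (e ▸ hx), hux, hu'⟩
        · obtain ⟨x, hx, y, hy, q⟩ := h4' w hw e e'
          exact ⟨x, inr _ hx, y, inr _ hy, q⟩

/-- `p 0, …, p k` is a path. -/
structure IsP (Γ : SimpleGraph V) (p : ℕ → V) (k : ℕ) : Prop where
  inj : ∀ i j, i ≤ k → j ≤ k → p i = p j → i = j
  adj : ∀ i, i < k → Γ.Adj (p i) (p (i + 1))

/-- The vertices `p i, …, p j`. -/
def seg (p : ℕ → V) (i j : ℕ) : Set V := {v | ∃ m, i ≤ m ∧ m ≤ j ∧ p m = v}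

theorem mem_seg_iff {p : ℕ → V} {i j : ℕ} {v : V} :
    v ∈ seg p i j ↔ ∃ m, i ≤ m ∧ m ≤ j ∧ p m = v := Iff.rfl

theorem IsP.rev {p : ℕ → V} {k : ℕ} (h : IsP Γ p k) : IsP Γ (fun i => p (k - i)) k := by
  refine ⟨fun i j hi hj e => ?_, fun i hi => ?_⟩
  · have := h.inj _ _ (by omega) (by omega) e
    omega
  · have := h.adj (k - (i + 1)) (by omega)
    rw [show k - (i + 1) + 1 = k - i by omega] at this
    exact this.symm

theorem IsP.joined {p : ℕ → V} {k : ℕ} (h : IsP Γ p k) {i j : ℕ} (hij : i ≤ j) (hj : j ≤ k) :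
    Joined Γ (seg p i j) (p i) (p j) := by
  induction j, hij using Nat.le_induction with
  | base => exact (Joined.refl (p i)).mono (fun v hv => ⟨i, le_rfl, le_rfl, hv.symm⟩)
  | succ j hij ih =>
    refine ((ih (by omega)).link (Joined.refl (p (j + 1))) ?_ (h.adj j (by omega))).mono ?_
    · rintro v ⟨m, h1, h2, rfl⟩ hv
      have := h.inj _ _ (by omega) hj hv
      omega
    · rintro v (⟨m, h1, h2, rfl⟩ | hv)
      · exact ⟨m, h1, by omega, rfl⟩
      · exact ⟨j + 1, by omega, le_rfl, hv.symm⟩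

theorem joined_pair {x y : V} (h : Γ.Adj x y) : Joined Γ {x, y} x y :=
  ((Joined.refl x).link (Joined.refl y) (by rintro v rfl e; exact h.ne e) h).mono
    (by rintro v (rfl | rfl) <;> simp)

theorem hasC_tri {x y z : V} (h1 : Γ.Adj x y) (h2 : Γ.Adj y z) (h3 : Γ.Adj x z) :
    HasC Γ {x, y, z} :=
  ((joined_pair h1).close (Joined.refl z)
    (by rintro v (rfl | rfl) e; exacts [h3.ne e, h2.ne e]) h2 h3 (Or.inl h1.ne)).mono
    (by rintro v ((rfl | rfl) | rfl) <;> simp)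

theorem hasC_quad {x y z w : V} (h1 : Γ.Adj x y) (h2 : Γ.Adj y z) (h3 : Γ.Adj z w)
    (h4 : Γ.Adj x w) (hxz : x ≠ z) (hyw : y ≠ w) : HasC Γ {x, y, z, w} :=
  ((joined_pair h1).close (joined_pair h3)
    (by rintro v (rfl | rfl) (e | e); exacts [hxz e, h4.ne e, h2.ne e, hyw e]) h2 h4
      (Or.inl h1.ne)).mono
    (by rintro v ((rfl | rfl) | (rfl | rfl)) <;> simp)

/-- A joined set with distinct ends and a common neighbour of the ends. -/
theorem Joined.cone {U : Set V} {u v x : V} (h : Joined Γ U u v) (hx : x ∉ U) (h1 : Γ.Adj x u)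
    (h2 : Γ.Adj x v) (hne : u ≠ v) : HasC Γ ({x} ∪ U) :=
  (Joined.refl x).close h (by rintro w rfl; exact hx) h1 h2 (Or.inr hne)

theorem IsP.cone {p : ℕ → V} {k : ℕ} (h : IsP Γ p k) {i j : ℕ} (hij : i < j) (hj : j ≤ k) {x : V}
    (hx : ∀ m, i ≤ m → m ≤ j → p m ≠ x) (h1 : Γ.Adj x (p i)) (h2 : Γ.Adj x (p j)) :
    HasC Γ ({x} ∪ seg p i j) :=
  (h.joined hij.le hj).cone (by rintro ⟨m, a, b, c⟩; exact hx m a b c) h1 h2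
    (fun e => by have := h.inj _ _ (by omega) hj e; omega)

/-- A path closed by one more edge path `x y`. -/
theorem IsP.cone2 {p : ℕ → V} {k : ℕ} (h : IsP Γ p k) {i j : ℕ} (hij : i ≤ j) (hj : j ≤ k)
    {x y : V} (hxy : Γ.Adj x y)
    (hx : ∀ m, i ≤ m → m ≤ j → p m ≠ x) (hy : ∀ m, i ≤ m → m ≤ j → p m ≠ y)
    (h1 : Γ.Adj x (p i)) (h2 : Γ.Adj y (p j)) :
    HasC Γ ({x, y} ∪ seg p i j) := by
  refine (joined_pair hxy).symm.close (h.joined hij hj) ?_ h1 h2 (Or.inl hxy.ne') |>.mono ?_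
  · rintro v (rfl | rfl) ⟨m, a, b, c⟩
    exacts [hx m a b c, hy m a b c]
  · exact fun v hv => hv

theorem IsP.chord {p : ℕ → V} {k : ℕ} (h : IsP Γ p k) {i j : ℕ} (hij : i + 2 ≤ j) (hj : j ≤ k)
    (h1 : Γ.Adj (p i) (p j)) : HasC Γ (seg p i j) := by
  refine (h.cone (i := i + 1) (j := j) (x := p i) (by omega) hj ?_ (h.adj i (by omega)) h1).mono ?_
  · intro m a b e
    have := h.inj _ _ (by omega) (by omega) e
    omega
  · rintro v (rfl | ⟨m, a, b, rfl⟩)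
    exacts [⟨i, le_rfl, by omega, rfl⟩, ⟨m, by omega, b, rfl⟩]

/-- `p 0, …, p k` is a longest path inside `U`. -/
structure LP (Γ : SimpleGraph V) (U : Set V) (p : ℕ → V) (k : ℕ) : Prop extends IsP Γ p k where
  mem : ∀ i, i ≤ k → p i ∈ U
  max : ∀ q l, IsP Γ q l → (∀ i, i ≤ l → q i ∈ U) → l ≤ k

theorem exists_LP {U : Set V} {u : V} (hu : u ∈ U) : ∃ p k, LP Γ U p k := by
  let S : ℕ → Prop := fun l => ∃ q, IsP Γ q l ∧ ∀ i, i ≤ l → q i ∈ U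
  have hb : ∀ l, S l → l ≤ Fintype.card V := by
    rintro l ⟨q, hq, -⟩
    have := Fintype.card_le_of_injective (fun i : Fin (l + 1) => q i)
      (fun i j e => Fin.ext (hq.inj _ _ (by omega) (by omega) e))
    rw [Fintype.card_fin] at this
    omega
  have h0 : S 0 := ⟨fun _ => u, ⟨fun i j hi hj _ => by omega, fun i hi => by omega⟩, fun _ _ => hu⟩
  obtain ⟨q, hq, hm⟩ := Nat.findGreatest_spec (P := S) (Nat.zero_le _) h0
  exact ⟨q, _, hq, hm, fun q' l hq' hm' =>
    Nat.le_findGreatest (hb l ⟨q', hq', hm'⟩) ⟨q', hq', hm'⟩⟩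

variable {U : Set V} {p : ℕ → V} {k : ℕ}

theorem LP.rev (h : LP Γ U p k) : LP Γ U (fun i => p (k - i)) k :=
  ⟨h.toIsP.rev, fun i _ => h.mem _ (by omega), h.max⟩

/-- Paths in an acyclic set are induced. -/
theorem LP.induced (h : LP Γ U p k) (hU : ¬ HasC Γ U) {i j : ℕ} (hij : i < j) (hj : j ≤ k)
    (ha : Γ.Adj (p i) (p j)) : j = i + 1 := by
  by_contra hne
  refine hU ((h.toIsP.chord (by omega) hj ha).mono ?_)
  rintro v ⟨m, a, b, rfl⟩
  exact h.mem m (by omega)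

/-- A vertex of an acyclic set off a path has at most one neighbour on it. -/
theorem LP.unique (h : LP Γ U p k) (hU : ¬ HasC Γ U) {r : V} (hr : r ∈ U)
    (hrp : ∀ m, m ≤ k → p m ≠ r) {i j : ℕ} (hi : i ≤ k) (hj : j ≤ k)
    (h1 : Γ.Adj r (p i)) (h2 : Γ.Adj r (p j)) : i = j := by
  have key : ∀ i j, i < j → j ≤ k → Γ.Adj r (p i) → Γ.Adj r (p j) → False := by
    intro i j hij hj h1 h2
    refine hU ((h.toIsP.cone hij hj (fun m _ b => hrp m (by omega)) h1 h2).mono ?_)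
    rintro v (rfl | ⟨m, a, b, rfl⟩)
    exacts [hr, h.mem m (by omega)]
  rcases lt_trichotomy i j with e | e | e
  exacts [(key _ _ e hj h1 h2).elim, e, (key _ _ e hi h2 h1).elim]

/-- The neighbours of the first vertex lie on the path, by maximality. -/
theorem LP.start_mem (h : LP Γ U p k) {v : V} (hv : v ∈ U)
    (ha : Γ.Adj (p 0) v) : ∃ m, m ≤ k ∧ p m = v := by
  by_contra hm
  push Not at hm
  have : k + 1 ≤ k := by
    refine h.max (fun i => if i = 0 then v else p (i - 1)) (k + 1) ⟨?_, ?_⟩ ?_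
    · intro i j hi hj e
      by_cases hi0 : i = 0 <;> by_cases hj0 : j = 0 <;> simp only [hi0, hj0, if_true, if_false] at e
      · omega
      · exact (hm _ (by omega) e.symm).elim
      · exact (hm _ (by omega) e).elim
      · have := h.inj _ _ (by omega) (by omega) e
        omega
    · intro i hi
      by_cases hi0 : i = 0
      · simpa [hi0] using ha.symm
      · have := h.adj (i - 1) (by omega)
        rw [show i - 1 + 1 = i by omega] at this
        simpa [hi0] using this
    · intro i hi
      by_cases hi0 : i = 0
      · simpa [hi0] using hv
      · simpa [hi0] using h.mem (i - 1) (by omega)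
  omega

theorem LP.start (h : LP Γ U p k) (hU : ¬ HasC Γ U) {v : V} (hv : v ∈ U)
    (ha : Γ.Adj (p 0) v) : 1 ≤ k ∧ v = p 1 := by
  obtain ⟨m, hm, rfl⟩ := h.start_mem hv ha
  have h0 : 0 < m := Nat.pos_of_ne_zero (fun e => by subst e; exact ha.ne rfl)
  have := h.induced hU h0 hm ha
  subst this
  exact ⟨hm, rfl⟩

theorem LP.finish (h : LP Γ U p k) (hU : ¬ HasC Γ U) {v : V} (hv : v ∈ U)
    (ha : Γ.Adj (p k) v) : 1 ≤ k ∧ v = p (k - 1) := by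
  simpa using h.rev.start hU hv (by simpa using ha)

/-- A vertex off the path adjacent to the second vertex may replace the first vertex. -/
theorem LP.replace (h : LP Γ U p k) (hk : 1 ≤ k) {r : V} (hr : r ∈ U)
    (hrp : ∀ m, m ≤ k → p m ≠ r) (ha : Γ.Adj r (p 1)) : LP Γ U (Function.update p 0 r) k := by
  have un : ∀ {i}, i ≠ 0 → Function.update p 0 r i = p i := fun hi => Function.update_of_ne hi _ _
  have u0 : Function.update p 0 r 0 = r := Function.update_self _ _ _
  refine ⟨⟨fun i j hi hj e => ?_, fun i hi => ?_⟩, fun i hi => ?_, h.max⟩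
  · by_cases hi0 : i = 0 <;> by_cases hj0 : j = 0
    · omega
    · rw [hi0, u0, un hj0] at e
      exact (hrp _ hj e.symm).elim
    · rw [hj0, u0, un hi0] at e
      exact (hrp _ hi e).elim
    · rw [un hi0, un hj0] at e
      exact h.inj _ _ hi hj e
  · by_cases hi0 : i = 0
    · subst hi0
      rw [u0, un (by omega)]; exact ha
    · rw [un hi0, un (by omega)]; exact h.adj i hi
  · by_cases hi0 : i = 0
    · subst hi0; rw [u0]; exact hr
    · rw [un hi0]; exact h.mem i hi

/-- A vertex off the path adjacent to the second vertex has no other neighbour in `U`, since it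
could serve as the first vertex. -/
theorem LP.pendant (h : LP Γ U p k) (hU : ¬ HasC Γ U) (hk : 1 ≤ k) {r : V} (hr : r ∈ U)
    (hrp : ∀ m, m ≤ k → p m ≠ r) (ha : Γ.Adj r (p 1)) {v : V} (hv : v ∈ U) (hrv : Γ.Adj r v) :
    v = p 1 := by
  have := ((h.replace hk hr hrp ha).start hU hv (by rwa [Function.update_self])).2
  rwa [Function.update_of_ne (by omega)] at this

/-- All vertices with a neighbour have at least three neighbours. -/
def Deg3 (Γ : SimpleGraph V) : Prop :=
  ∀ v w, Γ.Adj v w → ∀ x y, ∃ z, Γ.Adj v z ∧ z ≠ x ∧ z ≠ y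

/-- The first vertex of a longest path in a forest has at most one neighbour in the forest, hence
two outside of it. -/
theorem LP.two_out (h : LP Γ U p k) (hU : ¬ HasC Γ U) (hD : Deg3 Γ) {w : V}
    (hw : Γ.Adj (p 0) w) :
    ∃ z z', z ≠ z' ∧ Γ.Adj (p 0) z ∧ Γ.Adj (p 0) z' ∧ z ∉ U ∧ z' ∉ U := by
  obtain ⟨z, h1, h2, -⟩ := hD _ _ hw (p 1) (p 1)
  obtain ⟨z', h1', h2', h3⟩ := hD _ _ hw (p 1) z
  exact ⟨z, z', h3.symm, h1, h1', fun hz => h2 (h.start hU hz h1).2,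
    fun hz => h2' (h.start hU hz h1').2⟩

theorem IsP.joined_all (h : IsP Γ p k) {i j : ℕ} (hi : i ≤ k) (hj : j ≤ k) :
    Joined Γ (seg p 0 k) (p i) (p j) := by
  rcases le_total i j with hij | hij
  · exact (h.joined hij hj).mono (fun v ⟨m, a, b, e⟩ => ⟨m, by omega, by omega, e⟩)
  · exact (h.joined hij hi).symm.mono (fun v ⟨m, a, b, e⟩ => ⟨m, by omega, by omega, e⟩)

theorem joined_pair_all {x y u v : V} (h : Γ.Adj x y) (hu : u = x ∨ u = y) (hv : v = x ∨ v = y) :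
    Joined Γ {x, y} u v := by
  rcases hu with rfl | rfl <;> rcases hv with rfl | rfl
  · exact (Joined.refl _).mono (by simp)
  · exact joined_pair h
  · exact (joined_pair h).symm
  · exact (Joined.refl _).mono (by simp)

/-- In `K₃,₃` the distinctness of vertices in different parts follows from adjacency. -/
theorem no_K33' (hL : Lift Γ) {v0 v1 v2 v3 v4 v5 : V}
    (n01 : v0 ≠ v1) (n02 : v0 ≠ v2) (n12 : v1 ≠ v2) (n34 : v3 ≠ v4) (n35 : v3 ≠ v5) (n45 : v4 ≠ v5)
    (e03 : Γ.Adj v0 v3) (e04 : Γ.Adj v0 v4) (e05 : Γ.Adj v0 v5) (e13 : Γ.Adj v1 v3)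
    (e14 : Γ.Adj v1 v4) (e15 : Γ.Adj v1 v5) (e23 : Γ.Adj v2 v3) (e24 : Γ.Adj v2 v4)
    (e25 : Γ.Adj v2 v5) : False :=
  no_K33 hL n01 n02 e03.ne e04.ne e05.ne n12 e13.ne e14.ne e15.ne e23.ne e24.ne e25.ne n34 n35 n45
    e03 e04 e05 e13 e14 e15 e23 e24 e25


/-- In the configuration of `theta_false`, the neighbour of `w` inside the path directly follows
the first vertex: otherwise a third neighbour of the vertex `p 1` yields two disjoint cycles. -/
theorem theta_first (hN : NoDC Γ) (hD : Deg3 Γ) {p : ℕ → V} {k : ℕ} (hp : IsP Γ p k)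
    (hind : ∀ i j, i < j → j ≤ k → Γ.Adj (p i) (p j) → j = i + 1)
    {x y w : V} (hx : ∀ m, m ≤ k → p m ≠ x) (hy : ∀ m, m ≤ k → p m ≠ y)
    (hw : ∀ m, m ≤ k → p m ≠ w) (hxy : x ≠ y)
    (x0 : Γ.Adj x (p 0)) (xk : Γ.Adj x (p k)) (y0 : Γ.Adj y (p 0)) (yk : Γ.Adj y (p k))
    (wx : Γ.Adj w x) (wy : Γ.Adj w y) {j : ℕ} (j0 : 0 < j) (jk : j < k) (wj : Γ.Adj w (p j))
    (hext : ∀ v i, 0 < i → i < k → Γ.Adj v (p i) → v ≠ x → v ≠ y → v ≠ w →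
      (∀ m, m ≤ k → p m ≠ v) → Γ.Adj v x) : j = 1 := by
  have hinj := hp.inj
  -- the interior neighbour of `w` is unique
  have uniq : ∀ i j, 0 < i → i < j → j < k → Γ.Adj w (p i) → Γ.Adj w (p j) → False := by
    intro i j hi hij hj h1 h2
    refine hN.elim (hp.cone hij hj.le (fun m _ b => hw m (by omega)) h1 h2)
      (hasC_quad x0 y0.symm yk xk hxy (fun e => by
        have := hp.inj _ _ (by omega) (by omega) e; omega)) ?_
    intro v h1 h2
    simp only [Set.mem_union, Set.mem_insert_iff, Set.mem_singleton_iff, mem_seg_iff] at h1 h2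
    have := wx.ne
    have := wy.ne
    grind
  by_contra hj1
  have h01 := hp.adj 0 (by omega)
  have h12 := hp.adj 1 (by omega)
  obtain ⟨v, v1, v0, v2⟩ := hD _ _ h12 (p 0) (p 2)
  have vw : v ≠ w := fun e => uniq 1 j (by omega) (by omega) jk (e ▸ v1.symm) wj
  have vP : ∀ m, m ≤ k → p m ≠ v := by
    rintro m hm rfl
    rcases lt_trichotomy m 1 with h | h | h
    · exact v0 (by rw [show m = 0 by omega])
    · exact v1.ne (by rw [h])
    · exact v2 (by rw [hind _ _ h hm v1])
  have wne := wx.ne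
  have wne' := wy.ne
  have hcy : HasC Γ ({w, y} ∪ seg p j k) := hp.cone2 jk.le le_rfl wy
    (fun m _ b => hw m (by omega)) (fun m _ b => hy m (by omega)) wj yk
  have hcx : HasC Γ ({w, x} ∪ seg p j k) := hp.cone2 jk.le le_rfl wx
    (fun m _ b => hw m (by omega)) (fun m _ b => hx m (by omega)) wj xk
  by_cases hvx : v = x
  · subst hvx
    refine hN.elim (hasC_tri x0 h01 v1.symm) hcy ?_
    intro u h1 h2
    simp only [Set.mem_union, Set.mem_insert_iff, Set.mem_singleton_iff, mem_seg_iff] at h1 h2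
    grind
  by_cases hvy : v = y
  · subst hvy
    refine hN.elim (hasC_tri y0 h01 v1.symm) hcx ?_
    intro u h1 h2
    simp only [Set.mem_union, Set.mem_insert_iff, Set.mem_singleton_iff, mem_seg_iff] at h1 h2
    grind
  have vx := hext v 1 (by omega) (by omega) v1.symm hvx hvy vw vP
  refine hN.elim (hasC_quad vx x0 h01 v1.symm (vP 0 (by omega)).symm (hx 1 (by omega)).symm) hcy ?_
  intro u h1 h2
  simp only [Set.mem_union, Set.mem_insert_iff, Set.mem_singleton_iff, mem_seg_iff] at h1 h2
  grind

/-- A theta-like configuration around an induced path forces two disjoint cycles or `K₃,₃`: both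
ends of the path are adjacent to `x` and `y`, and `w` is adjacent to `x`, `y` and an interior
vertex of the path. -/
theorem theta_false (hN : NoDC Γ) (hL : Lift Γ) (hD : Deg3 Γ) {p : ℕ → V} {k : ℕ} (hp : IsP Γ p k)
    (hind : ∀ i j, i < j → j ≤ k → Γ.Adj (p i) (p j) → j = i + 1)
    {x y w : V} (hx : ∀ m, m ≤ k → p m ≠ x) (hy : ∀ m, m ≤ k → p m ≠ y)
    (hw : ∀ m, m ≤ k → p m ≠ w) (hxy : x ≠ y)
    (x0 : Γ.Adj x (p 0)) (xk : Γ.Adj x (p k)) (y0 : Γ.Adj y (p 0)) (yk : Γ.Adj y (p k))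
    (wx : Γ.Adj w x) (wy : Γ.Adj w y) {j : ℕ} (j0 : 0 < j) (jk : j < k) (wj : Γ.Adj w (p j))
    (hext : ∀ v i, 0 < i → i < k → Γ.Adj v (p i) → v ≠ x → v ≠ y → v ≠ w →
      (∀ m, m ≤ k → p m ≠ v) → Γ.Adj v x) : False := by
  have e1 := theta_first hN hD hp hind hx hy hw hxy x0 xk y0 yk wx wy j0 jk wj hext
  have e2 : k - j = 1 := by
    refine theta_first hN hD hp.rev (j := k - j) ?_ (x := x) (y := y) (w := w)
      (fun m _ => hx _ (by omega)) (fun m _ => hy _ (by omega))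
      (fun m _ => hw _ (by omega)) hxy (by simpa using xk) (by simpa using x0) (by simpa using yk)
      (by simpa using y0) wx wy (by omega) (by omega)
      (by simpa [show k - (k - j) = j by omega] using wj) ?_
    · intro a b hab hb ha
      have := hind (k - b) (k - a) (by omega) (by omega) ha.symm
      omega
    · intro v i hi hik ha n1 n2 n3 n4
      exact hext v (k - i) (by omega) (by omega) ha n1 n2 n3
        (fun m hm => by simpa [show k - (k - m) = m by omega] using n4 (k - m) (by omega))
  obtain rfl : k = 2 := by omega
  subst e1
  exact no_K33' hL hxy (hx 1 (by omega)).symm (hy 1 (by omega)).symm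
    (fun e => by have := hp.inj _ _ (by omega) (by omega) e; omega) (hw 0 (by omega))
    (hw 2 (by omega)) x0 xk wx.symm y0 yk wy.symm (hp.adj 0 (by omega)).symm (hp.adj 1 (by omega))
    wj.symm

end PathSec

/-! ### Wheels and `K₅` minus an edge -/

section BaseSec
variable {V : Type} [Fintype V] [DecidableEq V] {Γ : SimpleGraph V}

/-- The two conclusions of the combinatorial part: a planar drawing, and collapsibility of the
discretized configuration space onto a graph. -/
def Good (Γ : SimpleGraph V) : Prop := (∃ p, IsDrawing Γ p) ∧ NoCore Γ

/-- The edges disjoint from a given edge of a core form a graph of minimal degree two. -/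
theorem core_cyc {S : V → V → V → V → Prop} (hS : SqSym Γ S)
    (hc : ∀ a b c d, S a b c d → ∃ d', d' ≠ d ∧ S a b c d') {a b c d : V} (h : S a b c d) :
    ∃ W : Finset V, Cyc Γ W ∧ a ∉ W ∧ b ∉ W ∧ c ∈ W ∧ ∀ u ∈ W, ∃ v, S a b u v := by
  have hW : ∀ u, u ∈ Finset.univ.filter (fun u => ∃ v, S a b u v) ↔ ∃ v, S a b u v := by simp
  refine ⟨Finset.univ.filter (fun u => ∃ v, S a b u v), ⟨⟨c, (hW _).2 ⟨d, h⟩⟩, ?_⟩, ?_, ?_,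
    (hW _).2 ⟨d, h⟩, fun u hu => (hW u).1 hu⟩
  · intro u hu
    obtain ⟨v, hv⟩ := (hW u).1 hu
    obtain ⟨v', hne, hv'⟩ := hc _ _ _ _ hv
    exact ⟨v, (hW _).2 ⟨u, hS.s2 (hS.s1 (hS.s2 hv))⟩, v', (hW _).2 ⟨u, hS.s2 (hS.s1 (hS.s2 hv'))⟩,
      hne.symm, (hS.de hv).2.1, (hS.de hv').2.1⟩
  · intro hu
    obtain ⟨v, hv⟩ := (hW _).1 hu
    exact (hS.de hv).2.2.1 rfl
  · intro hu
    obtain ⟨v, hv⟩ := (hW _).1 hu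
    exact (hS.de hv).2.2.2.2.1 rfl

/-- A numbering of part of the vertices extends injectively to all of them. -/
theorem exists_order {q : ℕ → V} {m : ℕ} (hq : ∀ i j, i ≤ m → j ≤ m → q i = q j → i = j) :
    ∃ h : V → ℤ, Function.Injective h ∧ ∀ i, i ≤ m → h (q i) = i := by
  let h : V → ℤ := fun v =>
    if hv : ∃ i, i ≤ m ∧ q i = v then (hv.choose : ℤ) else (m + 1 + num v : ℕ)
  have h1 : ∀ i, i ≤ m → h (q i) = i := by
    intro i hi
    have hv : ∃ j, j ≤ m ∧ q j = q i := ⟨i, hi, rfl⟩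
    have := hq _ _ hv.choose_spec.1 hi hv.choose_spec.2
    simp only [h, dif_pos hv, this]
  have h2 : ∀ v, (¬ ∃ i, i ≤ m ∧ q i = v) → h v = (m + 1 + num v : ℕ) := fun v hv => by
    simp only [h, dif_neg hv]
  refine ⟨h, fun u v e => ?_, h1⟩
  by_cases hu : ∃ i, i ≤ m ∧ q i = u <;> by_cases hv : ∃ i, i ≤ m ∧ q i = v
  · obtain ⟨i, hi, rfl⟩ := hu
    obtain ⟨j, hj, rfl⟩ := hv
    rw [h1 i hi, h1 j hj] at e
    rw [Int.ofNat.inj e]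
  · obtain ⟨i, hi, rfl⟩ := hu
    rw [h1 i hi, h2 v hv] at e
    omega
  · obtain ⟨i, hi, rfl⟩ := hv
    rw [h1 i hi, h2 u hu] at e
    omega
  · rw [h2 u hu, h2 v hv] at e
    exact num_inj (by omega)

/-- Wheels with hub `a` and rim `q 0, …, q m` (some spokes or rim edges may be missing). -/
theorem wheel_good {a : V} {q : ℕ → V} {m : ℕ}
    (hq : ∀ i j, i ≤ m → j ≤ m → q i = q j → i = j)
    (hspoke : ∀ d, Γ.Adj a d → ∃ i, i ≤ m ∧ q i = d)
    (hrim : ∀ u v, Γ.Adj u v → u ≠ a → v ≠ a →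
      (∃ i, i < m ∧ ((q i = u ∧ q (i + 1) = v) ∨ (q i = v ∧ q (i + 1) = u))) ∨
      (q 0 = u ∧ q m = v) ∨ (q 0 = v ∧ q m = u)) : Good Γ := by
  constructor
  · obtain ⟨h, hinj, hh⟩ := exists_order hq
    refine exists_parabola_drawing a h hinj ?_
    rintro u v w z ⟨huv, hwz, n1, n2, n3, n4⟩ ha hb hc hd
    have r1 := hrim u v huv ha hb
    have r2 := hrim w z hwz hc hd
    -- consecutive pairs do not separate each other, nor does the pair of extreme vertices
    have key1 : ∀ i j : ℕ, i < m → j < m → q i ≠ q j → q (i + 1) ≠ q j → q i ≠ q (j + 1) →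
        0 < ((h (q j) - h (q i)) * (h (q j) - h (q (i + 1)))) *
          ((h (q (j + 1)) - h (q i)) * (h (q (j + 1)) - h (q (i + 1)))) := by
      intro i j hi hj m1 m2 m3
      rw [hh i (by omega), hh j (by omega), hh (i + 1) (by omega), hh (j + 1) (by omega)]
      have e1 : i ≠ j := fun e => m1 (by rw [e])
      have e2 : i + 1 ≠ j := fun e => m2 (by rw [e])
      have e3 : i ≠ j + 1 := fun e => m3 (by rw [e])
      push_cast
      rcases lt_or_gt_of_ne e1 with h | h
      · have a1 : (0 : ℤ) < j - i := by omega
        have a2 : (0 : ℤ) < j - (i + 1) := by omega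
        have a3 : (0 : ℤ) < j + 1 - i := by omega
        have a4 : (0 : ℤ) < j + 1 - (i + 1) := by omega
        positivity
      · have a1 : (j : ℤ) - i < 0 := by omega
        have a2 : (j : ℤ) - (i + 1) < 0 := by omega
        have a3 : (j : ℤ) + 1 - i < 0 := by omega
        have a4 : (j : ℤ) + 1 - (i + 1) < 0 := by omega
        exact mul_pos (mul_pos_of_neg_of_neg a1 a2) (mul_pos_of_neg_of_neg a3 a4)
    have key2 : ∀ j : ℕ, j < m → q 0 ≠ q j → q m ≠ q (j + 1) →
        0 < ((h (q j) - h (q 0)) * (h (q j) - h (q m))) *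
          ((h (q (j + 1)) - h (q 0)) * (h (q (j + 1)) - h (q m))) := by
      intro j hj m1 m2
      rw [hh 0 (by omega), hh j (by omega), hh m (by omega), hh (j + 1) (by omega)]
      have e1 : 0 ≠ j := fun e => m1 (by rw [← e])
      have e2 : m ≠ j + 1 := fun e => m2 (by rw [← e])
      push_cast
      have a1 : (0 : ℤ) < j - 0 := by omega
      have a2 : (j : ℤ) - m < 0 := by omega
      have a3 : (0 : ℤ) < j + 1 - 0 := by omega
      have a4 : (j : ℤ) + 1 - m < 0 := by omega
      exact mul_pos_of_neg_of_neg (mul_neg_of_pos_of_neg a1 a2) (mul_neg_of_pos_of_neg a3 a4)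
    rcases r1 with ⟨i, hi, ⟨rfl, rfl⟩ | ⟨rfl, rfl⟩⟩ | ⟨rfl, rfl⟩ | ⟨rfl, rfl⟩ <;>
    rcases r2 with ⟨j, hj, ⟨rfl, rfl⟩ | ⟨rfl, rfl⟩⟩ | ⟨rfl, rfl⟩ | ⟨rfl, rfl⟩
    · linarith [key1 i j hi hj n1 n3 n2]
    · linarith [key1 i j hi hj n2 n4 n1]
    · linarith [key2 i hi n1.symm n4.symm]
    · linarith [key2 i hi n2.symm n3.symm]
    · linarith [key1 i j hi hj n3 n1 n4]
    · linarith [key1 i j hi hj n4 n2 n3]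
    · linarith [key2 i hi n3.symm n2.symm]
    · linarith [key2 i hi n4.symm n1.symm]
    · linarith [key2 j hj n1 n4]
    · linarith [key2 j hj n2 n3]
    · exact absurd rfl n1
    · exact absurd rfl n2
    · linarith [key2 j hj n3 n2]
    · linarith [key2 j hj n4 n1]
    · exact absurd rfl n3
    · exact absurd rfl n4
  · -- the rim minus a vertex is acyclic
    have hac : ∀ i, i ≤ m → ∀ W : Finset V, Cyc Γ W → a ∉ W → q i ∉ W → False := by
      intro i hi W hW haW hdW
      have nb : ∀ t, t ≤ m → q t ∈ W → ∀ v ∈ W, Γ.Adj (q t) v →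
          (t < m ∧ v = q (t + 1)) ∨ (0 < t ∧ v = q (t - 1)) ∨ (t = 0 ∧ v = q m) ∨
            (t = m ∧ v = q 0) := by
        intro t ht htW v hv hadj
        rcases hrim _ _ hadj (fun e => haW (e ▸ htW)) (fun e => haW (e ▸ hv)) with
          ⟨i, hi, ⟨e1, e2⟩ | ⟨e1, e2⟩⟩ | ⟨e1, e2⟩ | ⟨e1, e2⟩
        · obtain rfl := hq _ _ (by omega) ht e1
          exact Or.inl ⟨hi, e2.symm⟩
        · obtain rfl := hq _ _ (by omega) ht e2
          exact Or.inr (Or.inl ⟨by omega, by simpa using e1.symm⟩)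
        · obtain rfl := hq _ _ (by omega) ht e1
          exact Or.inr (Or.inr (Or.inl ⟨rfl, e2.symm⟩))
        · obtain rfl := hq _ _ le_rfl ht e2
          exact Or.inr (Or.inr (Or.inr ⟨rfl, e1.symm⟩))
      have up : ∀ t, t < m → q t ∈ W → q (t + 1) ∈ W := by
        intro t ht htW
        obtain ⟨x, hx, y, hy, hxy, h1, h2⟩ := hW.2 _ htW
        have := nb t ht.le htW x hx h1
        have := nb t ht.le htW y hy h2
        grind
      have down : ∀ t, 0 < t → t ≤ m → q t ∈ W → q (t - 1) ∈ W := by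
        intro t ht htm htW
        obtain ⟨x, hx, y, hy, hxy, h1, h2⟩ := hW.2 _ htW
        have := nb t htm htW x hx h1
        have := nb t htm htW y hy h2
        grind
      obtain ⟨t, ht, htW⟩ : ∃ t, t ≤ m ∧ q t ∈ W := by
        obtain ⟨w, hw⟩ := hW.1
        obtain ⟨x, hx, y, hy, hxy, h1, h2⟩ := hW.2 _ hw
        rcases hrim _ _ h1 (fun e => haW (e ▸ hw)) (fun e => haW (e ▸ hx)) with
          ⟨i, hi, ⟨e1, e2⟩ | ⟨e1, e2⟩⟩ | ⟨e1, e2⟩ | ⟨e1, e2⟩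
        exacts [⟨i, hi.le, e1 ▸ hw⟩, ⟨i, hi.le, e1 ▸ hx⟩, ⟨0, by omega, e1 ▸ hw⟩,
          ⟨0, by omega, e1 ▸ hx⟩]
      have h0 : q 0 ∈ W := by
        have : ∀ s, s ≤ t → q (t - s) ∈ W := by
          intro s
          induction s with
          | zero => intro _; simpa using htW
          | succ s ih =>
            intro hs
            have := down (t - s) (by omega) (by omega) (ih (by omega))
            rwa [show t - s - 1 = t - (s + 1) by omega] at this
        simpa using this t le_rfl
      have hall : ∀ s, s ≤ m → q s ∈ W := by
        intro s
        induction s with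
        | zero => intro _; exact h0
        | succ s ih => intro hs; exact up s (by omega) (ih (by omega))
      exact hdW (hall i hi)
    intro S hS hc
    have hub : ∀ d u v, ¬ S a d u v := by
      intro d u v h
      obtain ⟨W, hW, h1, h2, -⟩ := core_cyc hS hc h
      obtain ⟨i, hi, rfl⟩ := hspoke d (hS.de h).1
      exact hac i hi W hW h1 h2
    intro u v w z h
    have hua : u ≠ a := by rintro rfl; exact hub _ _ _ h
    have hva : v ≠ a := by rintro rfl; exact hub _ _ _ (hS.s1 h)
    obtain ⟨W, hW, h1, h2, -, h3⟩ := core_cyc hS hc h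
    have haW : a ∉ W := by
      intro ha
      obtain ⟨v', hv'⟩ := h3 a ha
      exact hub _ _ _ (hS.s2 hv')
    rcases hrim _ _ (hS.de h).1 hua hva with ⟨i, hi, ⟨rfl, e2⟩ | ⟨rfl, e2⟩⟩ | ⟨rfl, e2⟩ | ⟨rfl, e2⟩
    exacts [hac i hi.le W hW haW h1, hac i hi.le W hW haW h2, hac 0 (by omega) W hW haW h1,
      hac 0 (by omega) W hW haW h2]

/-- Subgraphs of `K₅` minus the edge `x y`. -/
theorem k5minus_good {a b c x y : V} (hab : a ≠ b) (hac : a ≠ c) (hax : a ≠ x) (hay : a ≠ y)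
    (hbc : b ≠ c) (hbx : b ≠ x) (hby : b ≠ y) (hcx : c ≠ x) (hcy : c ≠ y) (hxy : x ≠ y)
    (hxy' : ¬ Γ.Adj x y) (hV : ∀ u v, Γ.Adj u v → u = a ∨ u = b ∨ u = c ∨ u = x ∨ u = y) :
    Good Γ := by
  constructor
  · let q : ℕ → V := fun i => if i = 0 then b else if i = 1 then x else if i = 2 then c else y
    have hq : ∀ i j, i ≤ 3 → j ≤ 3 → q i = q j → i = j := by
      intro i j hi hj e
      simp only [q] at e
      grind
    obtain ⟨h, hinj, hh⟩ := exists_order hq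
    have hb : h b = 0 := hh 0 (by omega)
    have hx : h x = 1 := hh 1 (by omega)
    have hc : h c = 2 := hh 2 (by omega)
    have hy : h y = 3 := hh 3 (by omega)
    refine exists_parabola_drawing a h hinj ?_
    rintro u v w z ⟨huv, hwz, n1, n2, n3, n4⟩ ha' hb' hc' hd'
    have n5 := huv.ne
    have n6 := hwz.ne
    have m1 : ¬ Γ.Adj y x := fun h => hxy' h.symm
    rcases (hV u v huv).resolve_left ha' with rfl | rfl | rfl | rfl <;>
    rcases (hV v u huv.symm).resolve_left hb' with rfl | rfl | rfl | rfl <;>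
    first
    | exact absurd rfl n5
    | exact absurd huv hxy'
    | exact absurd huv m1
    | (rcases (hV w z hwz).resolve_left hc' with rfl | rfl | rfl | rfl <;>
        first
        | exact absurd rfl n1
        | exact absurd rfl n3
        | (rcases (hV z w hwz.symm).resolve_left hd' with rfl | rfl | rfl | rfl <;>
            first
            | exact absurd rfl n6
            | exact absurd rfl n2
            | exact absurd rfl n4
            | exact absurd hwz hxy'
            | exact absurd hwz m1
            | (rw [hb, hx, hc, hy]; norm_num)))
  · intro S hS hcore
    have m1 : ¬ Γ.Adj y x := fun h => hxy' h.symm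
    -- the complement of an edge of the triangle `a b c` is a path
    have tri : ∀ u v w z, S u v w z → (u = x ∨ u = y) ∨ (v = x ∨ v = y) := by
      intro u v w z h
      by_contra hcon
      push Not at hcon
      obtain ⟨⟨c1, c2⟩, c3, c4⟩ := hcon
      obtain ⟨W, hW, h1, h2, -⟩ := core_cyc hS hcore h
      have huv := (hS.de h).1
      have hu := hV u v huv
      have hv := hV v u huv.symm
      have hne := huv.ne
      -- a vertex of `W` in `{x, y}` has at most one further vertex available
      have nxy : ∀ t ∈ W, t ≠ x ∧ t ≠ y := by
        intro t ht
        obtain ⟨s, hs, s', hs', hss, k1, k2⟩ := hW.2 t ht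
        have e1 := hV s t k1.symm
        have e2 := hV s' t k2.symm
        have j1 := k1.ne
        have j2 := k2.ne
        clear hcore hV
        constructor
        · rintro rfl
          grind
        · rintro rfl
          grind
      obtain ⟨t, ht⟩ := hW.1
      obtain ⟨s, hs, s', hs', hss, k1, k2⟩ := hW.2 t ht
      have e0 := hV t s k1
      have e1 := hV s t k1.symm
      have e2 := hV s' t k2.symm
      have i0 := nxy t ht
      have i1 := nxy s hs
      have i2 := nxy s' hs'
      have j1 := k1.ne
      have j2 := k2.ne
      clear hcore hV
      grind
    -- an edge contains exactly one of `x` and `y`, so the neighbour in the opposite edge is unique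
    intro u v w z h
    have main : ∀ u v w z, S u v w z → (u = x ∨ u = y) → (w = x ∨ w = y) → False := by
      intro u v w z h hu hw
      obtain ⟨d', hd', h'⟩ := hcore _ _ _ _ (hS.s2 (hS.s1 (hS.s2 h)))
      have t1 := tri _ _ _ _ (hS.s2 h')
      have t2 := tri _ _ _ _ (hS.s2 h)
      obtain ⟨d1, d2, d3, d4, d5, d6⟩ := hS.de h
      obtain ⟨d1', d2', d3', d4', d5', d6'⟩ := hS.de h'
      have d7 := d2.ne
      have d8 := d2'.ne
      clear hcore hV tri
      grind
    rcases tri _ _ _ _ h with hu | hv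
    · rcases tri _ _ _ _ (hS.s2 h) with hw | hz
      · exact main _ _ _ _ h hu hw
      · exact main _ _ _ _ (hS.s2 (hS.s1 (hS.s2 h))) hu hz
    · rcases tri _ _ _ _ (hS.s2 h) with hw | hz
      · exact main _ _ _ _ (hS.s1 h) hv hw
      · exact main _ _ _ _ (hS.s1 (hS.s2 (hS.s1 (hS.s2 h)))) hv hz

end BaseSec

/-! ### Existence of a short cycle -/

section Short
variable {V : Type} [Fintype V] [DecidableEq V] {Γ : SimpleGraph V}

/-- The vertices outside `C` which have a neighbour. -/
def out (Γ : SimpleGraph V) (C : Set V) : Set V := {v | v ∉ C ∧ ∃ w, Γ.Adj v w}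

theorem not_mem_out {C : Set V} {u v : V} (h : Γ.Adj u v) (hv : v ∉ out Γ C) : v ∈ C := by
  by_contra hC
  exact hv ⟨hC, u, h.symm⟩

theorem not_hasC_out (hN : NoDC Γ) {C : Set V} (hC : HasC Γ C) : ¬ HasC Γ (out Γ C) :=
  fun h => hN.elim hC h (fun _ h1 h2 => h2.1 h1)

theorem seg_eq (p : ℕ → V) (i j : ℕ) (v : V) : v ∈ seg p i j ↔ v ∈ (Finset.Icc i j).image p := by
  simp [mem_seg_iff, and_assoc]

/-- A graph of minimal degree three without disjoint cycles has a cycle of length three or four. -/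
theorem exists_short (hN : NoDC Γ) (hD : Deg3 Γ) {u₀ v₀ : V} (he : Γ.Adj u₀ v₀) :
    (∃ x y z, Γ.Adj x y ∧ Γ.Adj y z ∧ Γ.Adj x z) ∨
    ∃ a b c d, Γ.Adj a b ∧ Γ.Adj b c ∧ Γ.Adj c d ∧ Γ.Adj a d ∧ a ≠ c ∧ b ≠ d := by
  have hex : ∃ n, ∃ W : Finset V, Cyc Γ W ∧ W.card = n := by
    refine ⟨_, Finset.univ.filter (fun v => ∃ w, Γ.Adj v w), ⟨⟨u₀, by simpa using ⟨v₀, he⟩⟩, ?_⟩, rfl⟩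
    intro v hv
    obtain ⟨w, hw⟩ := (Finset.mem_filter.1 hv).2
    obtain ⟨z, hz, hzw, -⟩ := hD v w hw w w
    exact ⟨w, by simpa using ⟨v, hw.symm⟩, z, by simpa using ⟨v, hz.symm⟩, hzw.symm, hw, hz⟩
  obtain ⟨W, hW, hWn⟩ := Nat.find_spec hex
  have hmin : ∀ (T : Finset V) {U : Set V}, HasC Γ U → (∀ v ∈ U, v ∈ T) →
      W.card ≤ T.card := by
    rintro T U ⟨W', hW', hc⟩ hUT
    rw [hWn]
    exact (Nat.find_min' hex ⟨W', hc, rfl⟩).trans (Finset.card_le_card fun v hv => hUT v (hW' v hv))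
  obtain ⟨w₀, hw₀⟩ := hW.1
  obtain ⟨p, k, hp⟩ := exists_LP (Γ := Γ) (U := {v | v ∈ W}) hw₀
  -- the minimal cycle is `p 0, …, p i`
  obtain ⟨i, hi2, hik, h0i⟩ : ∃ i, 2 ≤ i ∧ i ≤ k ∧ Γ.Adj (p 0) (p i) := by
    obtain ⟨x, hx, y, hy, hxy, h1, h2⟩ := hW.2 _ (hp.mem 0 (by omega))
    obtain ⟨s, hs, rfl⟩ := hp.start_mem hx h1
    obtain ⟨t, ht, rfl⟩ := hp.start_mem hy h2
    have : s ≠ 0 := by rintro rfl; exact h1.ne rfl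
    have : t ≠ 0 := by rintro rfl; exact h2.ne rfl
    have : s ≠ t := by rintro rfl; exact hxy rfl
    by_cases hs2 : 2 ≤ s
    exacts [⟨s, hs2, hs, h1⟩, ⟨t, by omega, ht, h2⟩]
  have hcard : ∀ s t, ((Finset.Icc s t).image p).card ≤ t + 1 - s := fun s t =>
    Finset.card_image_le.trans (by simp)
  have hWe : (Finset.Icc 0 i).image p = W := by
    apply Finset.eq_of_subset_of_card_le
    · intro v hv
      obtain ⟨m, hm, rfl⟩ := Finset.mem_image.1 hv
      exact hp.mem m (by rw [Finset.mem_Icc] at hm; omega)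
    · exact hmin _ (hp.toIsP.chord (by omega) hik h0i) fun v hv => (seg_eq _ _ _ _).1 hv
  have hWm : ∀ v, v ∈ W ↔ ∃ m, m ≤ i ∧ p m = v := fun v => by simp [← hWe]
  have hWc : W.card = i + 1 := by
    rw [← hWe, Finset.card_image_of_injOn, Nat.card_Icc]; · simp
    intro a ha b hb e
    simp only [Finset.coe_Icc, Set.mem_Icc] at ha hb
    exact hp.inj _ _ (by omega) (by omega) e
  have hWC : HasC Γ {v | v ∈ W} := ⟨W, fun v hv => hv, hW⟩
  have hU := not_hasC_out hN hWC
  -- a chord would give a shorter cycle, so there is a vertex outside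
  obtain ⟨z, hz⟩ : ∃ z, z ∈ out Γ {v | v ∈ W} := by
    obtain ⟨z, hz, z1, zi⟩ := hD _ _ h0i (p 1) (p i)
    refine ⟨z, fun hzW => ?_, _, hz.symm⟩
    obtain ⟨j, hj, rfl⟩ := (hWm z).1 hzW
    have : j ≠ 0 := by rintro rfl; exact hz.ne rfl
    have : j ≠ 1 := by rintro rfl; exact z1 rfl
    have : j ≠ i := by rintro rfl; exact zi rfl
    have h1 := hmin ((Finset.Icc 0 j).image p)
      (hp.toIsP.chord (i := 0) (j := j) (by omega) (by omega) hz)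
      fun v hv => (seg_eq _ _ _ _).1 hv
    have h2 := hcard 0 j
    omega
  obtain ⟨q, l, hq⟩ := exists_LP (Γ := Γ) hz
  obtain ⟨w, hw⟩ := (hq.mem 0 (by omega)).2
  obtain ⟨z1, z2, hne, h1, h2, o1, o2⟩ := hq.two_out hU hD hw
  have hu := (hq.mem 0 (by omega)).1
  set u := q 0
  obtain ⟨s, hs, e1⟩ := (hWm z1).1 (not_mem_out h1 o1)
  obtain ⟨t, ht, e2⟩ := (hWm z2).1 (not_mem_out h2 o2)
  have hup : ∀ m, m ≤ i → p m ≠ u := fun m hm e => hu ((hWm u).2 ⟨m, hm, e⟩)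
  -- both arcs between the two neighbours of `u` give cycles through `u`
  have main : ∀ s t, s < t → t ≤ i → Γ.Adj u (p s) → Γ.Adj u (p t) → i ≤ 3 := by
    intro s t hst ht hs1 ht1
    have c1 := hmin (insert u ((Finset.Icc s t).image p))
      (hp.toIsP.cone hst (by omega) (fun m _ h => hup m (by omega)) hs1 ht1) (by
        rintro v (rfl | hv)
        · exact Finset.mem_insert_self _ _
        · exact Finset.mem_insert_of_mem ((seg_eq _ _ _ _).1 hv))
    have j := ((hp.toIsP.joined ht hik).link (hp.toIsP.joined (Nat.zero_le s) (by omega)) (by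
      rintro v ⟨m, m1, m2, rfl⟩ ⟨m', m1', m2', e⟩
      have := hp.inj _ _ (by omega) (by omega) e
      omega) h0i.symm).cone (x := u) (by
        rintro (⟨m, m1, m2, e⟩ | ⟨m, m1, m2, e⟩)
        exacts [hup m (by omega) e, hup m (by omega) e]) ht1 hs1 (fun e => by
          have := hp.inj _ _ (by omega) (by omega) e
          omega)
    have c2 := hmin (insert u ((Finset.Icc t i).image p ∪ (Finset.Icc 0 s).image p)) j (by
        rintro v (rfl | hv | hv)
        · exact Finset.mem_insert_self _ _
        · exact Finset.mem_insert_of_mem (Finset.mem_union_left _ ((seg_eq _ _ _ _).1 hv))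
        · exact Finset.mem_insert_of_mem (Finset.mem_union_right _ ((seg_eq _ _ _ _).1 hv)))
    have d1 := Finset.card_insert_le u ((Finset.Icc s t).image p)
    have d2 := Finset.card_insert_le u ((Finset.Icc t i).image p ∪ (Finset.Icc 0 s).image p)
    have d3 := Finset.card_union_le ((Finset.Icc t i).image p) ((Finset.Icc 0 s).image p)
    have f1 := hcard s t
    have f2 := hcard t i
    have f3 := hcard 0 s
    omega
  have hi3 : i ≤ 3 := by
    subst e1 e2
    rcases lt_trichotomy s t with h | h | h
    · exact main s t h ht h1 h2
    · exact (hne (by rw [h])).elim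
    · exact main t s h hs h2 h1
  have a01 := hp.adj 0 (by omega)
  have a12 := hp.adj 1 (by omega)
  interval_cases i
  · exact Or.inl ⟨p 0, p 1, p 2, a01, a12, h0i⟩
  · refine Or.inr ⟨p 0, p 1, p 2, p 3, a01, a12, hp.adj 2 (by omega), h0i, fun e => ?_, fun e => ?_⟩ <;>
    · have := hp.inj _ _ (by omega) (by omega) e
      omega

end Short

/-! ### Graphs with a triangle -/

section TriSec
variable {V : Type} [Fintype V] [DecidableEq V] {Γ : SimpleGraph V}

/-- `C` is a triangle with vertices `x`, `y`, `z`. -/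
structure Tri (Γ : SimpleGraph V) (C : Set V) (x y z : V) : Prop where
  xy : Γ.Adj x y
  yz : Γ.Adj y z
  xz : Γ.Adj x z
  mem : ∀ v, v ∈ C ↔ v = x ∨ v = y ∨ v = z

variable {C : Set V} {x y z : V} {p : ℕ → V} {k : ℕ}

theorem Tri.rot (h : Tri Γ C x y z) : Tri Γ C y z x :=
  ⟨h.yz, h.xz.symm, h.xy.symm, fun v => by rw [h.mem]; tauto⟩

theorem Tri.swap (h : Tri Γ C x y z) : Tri Γ C x z y :=
  ⟨h.xz, h.yz.symm, h.xy, fun v => by rw [h.mem]; tauto⟩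

theorem Tri.hasC (h : Tri Γ C x y z) : HasC Γ C :=
  (hasC_tri h.xy h.yz h.xz).mono (by rintro v hv; exact (h.mem v).2 hv)

theorem Tri.not_mem (h : Tri Γ C x y z) {v : V} (hv : v ∈ out Γ C) : v ≠ x ∧ v ≠ y ∧ v ≠ z := by
  have := hv.1
  rw [h.mem] at this
  tauto

/-- The first vertex of a longest path outside the triangle sees two vertices of the triangle. -/
theorem Tri.two (h : Tri Γ C x y z) (hN : NoDC Γ) (hD : Deg3 Γ) (hp : LP Γ (out Γ C) p k) :
    (Γ.Adj (p 0) x ∧ Γ.Adj (p 0) y) ∨ (Γ.Adj (p 0) y ∧ Γ.Adj (p 0) z) ∨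
      (Γ.Adj (p 0) x ∧ Γ.Adj (p 0) z) := by
  obtain ⟨w, hw⟩ := (hp.mem 0 (by omega)).2
  obtain ⟨z1, z2, hne, h1, h2, o1, o2⟩ := hp.two_out (not_hasC_out hN h.hasC) hD hw
  have i1 := (h.mem _).1 (not_mem_out h1 o1)
  have i2 := (h.mem _).1 (not_mem_out h2 o2)
  rcases i1 with rfl | rfl | rfl <;> rcases i2 with rfl | rfl | rfl <;> first | exact absurd rfl hne | tauto

theorem Tri.two_end (h : Tri Γ C x y z) (hN : NoDC Γ) (hD : Deg3 Γ) (hp : LP Γ (out Γ C) p k) :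
    (Γ.Adj (p k) x ∧ Γ.Adj (p k) y) ∨ (Γ.Adj (p k) y ∧ Γ.Adj (p k) z) ∨
      (Γ.Adj (p k) x ∧ Γ.Adj (p k) z) := by
  simpa using h.two hN hD hp.rev

/-- The vertices off the longest path, when both of its ends are adjacent to `x`. -/
theorem Tri.rest (h : Tri Γ C x y z) (hN : NoDC Γ) (hD : Deg3 Γ) (hp : LP Γ (out Γ C) p k)
    (hk : 1 ≤ k) (x0 : Γ.Adj (p 0) x) (xk : Γ.Adj (p k) x) {r : V} (hr : r ∈ out Γ C)
    (hrp : ∀ m, m ≤ k → p m ≠ r) :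
    Γ.Adj r x ∧ (Γ.Adj r y ∨ Γ.Adj r z) ∧ ¬ (Γ.Adj r y ∧ Γ.Adj r z) ∧
      ∃ i, 0 < i ∧ i < k ∧ Γ.Adj r (p i) := by
  have hU := not_hasC_out hN h.hasC
  let R : Set V := {v | v ∈ out Γ C ∧ ∀ m, m ≤ k → p m ≠ v}
  have hRU : ¬ HasC Γ R := fun hc => hU (hc.mono fun v hv => hv.1)
  have hxP : ∀ m, m ≤ k → p m ≠ x := fun m hm => (h.not_mem (hp.mem m hm)).1
  have hyP : ∀ m, m ≤ k → p m ≠ y := fun m hm => (h.not_mem (hp.mem m hm)).2.1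
  have hzP : ∀ m, m ≤ k → p m ≠ z := fun m hm => (h.not_mem (hp.mem m hm)).2.2
  have nxy := h.xy.ne
  have nyz := h.yz.ne
  have nxz := h.xz.ne
  have cyc_xP : HasC Γ ({x} ∪ seg p 0 k) :=
    hp.toIsP.cone (by omega) le_rfl (fun m _ hm => hxP m hm) x0.symm xk.symm
  have cyc_yzP : HasC Γ ({y, z} ∪ seg p 0 k) := by
    obtain ⟨u, hu, hu'⟩ : ∃ u, (u = y ∨ u = z) ∧ Γ.Adj (p 0) u := by
      rcases h.two hN hD hp with h | h | h
      exacts [⟨y, Or.inl rfl, h.2⟩, ⟨y, Or.inl rfl, h.1⟩, ⟨z, Or.inr rfl, h.2⟩]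
    obtain ⟨v, hv, hv'⟩ : ∃ u, (u = y ∨ u = z) ∧ Γ.Adj (p k) u := by
      rcases h.two_end hN hD hp with h | h | h
      exacts [⟨y, Or.inl rfl, h.2⟩, ⟨y, Or.inl rfl, h.1⟩, ⟨z, Or.inr rfl, h.2⟩]
    refine (joined_pair_all h.yz hu hv).close (hp.toIsP.joined_all le_rfl (Nat.zero_le k)) ?_
      hv'.symm hu'.symm (Or.inr fun e => ?_)
    · rintro w (rfl | rfl) ⟨m, -, hm, e⟩
      exacts [hyP m hm e, hzP m hm e]
    · have := hp.inj _ _ (by omega) (by omega) e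
      omega
  -- no cycle avoids both `x` and the path
  have avoid : ∀ U' : Set V, HasC Γ U' → (∀ v ∈ U', v ≠ x ∧ ∀ m, m ≤ k → p m ≠ v) → False := by
    intro U' hc hU'
    refine hN.elim hc cyc_xP ?_
    rintro v hv (e | ⟨m, -, hm, e⟩)
    exacts [(hU' v hv).1 e, (hU' v hv).2 m hm e]
  have type : ∀ r ∈ R, ∀ v, Γ.Adj r v → v ∉ R → (∃ i, i ≤ k ∧ p i = v) ∨ v = x ∨ v = y ∨ v = z := by
    intro r hr v hv hvR
    by_contra hcon
    push Not at hcon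
    refine hvR ⟨⟨?_, r, hv.symm⟩, hcon.1⟩
    rw [h.mem]
    tauto
  have notyz : ∀ r ∈ R, ¬ (Γ.Adj r y ∧ Γ.Adj r z) := by
    rintro r hr ⟨h1, h2⟩
    refine avoid _ (hasC_tri h1 h.yz h2) ?_
    rintro v (rfl | rfl | rfl)
    exacts [⟨(h.not_mem hr.1).1, hr.2⟩, ⟨nxy.symm, hyP⟩, ⟨nxz.symm, hzP⟩]
  have uniqP : ∀ r ∈ R, ∀ i j, i ≤ k → j ≤ k → Γ.Adj r (p i) → Γ.Adj r (p j) → i = j :=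
    fun r hr i j hi hj => hp.unique hU hr.1 hr.2 hi hj
  obtain ⟨q, l, hq⟩ := exists_LP (Γ := Γ) (U := R) ⟨hr, hrp⟩
  -- an end of the longest path in the rest satisfies two of the three adjacencies
  have two : ∀ q, LP Γ R q l →
      (Γ.Adj (q 0) x ∧ ∃ i, i ≤ k ∧ Γ.Adj (q 0) (p i)) ∨
      (Γ.Adj (q 0) x ∧ (Γ.Adj (q 0) y ∨ Γ.Adj (q 0) z)) ∨
      ((∃ i, i ≤ k ∧ Γ.Adj (q 0) (p i)) ∧ (Γ.Adj (q 0) y ∨ Γ.Adj (q 0) z)) := by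
    intro q hq
    have hqR := hq.mem 0 (by omega)
    obtain ⟨w, hw⟩ := hqR.1.2
    obtain ⟨z1, z2, hne, h1, h2, o1, o2⟩ := hq.two_out hRU hD hw
    have n := notyz _ hqR
    rcases type _ hqR _ h1 o1 with ⟨i, hi, rfl⟩ | rfl | rfl | rfl <;>
    rcases type _ hqR _ h2 o2 with ⟨j, hj, rfl⟩ | rfl | rfl | rfl <;>
    first
    | exact absurd rfl hne
    | exact absurd (by rw [uniqP _ hqR _ _ hi hj h1 h2]) hne
    | exact (n ⟨h1, h2⟩).elim
    | exact (n ⟨h2, h1⟩).elim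
    | exact Or.inl ⟨h1, _, hj, h2⟩
    | exact Or.inl ⟨h2, _, hi, h1⟩
    | exact Or.inr (Or.inl ⟨h1, Or.inl h2⟩)
    | exact Or.inr (Or.inl ⟨h1, Or.inr h2⟩)
    | exact Or.inr (Or.inl ⟨h2, Or.inl h1⟩)
    | exact Or.inr (Or.inl ⟨h2, Or.inr h1⟩)
    | exact Or.inr (Or.inr ⟨⟨_, hi, h1⟩, Or.inl h2⟩)
    | exact Or.inr (Or.inr ⟨⟨_, hi, h1⟩, Or.inr h2⟩)
    | exact Or.inr (Or.inr ⟨⟨_, hj, h2⟩, Or.inl h1⟩)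
    | exact Or.inr (Or.inr ⟨⟨_, hj, h2⟩, Or.inr h1⟩)
  have hqx : ∀ m, m ≤ l → q m ≠ x := fun m hm => (h.not_mem (hq.mem m hm).1).1
  have hl : l = 0 := by
    by_contra hl
    have hql : q 0 ≠ q l := fun e => by
      have := hq.inj _ _ (by omega) (by omega) e
      omega
    have t0 := two q hq
    have tl : _ := two _ hq.rev
    simp only [Nat.sub_zero] at tl
    have notPP : ¬ ((∃ i, i ≤ k ∧ Γ.Adj (q 0) (p i)) ∧ ∃ i, i ≤ k ∧ Γ.Adj (q l) (p i)) := by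
      rintro ⟨⟨i, hi, h1⟩, j, hj, h2⟩
      refine hU (((hq.toIsP.joined_all (Nat.zero_le l) le_rfl).close (hp.toIsP.joined_all hj hi) ?_
        h2 h1 (Or.inl hql)).mono ?_)
      · rintro v ⟨m, -, hm, rfl⟩ ⟨m', -, hm', e⟩
        exact (hq.mem m hm).2 m' hm' e
      · rintro v (⟨m, -, hm, rfl⟩ | ⟨m, -, hm, rfl⟩)
        exacts [(hq.mem m hm).1, hp.mem m hm]
    have notYY : ¬ ((Γ.Adj (q 0) y ∨ Γ.Adj (q 0) z) ∧ (Γ.Adj (q l) y ∨ Γ.Adj (q l) z)) := by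
      rintro ⟨h1, h2⟩
      obtain ⟨u, hu, hu'⟩ : ∃ u, (u = y ∨ u = z) ∧ Γ.Adj (q 0) u := by
        rcases h1 with h1 | h1
        exacts [⟨y, Or.inl rfl, h1⟩, ⟨z, Or.inr rfl, h1⟩]
      obtain ⟨v, hv, hv'⟩ : ∃ u, (u = y ∨ u = z) ∧ Γ.Adj (q l) u := by
        rcases h2 with h1 | h1
        exacts [⟨y, Or.inl rfl, h1⟩, ⟨z, Or.inr rfl, h1⟩]
      refine avoid _ ((hq.toIsP.joined_all (Nat.zero_le l) le_rfl).close
        (joined_pair_all h.yz hv hu) ?_ hv' hu' (Or.inl hql)) ?_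
      · rintro w ⟨m, -, hm, rfl⟩ hw
        have := h.not_mem (hq.mem m hm).1
        rcases hw with hw | hw
        exacts [this.2.1 hw, this.2.2 hw]
      · rintro w (⟨m, -, hm, rfl⟩ | rfl | rfl)
        exacts [⟨hqx m hm, (hq.mem m hm).2⟩, ⟨nxy.symm, hyP⟩, ⟨nxz.symm, hzP⟩]
    have hx0 : Γ.Adj (q 0) x := by
      rcases t0 with t0 | t0 | t0
      · exact t0.1
      · exact t0.1
      · rcases tl with tl | tl | tl
        exacts [(notPP ⟨t0.1, tl.2⟩).elim, (notYY ⟨t0.2, tl.2⟩).elim, (notYY ⟨t0.2, tl.2⟩).elim]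
    have hxl : Γ.Adj (q l) x := by
      rcases tl with tl | tl | tl
      · exact tl.1
      · exact tl.1
      · rcases t0 with t0 | t0 | t0
        exacts [(notPP ⟨t0.2, tl.1⟩).elim, (notYY ⟨t0.2, tl.2⟩).elim, (notYY ⟨t0.2, tl.2⟩).elim]
    refine hN.elim (hq.toIsP.cone (Nat.pos_of_ne_zero hl) le_rfl (fun m _ hm => hqx m hm)
      hx0.symm hxl.symm) cyc_yzP ?_
    rintro v (rfl | ⟨m, -, hm, rfl⟩) (e | ⟨m', -, hm', e⟩)
    · rcases e with e | e
      exacts [nxy e, nxz e]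
    · exact hxP m' hm' e
    · have := h.not_mem (hq.mem m hm).1
      rcases e with e | e
      exacts [this.2.1 e, this.2.2 e]
    · exact (hq.mem m hm).2 m' hm' e
  subst hl
  have hrR : r ∈ R := ⟨hr, hrp⟩
  -- the rest has no edges, so `r` satisfies all three adjacencies
  have hr0 : LP Γ R (fun _ => r) 0 :=
    ⟨⟨fun i j _ _ _ => by omega, fun i hi => by omega⟩, fun _ _ => hrR, hq.max⟩
  have noR : ∀ v, Γ.Adj r v → v ∉ R := fun v hv hvR => by
    have := (hr0.start hRU hvR hv).1
    omega
  have hx : Γ.Adj r x := by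
    by_contra hx
    have t := two _ hr0
    have t' : (∃ i, i ≤ k ∧ Γ.Adj r (p i)) ∧ (Γ.Adj r y ∨ Γ.Adj r z) := by
      rcases t with t | t | t
      exacts [(hx t.1).elim, (hx t.1).elim, t]
    obtain ⟨⟨i, hi, h1⟩, h2⟩ := t'
    obtain ⟨u, hu, hu'⟩ : ∃ u, (u = y ∨ u = z) ∧ Γ.Adj r u := by
      rcases h2 with h1 | h1
      exacts [⟨y, Or.inl rfl, h1⟩, ⟨z, Or.inr rfl, h1⟩]
    obtain ⟨w, hw, w1, w2⟩ := hD _ _ h1 (p i) u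
    have n := notyz r hrR
    rcases type r hrR w hw (noR w hw) with ⟨j, hj, rfl⟩ | rfl | rfl | rfl
    · exact w1 (by rw [uniqP r hrR _ _ hj hi hw h1])
    · exact hx hw
    · rcases hu with rfl | rfl
      exacts [w2 rfl, n ⟨hw, hu'⟩]
    · rcases hu with rfl | rfl
      exacts [n ⟨hu', hw⟩, w2 rfl]
  have hyz : Γ.Adj r y ∨ Γ.Adj r z := by
    by_contra hyz
    have t := two _ hr0
    have t' : ∃ i, i ≤ k ∧ Γ.Adj r (p i) := by
      rcases t with t | t | t
      exacts [t.2, (hyz t.2).elim, t.1]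
    obtain ⟨i, hi, h1⟩ := t'
    obtain ⟨w, hw, w1, w2⟩ := hD _ _ h1 (p i) x
    rcases type r hrR w hw (noR w hw) with ⟨j, hj, rfl⟩ | rfl | rfl | rfl
    · exact w1 (by rw [uniqP r hrR _ _ hj hi hw h1])
    · exact w2 rfl
    · exact hyz (Or.inl hw)
    · exact hyz (Or.inr hw)
  have hP : ∃ i, i ≤ k ∧ Γ.Adj r (p i) := by
    obtain ⟨u, hu, hu'⟩ : ∃ u, (u = y ∨ u = z) ∧ Γ.Adj r u := by
      rcases hyz with h1 | h1
      exacts [⟨y, Or.inl rfl, h1⟩, ⟨z, Or.inr rfl, h1⟩]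
    obtain ⟨w, hw, w1, w2⟩ := hD _ _ hx x u
    have n := notyz r hrR
    rcases type r hrR w hw (noR w hw) with ⟨j, hj, rfl⟩ | rfl | rfl | rfl
    · exact ⟨j, hj, hw⟩
    · exact (w1 rfl).elim
    · rcases hu with rfl | rfl
      exacts [(w2 rfl).elim, (n ⟨hw, hu'⟩).elim]
    · rcases hu with rfl | rfl
      exacts [(n ⟨hu', hw⟩).elim, (w2 rfl).elim]
  obtain ⟨i, hi, h1⟩ := hP
  refine ⟨hx, hyz, notyz r hrR, i, Nat.pos_of_ne_zero ?_, lt_of_le_of_ne hi ?_, h1⟩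
  · rintro rfl
    exact hrp 1 hk (hp.start hU hr h1.symm).2.symm
  · rintro rfl
    exact hrp _ (by omega) (hp.finish hU hr h1.symm).2.symm

end TriSec

section TriSec2
variable {V : Type} [Fintype V] [DecidableEq V] {Γ : SimpleGraph V}
variable {C : Set V} {a b c : V} {p : ℕ → V} {k : ℕ}

/-- If a longest path spans the complement of the triangle, `b` sees no vertex of it but the first
and `c` no vertex but the last, then `Γ` is a wheel with hub `a` and rim `b, p 0, …, p k, c`. -/
theorem tri_wheel (h : Tri Γ C a b c) (hN : NoDC Γ) (hp : LP Γ (out Γ C) p k)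
    (hall : ∀ v ∈ out Γ C, ∃ i, i ≤ k ∧ p i = v)
    (hb : ∀ i, i ≤ k → Γ.Adj b (p i) → i = 0) (hc : ∀ i, i ≤ k → Γ.Adj c (p i) → i = k) :
    Good Γ := by
  have hU := not_hasC_out hN h.hasC
  let q : ℕ → V := fun i => if i = 0 then b else if i ≤ k + 1 then p (i - 1) else c
  have q0 : q 0 = b := by simp [q]
  have qm : q (k + 2) = c := by simp [q]
  have qi : ∀ i, i ≤ k → q (i + 1) = p i := fun i hi => by simp [q, hi]
  have hP : ∀ m, m ≤ k → p m ≠ a ∧ p m ≠ b ∧ p m ≠ c := fun m hm => h.not_mem (hp.mem m hm)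
  have idx : ∀ i, i ≤ k + 2 → i = 0 ∨ i = k + 2 ∨ ∃ j, j ≤ k ∧ i = j + 1 := by
    intro i hi
    rcases Nat.eq_zero_or_pos i with h0 | h0
    · exact Or.inl h0
    · by_cases h1 : i = k + 2
      exacts [Or.inr (Or.inl h1), Or.inr (Or.inr ⟨i - 1, by omega, by omega⟩)]
  have hclass : ∀ u v, Γ.Adj u v → v ≠ a → v = b ∨ v = c ∨ ∃ j, j ≤ k ∧ p j = v := by
    intro u v huv hva
    by_cases hv : v ∈ out Γ C
    · exact Or.inr (Or.inr (hall v hv))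
    · rcases (h.mem v).1 (not_mem_out huv hv) with e | e | e
      exacts [(hva e).elim, Or.inl e, Or.inr (Or.inl e)]
  refine wheel_good (a := a) (q := q) (m := k + 2) ?_ ?_ ?_
  · intro i j hi hj e
    rcases idx i hi with rfl | rfl | ⟨i', hi', rfl⟩ <;>
    rcases idx j hj with rfl | rfl | ⟨j', hj', rfl⟩
    · rfl
    · rw [q0, qm] at e; exact (h.yz.ne e).elim
    · rw [q0, qi _ hj'] at e; exact ((hP _ hj').2.1 e.symm).elim
    · rw [q0, qm] at e; exact (h.yz.ne e.symm).elim
    · rfl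
    · rw [qm, qi _ hj'] at e; exact ((hP _ hj').2.2 e.symm).elim
    · rw [q0, qi _ hi'] at e; exact ((hP _ hi').2.1 e).elim
    · rw [qm, qi _ hi'] at e; exact ((hP _ hi').2.2 e).elim
    · rw [qi _ hi', qi _ hj'] at e; rw [hp.inj _ _ hi' hj' e]
  · intro d hd
    rcases hclass _ _ hd hd.ne' with rfl | rfl | ⟨j, hj, rfl⟩
    exacts [⟨0, by omega, q0⟩, ⟨k + 2, le_rfl, qm⟩, ⟨j + 1, by omega, qi j hj⟩]
  · intro u v huv hu hv
    rcases hclass _ _ huv.symm hu with rfl | rfl | ⟨i, hi, rfl⟩ <;>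
    rcases hclass _ _ huv hv with rfl | rfl | ⟨j, hj, rfl⟩
    · exact (huv.ne rfl).elim
    · exact Or.inr (Or.inl ⟨q0, qm⟩)
    · obtain rfl := hb j hj huv
      exact Or.inl ⟨0, by omega, Or.inl ⟨q0, qi 0 hj⟩⟩
    · exact Or.inr (Or.inr ⟨q0, qm⟩)
    · exact (huv.ne rfl).elim
    · obtain rfl := hc j hj huv
      exact Or.inl ⟨j + 1, by omega, Or.inr ⟨qi j hj, qm⟩⟩
    · obtain rfl := hb i hi huv.symm
      exact Or.inl ⟨0, by omega, Or.inr ⟨q0, qi 0 hi⟩⟩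
    · obtain rfl := hc i hi huv.symm
      exact Or.inl ⟨i + 1, by omega, Or.inl ⟨qi i hi, qm⟩⟩
    · have hij : i ≠ j := by rintro rfl; exact huv.ne rfl
      rcases lt_or_gt_of_ne hij with hlt | hlt
      · obtain rfl := hp.induced hU hlt hj huv
        exact Or.inl ⟨i + 1, by omega, Or.inl ⟨qi i hi, qi _ hj⟩⟩
      · obtain rfl := hp.induced hU hlt hi huv.symm
        exact Or.inl ⟨j + 1, by omega, Or.inr ⟨qi j hj, qi _ hi⟩⟩

/-- When there are no edges outside the triangle, every outside vertex sees all of `a`, `b`, `c`.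
At most one such vertex gives a subgraph of `K₄`, two give `K₅` minus an edge, and three give
`K₃,₃`. -/
theorem tri_zero (h : Tri Γ C a b c) (hN : NoDC Γ) (hL : Lift Γ) (hD : Deg3 Γ)
    (hp : LP Γ (out Γ C) p 0) : Good Γ := by
  have hU := not_hasC_out hN h.hasC
  have hnb : ∀ u ∈ out Γ C, ∀ v, Γ.Adj u v → v = a ∨ v = b ∨ v = c := by
    intro u hu v huv
    have hu0 : LP Γ (out Γ C) (fun _ => u) 0 :=
      ⟨⟨fun i j _ _ _ => by omega, fun i hi => by omega⟩, fun _ _ => hu, hp.max⟩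
    refine (h.mem v).1 (not_mem_out huv fun hv => ?_)
    have := (hu0.start hU hv huv).1
    omega
  have hadj : ∀ u ∈ out Γ C, Γ.Adj u a ∧ Γ.Adj u b ∧ Γ.Adj u c := by
    intro u hu
    obtain ⟨w, hw⟩ := hu.2
    refine ⟨?_, ?_, ?_⟩
    · obtain ⟨z, hz, h1, h2⟩ := hD u w hw b c
      rcases hnb u hu z hz with rfl | rfl | rfl
      exacts [hz, (h1 rfl).elim, (h2 rfl).elim]
    · obtain ⟨z, hz, h1, h2⟩ := hD u w hw a c
      rcases hnb u hu z hz with rfl | rfl | rfl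
      exacts [(h1 rfl).elim, hz, (h2 rfl).elim]
    · obtain ⟨z, hz, h1, h2⟩ := hD u w hw a b
      rcases hnb u hu z hz with rfl | rfl | rfl
      exacts [(h1 rfl).elim, (h2 rfl).elim, hz]
  have h0 := hp.mem 0 le_rfl
  have a0 := hadj _ h0
  by_cases h1 : ∀ v ∈ out Γ C, p 0 = v
  · exact tri_wheel h hN hp (fun v hv => ⟨0, le_rfl, h1 v hv⟩) (fun i hi _ => by omega)
      (fun i hi _ => by omega)
  · push Not at h1
    obtain ⟨u, hu, hne⟩ := h1
    have au := hadj _ hu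
    by_cases h2 : ∀ v ∈ out Γ C, v = p 0 ∨ v = u
    · refine k5minus_good h.xy.ne h.xz.ne a0.1.ne' au.1.ne' h.yz.ne a0.2.1.ne' au.2.1.ne'
        a0.2.2.ne' au.2.2.ne' hne (fun hadj' => ?_) ?_
      · rcases hnb _ h0 _ hadj' with e | e | e
        exacts [au.1.ne e, au.2.1.ne e, au.2.2.ne e]
      · intro v w hvw
        by_cases hv : v ∈ out Γ C
        · rcases h2 v hv with e | e <;> simp [e]
        · rcases (h.mem v).1 (not_mem_out hvw.symm hv) with e | e | e <;> simp [e]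
    · push Not at h2
      obtain ⟨w, hw, n1, n2⟩ := h2
      have aw := hadj _ hw
      exact (no_K33' hL h.xy.ne h.xz.ne h.yz.ne hne n1.symm n2.symm a0.1.symm au.1.symm aw.1.symm
        a0.2.1.symm au.2.1.symm aw.2.1.symm a0.2.2.symm au.2.2.symm aw.2.2.symm).elim

/-- The ends of the longest path cannot both see exactly `a` and `b`: a third neighbour of `c`
would lie inside the path and `theta_false` would apply. -/
theorem tri_two (h : Tri Γ C a b c) (hN : NoDC Γ) (hL : Lift Γ) (hD : Deg3 Γ)
    (hp : LP Γ (out Γ C) p k) (hk : 1 ≤ k) (a0 : Γ.Adj (p 0) a) (b0 : Γ.Adj (p 0) b)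
    (c0 : ¬ Γ.Adj (p 0) c) (ak : Γ.Adj (p k) a) (bk : Γ.Adj (p k) b) (ck : ¬ Γ.Adj (p k) c) :
    False := by
  have hU := not_hasC_out hN h.hasC
  have hP : ∀ m, m ≤ k → p m ≠ a ∧ p m ≠ b ∧ p m ≠ c := fun m hm => h.not_mem (hp.mem m hm)
  have hrest : ∀ r ∈ out Γ C, (∀ m, m ≤ k → p m ≠ r) → Γ.Adj r a ∧ ¬ Γ.Adj r c := by
    intro r hr hrp
    obtain ⟨ra, -, n, -⟩ := h.rest hN hD hp hk a0 ak hr hrp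
    obtain ⟨rb, -⟩ := h.rot.rest hN hD hp hk b0 bk hr hrp
    exact ⟨ra, fun rc => n ⟨rb, rc⟩⟩
  obtain ⟨z, hz, z1, z2⟩ := hD c a h.xz.symm a b
  obtain ⟨j, hj, rfl⟩ : ∃ j, j ≤ k ∧ p j = z := by
    by_cases hzo : z ∈ out Γ C
    · by_contra hcon
      push Not at hcon
      exact (hrest z hzo hcon).2 hz.symm
    · rcases (h.mem z).1 (not_mem_out hz hzo) with e | e | e
      exacts [(z1 e).elim, (z2 e).elim, (hz.ne e.symm).elim]
  have hj0 : 0 < j := Nat.pos_of_ne_zero (by rintro rfl; exact c0 hz.symm)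
  have hjk : j < k := lt_of_le_of_ne hj (by rintro rfl; exact ck hz.symm)
  refine theta_false hN hL hD hp.toIsP (fun i j hij hj => hp.induced hU hij hj)
    (fun m hm => (hP m hm).1) (fun m hm => (hP m hm).2.1) (fun m hm => (hP m hm).2.2)
    h.xy.ne a0.symm ak.symm b0.symm bk.symm h.xz.symm h.yz.symm hj0 hjk hz ?_
  intro v i _ _ hv n1 n2 n3 hvp
  refine (hrest v ⟨?_, _, hv⟩ hvp).1
  rw [h.mem]
  rintro (e | e | e)
  exacts [n1 e, n2 e, n3 e]

/-- If both ends see `a` and a vertex `r` off the path sees `b`, the first vertex does not see `c`: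
otherwise the triangle `a`, `c`, `p 0` is disjoint from a cycle through `r`, `b` and a final piece
of the path. -/
theorem tri_R1 (h : Tri Γ C a b c) (hN : NoDC Γ) (hD : Deg3 Γ)
    (hp : LP Γ (out Γ C) p k) (hk : 1 ≤ k) (a0 : Γ.Adj (p 0) a) (ak : Γ.Adj (p k) a)
    {r : V} (hr : r ∈ out Γ C) (hrp : ∀ m, m ≤ k → p m ≠ r) (rb : Γ.Adj r b)
    (c0 : Γ.Adj (p 0) c) : False := by
  obtain ⟨ra, -, n, i, hi0, hik, hri⟩ := h.rest hN hD hp hk a0 ak hr hrp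
  have ck : ¬ Γ.Adj (p k) c := fun ck =>
    n ⟨rb, (h.rot.rot.rest hN hD hp hk c0 ck hr hrp).1⟩
  have bk : Γ.Adj (p k) b := by
    rcases h.two_end hN hD hp with t | t | t
    exacts [t.2, t.1, (ck t.2).elim]
  have hP : ∀ m, m ≤ k → p m ≠ a ∧ p m ≠ b ∧ p m ≠ c := fun m hm => h.not_mem (hp.mem m hm)
  have hr' := h.not_mem hr
  refine hN.elim (hasC_tri h.xz c0.symm a0.symm) (hp.toIsP.cone2 hik.le le_rfl rb
    (fun m _ hm => hrp m hm) (fun m _ hm => (hP m hm).2.1) hri bk.symm) ?_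
  have h1 := h.xy.ne
  have h2 := h.yz.ne
  have hinj := hp.inj
  intro v h1 h2
  simp only [Set.mem_union, Set.mem_insert_iff, Set.mem_singleton_iff, mem_seg_iff] at h1 h2
  grind

/-- Hence both ends see exactly `a` and `b`, which `tri_two` excludes. -/
theorem tri_R2 (h : Tri Γ C a b c) (hN : NoDC Γ) (hL : Lift Γ) (hD : Deg3 Γ)
    (hp : LP Γ (out Γ C) p k) (hk : 1 ≤ k) (a0 : Γ.Adj (p 0) a) (ak : Γ.Adj (p k) a)
    {r : V} (hr : r ∈ out Γ C) (hrp : ∀ m, m ≤ k → p m ≠ r) (rb : Γ.Adj r b) : False := by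
  have c0 : ¬ Γ.Adj (p 0) c := tri_R1 h hN hD hp hk a0 ak hr hrp rb
  have ck : ¬ Γ.Adj (p k) c := fun ck => by
    refine tri_R1 h hN hD hp.rev hk (by simpa using ak) (by simpa using a0) hr
      (fun m _ => hrp _ (by omega)) rb (by simpa using ck)
  refine tri_two h hN hL hD hp hk a0 ?_ c0 ak ?_ ck
  · rcases h.two hN hD hp with t | t | t
    exacts [t.2, t.1, (c0 t.2).elim]
  · rcases h.two_end hN hD hp with t | t | t
    exacts [t.2, t.1, (ck t.2).elim]

/-- If both ends of the longest path see `a`, the path spans the complement of the triangle. -/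
theorem tri_R3 (h : Tri Γ C a b c) (hN : NoDC Γ) (hL : Lift Γ) (hD : Deg3 Γ)
    (hp : LP Γ (out Γ C) p k) (hk : 1 ≤ k) (a0 : Γ.Adj (p 0) a) (ak : Γ.Adj (p k) a)
    {r : V} (hr : r ∈ out Γ C) : ∃ i, i ≤ k ∧ p i = r := by
  by_contra hrp
  push Not at hrp
  rcases (h.rest hN hD hp hk a0 ak hr hrp).2.1 with rb | rc
  · exact tri_R2 h hN hL hD hp hk a0 ak hr hrp rb
  · exact tri_R2 h.swap hN hL hD hp hk a0 ak hr hrp rc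

/-- A longest path with at least one edge in the complement of a triangle is spanning there. -/
theorem tri_all (h : Tri Γ C a b c) (hN : NoDC Γ) (hL : Lift Γ) (hD : Deg3 Γ)
    (hp : LP Γ (out Γ C) p k) (hk : 1 ≤ k) : ∀ r ∈ out Γ C, ∃ i, i ≤ k ∧ p i = r := by
  intro r hr
  have A := fun a0 ak => tri_R3 h hN hL hD hp hk a0 ak hr
  have B := fun a0 ak => tri_R3 h.rot hN hL hD hp hk a0 ak hr
  have D := fun a0 ak => tri_R3 h.rot.rot hN hL hD hp hk a0 ak hr
  rcases h.two hN hD hp with t | t | t <;> rcases h.two_end hN hD hp with s | s | s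
  exacts [A t.1 s.1, B t.2 s.1, A t.1 s.1, B t.1 s.2, B t.1 s.1, D t.2 s.2, A t.1 s.1, D t.2 s.2,
    A t.1 s.1]

/-- The case where the first vertex sees the whole triangle and the last one sees `b` and `c`. Each
triangle vertex sees at most one vertex of the path after the first, so the path is short: length
one gives `K₅` minus an edge or the excluded `K₅`, length two gives `K₃,₃`. -/
theorem tri_three (h : Tri Γ C a b c) (hN : NoDC Γ) (hL : Lift Γ) (hD : Deg3 Γ)
    (hp : LP Γ (out Γ C) p k) (hk : 1 ≤ k) (a0 : Γ.Adj (p 0) a) (b0 : Γ.Adj (p 0) b)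
    (c0 : Γ.Adj (p 0) c) (bk : Γ.Adj (p k) b) (ck : Γ.Adj (p k) c) : Good Γ := by
  have hU := not_hasC_out hN h.hasC
  have hall := tri_all h hN hL hD hp hk
  have hP : ∀ m, m ≤ k → p m ≠ a ∧ p m ≠ b ∧ p m ≠ c := fun m hm => h.not_mem (hp.mem m hm)
  have uniq : ∀ x y z, Tri Γ C x y z → Γ.Adj (p 0) y → Γ.Adj (p 0) z →
      ∀ i j, 1 ≤ i → i < j → j ≤ k → Γ.Adj x (p i) → Γ.Adj x (p j) → False := by
    intro x y z h' y0 z0 i j hi hij hj hxi hxj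
    have hP' : ∀ m, m ≤ k → p m ≠ x ∧ p m ≠ y ∧ p m ≠ z := fun m hm => h'.not_mem (hp.mem m hm)
    refine hN.elim (hp.toIsP.cone hij hj (fun m _ hm => (hP' m (by omega)).1) hxi hxj)
      (hasC_tri h'.yz z0.symm y0.symm) ?_
    have h1 := h'.xy.ne
    have h2 := h'.xz.ne
    have hinj := hp.inj
    clear hall hP hU
    intro v h1 h2
    simp only [Set.mem_union, Set.mem_insert_iff, Set.mem_singleton_iff, mem_seg_iff] at h1 h2
    grind
  have uA := uniq a b c h b0 c0
  have uB := uniq b c a h.rot c0 a0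
  have uC := uniq c a b h.rot.rot a0 b0
  have third : ∀ i, 1 ≤ i → i < k → Γ.Adj (p i) a ∧ ¬ Γ.Adj (p i) b ∧ ¬ Γ.Adj (p i) c := by
    intro i hi hik
    have nb : ¬ Γ.Adj (p i) b := fun hb => uB i k hi hik le_rfl hb.symm bk.symm
    have nc : ¬ Γ.Adj (p i) c := fun hb => uC i k hi hik le_rfl hb.symm ck.symm
    refine ⟨?_, nb, nc⟩
    obtain ⟨z, hz, z1, z2⟩ := hD _ _ (hp.adj i hik) (p (i - 1)) (p (i + 1))
    by_cases hzo : z ∈ out Γ C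
    · obtain ⟨j, hj, rfl⟩ := hall z hzo
      have hij : i ≠ j := by rintro rfl; exact hz.ne rfl
      rcases lt_or_gt_of_ne hij with hlt | hlt
      · rw [hp.induced hU hlt hj hz] at z2
        exact (z2 rfl).elim
      · have := hp.induced hU hlt hik.le hz.symm
        exact (z1 (by congr 1; omega)).elim
    · rcases (h.mem z).1 (not_mem_out hz hzo) with rfl | rfl | rfl
      exacts [hz, (nb hz).elim, (nc hz).elim]
  have e01 : Γ.Adj (p 0) (p 1) := hp.adj 0 (by omega)
  rcases hk.eq_or_lt with hk1 | hk1
  · subst hk1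
    by_cases ak : Γ.Adj (p 1) a
    · exact (no_K5 hL h.xy.ne h.xz.ne a0.ne' ak.ne' h.yz.ne b0.ne' bk.ne' c0.ne' ck.ne' e01.ne
        h.xy h.xz a0.symm ak.symm h.yz b0.symm bk.symm c0.symm ck.symm e01).elim
    · refine k5minus_good (a := b) (b := c) (c := p 0) (x := p 1) (y := a) h.yz.ne b0.ne' bk.ne'
        h.xy.ne' c0.ne' ck.ne' h.xz.ne' e01.ne a0.ne (hP 1 le_rfl).1 ak ?_
      intro u v huv
      by_cases hu : u ∈ out Γ C
      · obtain ⟨i, hi, rfl⟩ := hall u hu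
        rcases (by omega : i = 0 ∨ i = 1) with rfl | rfl <;> simp
      · rcases (h.mem u).1 (not_mem_out huv.symm hu) with e | e | e <;> simp [e]
  · have t1 := (third 1 le_rfl hk1).1
    by_cases hk2 : 2 < k
    · exact (uA 1 2 le_rfl (by omega) (by omega) t1.symm (third 2 (by omega) hk2).1.symm).elim
    · obtain rfl : k = 2 := by omega
      have e12 : Γ.Adj (p 1) (p 2) := hp.adj 1 (by omega)
      have n02 : p 0 ≠ p 2 := fun e => by
        have := hp.inj _ _ (by omega) (by omega) e
        omega
      exact (no_K33' hL (hP 2 le_rfl).1 n02.symm a0.ne' (hP 1 (by omega)).2.1 (hP 1 (by omega)).2.2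
        h.yz.ne e12.symm bk ck t1.symm h.xy h.xz e01 b0 c0).elim

/-- If the ends see exactly `a, b` and exactly `a, c`, then `Γ` is a wheel with hub `a`. -/
theorem tri_mixed (h : Tri Γ C a b c) (hN : NoDC Γ) (hL : Lift Γ) (hD : Deg3 Γ)
    (hp : LP Γ (out Γ C) p k) (hk : 1 ≤ k) (a0 : Γ.Adj (p 0) a) (b0 : Γ.Adj (p 0) b)
    (c0 : ¬ Γ.Adj (p 0) c) (ak : Γ.Adj (p k) a) (ck : Γ.Adj (p k) c) (bk : ¬ Γ.Adj (p k) b) :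
    Good Γ := by
  have hP : ∀ m, m ≤ k → p m ≠ a ∧ p m ≠ b ∧ p m ≠ c := fun m hm => h.not_mem (hp.mem m hm)
  have hinj := hp.inj
  have n1 := h.xy.ne
  have n2 := h.xz.ne
  have n3 := h.yz.ne
  refine tri_wheel h hN hp (tri_all h hN hL hD hp hk) ?_ ?_
  · intro i hi hbi
    by_contra hi0
    have hik : i < k := lt_of_le_of_ne hi (by rintro rfl; exact bk hbi.symm)
    refine hN.elim (hp.toIsP.cone (Nat.pos_of_ne_zero hi0) hi
      (fun m _ hm => (hP m (by omega)).2.1) b0.symm hbi) (hasC_tri h.xz ck.symm ak.symm) ?_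
    intro v h1 h2
    simp only [Set.mem_union, Set.mem_insert_iff, Set.mem_singleton_iff, mem_seg_iff] at h1 h2
    grind
  · intro i hi hci
    by_contra hik'
    have hi0 : 0 < i := Nat.pos_of_ne_zero (by rintro rfl; exact c0 hci.symm)
    refine hN.elim (hp.toIsP.cone (lt_of_le_of_ne hi hik') le_rfl
      (fun m _ hm => (hP m hm).2.2) hci ck.symm) (hasC_tri h.xy b0.symm a0.symm) ?_
    intro v h1 h2
    simp only [Set.mem_union, Set.mem_insert_iff, Set.mem_singleton_iff, mem_seg_iff] at h1 h2
    grind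

/-- `tri_three` without assumption on the last vertex, by the symmetries of the triangle. -/
theorem tri_three' (h : Tri Γ C a b c) (hN : NoDC Γ) (hL : Lift Γ) (hD : Deg3 Γ)
    (hp : LP Γ (out Γ C) p k) (hk : 1 ≤ k) (a0 : Γ.Adj (p 0) a) (b0 : Γ.Adj (p 0) b)
    (c0 : Γ.Adj (p 0) c) : Good Γ := by
  rcases h.two_end hN hD hp with t | t | t
  · exact tri_three h.rot.rot hN hL hD hp hk c0 a0 b0 t.1 t.2
  · exact tri_three h hN hL hD hp hk a0 b0 c0 t.1 t.2
  · exact tri_three h.rot hN hL hD hp hk b0 c0 a0 t.2 t.1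

/-- A graph of minimal degree three with a triangle, without disjoint cycles and subject to the
lifting condition, is a wheel or `K₅` minus an edge, up to missing edges. -/
theorem tri_good (hN : NoDC Γ) (hL : Lift Γ) (hD : Deg3 Γ) (ab : Γ.Adj a b) (bc : Γ.Adj b c)
    (ac : Γ.Adj a c) : Good Γ := by
  have h : Tri Γ {v | v = a ∨ v = b ∨ v = c} a b c := ⟨ab, bc, ac, fun v => Iff.rfl⟩
  generalize {v | v = a ∨ v = b ∨ v = c} = C at h
  obtain ⟨z, hz, z1, z2⟩ := hD _ _ ab b c
  have hzo : z ∈ out Γ C := by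
    refine ⟨?_, _, hz.symm⟩
    rw [h.mem]
    rintro (e | e | e)
    exacts [hz.ne' e, z1 e, z2 e]
  obtain ⟨p, k, hp⟩ := exists_LP (Γ := Γ) hzo
  rcases Nat.eq_zero_or_pos k with rfl | hk
  · exact tri_zero h hN hL hD hp
  by_cases h0 : Γ.Adj (p 0) a ∧ Γ.Adj (p 0) b ∧ Γ.Adj (p 0) c
  · exact tri_three' h hN hL hD hp hk h0.1 h0.2.1 h0.2.2
  by_cases hl : Γ.Adj (p k) a ∧ Γ.Adj (p k) b ∧ Γ.Adj (p k) c
  · refine tri_three' h hN hL hD hp.rev hk ?_ ?_ ?_ <;> simp [hl]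
  have key : ∀ x y z, Tri Γ C x y z → Γ.Adj (p 0) x → Γ.Adj (p 0) y → ¬ Γ.Adj (p 0) z →
      ¬ (Γ.Adj (p k) x ∧ Γ.Adj (p k) y ∧ Γ.Adj (p k) z) → Good Γ := by
    intro x y z h' x0 y0 z0 hl'
    rcases h'.two_end hN hD hp with t | t | t
    · exact (tri_two h' hN hL hD hp hk x0 y0 z0 t.1 t.2 fun e => hl' ⟨t.1, t.2, e⟩).elim
    · exact tri_mixed h'.rot.swap hN hL hD hp hk y0 x0 z0 t.1 t.2 fun e => hl' ⟨e, t.1, t.2⟩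
    · exact tri_mixed h' hN hL hD hp hk x0 y0 z0 t.1 t.2 fun e => hl' ⟨t.1, e, t.2⟩
  rcases h.two hN hD hp with t | t | t
  · exact key a b c h t.1 t.2 (fun e => h0 ⟨t.1, t.2, e⟩) hl
  · exact key b c a h.rot t.1 t.2 (fun e => h0 ⟨e, t.1, t.2⟩) fun e => hl ⟨e.2.2, e.1, e.2.1⟩
  · exact key a c b h.swap t.1 t.2 (fun e => h0 ⟨t.1, e, t.2⟩) fun e => hl ⟨e.1, e.2.2, e.2.1⟩

end TriSec2

/-! ### Triangle-free graphs with a four-cycle -/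

section QuadSec
variable {V : Type} [Fintype V] [DecidableEq V] {Γ : SimpleGraph V}

/-- `Γ` has no triangles and `C` is a four-cycle with vertices `a`, `b`, `c`, `d` in this cyclic
order. -/
structure Quad (Γ : SimpleGraph V) (C : Set V) (a b c d : V) : Prop where
  free : ∀ x y z, Γ.Adj x y → Γ.Adj y z → Γ.Adj x z → False
  ab : Γ.Adj a b
  bc : Γ.Adj b c
  cd : Γ.Adj c d
  ad : Γ.Adj a d
  ac : a ≠ c
  bd : b ≠ d
  mem : ∀ v, v ∈ C ↔ v = a ∨ v = b ∨ v = c ∨ v = d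

variable {C : Set V} {a b c d : V} {p : ℕ → V} {k : ℕ}

theorem Quad.rot (h : Quad Γ C a b c d) : Quad Γ C b c d a :=
  ⟨h.free, h.bc, h.cd, h.ad.symm, h.ab.symm, h.bd, h.ac.symm, fun v => by rw [h.mem]; tauto⟩

theorem Quad.hasC (h : Quad Γ C a b c d) : HasC Γ C :=
  (hasC_quad h.ab h.bc h.cd h.ad h.ac h.bd).mono (by rintro v hv; exact (h.mem v).2 hv)

theorem Quad.not_mem (h : Quad Γ C a b c d) {v : V} (hv : v ∈ out Γ C) :
    v ≠ a ∧ v ≠ b ∧ v ≠ c ∧ v ≠ d := by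
  have := hv.1
  rw [h.mem] at this
  tauto

/-- Two neighbours on the four-cycle are opposite vertices of it. -/
theorem Quad.pair (h : Quad Γ C a b c d) {r u v : V} (hu : u ∈ C) (hv : v ∈ C) (huv : u ≠ v)
    (h1 : Γ.Adj r u) (h2 : Γ.Adj r v) :
    (Γ.Adj r a ∧ Γ.Adj r c) ∨ (Γ.Adj r b ∧ Γ.Adj r d) := by
  have hab := h.ab
  have hbc := h.bc
  have hcd := h.cd
  have had := h.ad
  have hf := h.free r
  rcases (h.mem u).1 hu with rfl | rfl | rfl | rfl <;>
  rcases (h.mem v).1 hv with rfl | rfl | rfl | rfl <;>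
  first
  | exact (huv rfl).elim
  | exact Or.inl ⟨h1, h2⟩
  | exact Or.inl ⟨h2, h1⟩
  | exact Or.inr ⟨h1, h2⟩
  | exact Or.inr ⟨h2, h1⟩
  | exact (hf _ _ h1 (by assumption) h2).elim
  | exact (hf _ _ h2 (by assumption) h1).elim

/-- The first vertex of a longest path outside the four-cycle sees two of its vertices, which are
opposite as there are no triangles. -/
theorem Quad.two (h : Quad Γ C a b c d) (hN : NoDC Γ) (hD : Deg3 Γ) (hp : LP Γ (out Γ C) p k) :
    (Γ.Adj (p 0) a ∧ Γ.Adj (p 0) c) ∨ (Γ.Adj (p 0) b ∧ Γ.Adj (p 0) d) := by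
  obtain ⟨w, hw⟩ := (hp.mem 0 (by omega)).2
  obtain ⟨z1, z2, hne, h1, h2, o1, o2⟩ := hp.two_out (not_hasC_out hN h.hasC) hD hw
  exact h.pair (not_mem_out h1 o1) (not_mem_out h2 o2) hne h1 h2

theorem Quad.two_end (h : Quad Γ C a b c d) (hN : NoDC Γ) (hD : Deg3 Γ)
    (hp : LP Γ (out Γ C) p k) :
    (Γ.Adj (p k) a ∧ Γ.Adj (p k) c) ∨ (Γ.Adj (p k) b ∧ Γ.Adj (p k) d) := by
  simpa using h.two hN hD hp.rev

/-- The longest path has an edge: a vertex of degree three with all neighbours on the four-cycle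
would lie in a triangle. -/
theorem Quad.pos (h : Quad Γ C a b c d) (hN : NoDC Γ) (hD : Deg3 Γ) (hp : LP Γ (out Γ C) p k) :
    1 ≤ k := by
  have hU := not_hasC_out hN h.hasC
  have key : ∀ u v, Γ.Adj (p 0) u → (∀ w, w ∈ C → w = u ∨ w = v ∨ Γ.Adj u w) → 1 ≤ k := by
    intro u v hu hC
    obtain ⟨z, hz, z1, z2⟩ := hD _ _ hu u v
    by_cases hzo : z ∈ out Γ C
    · exact (hp.start hU hzo hz).1
    · rcases hC z (not_mem_out hz hzo) with e | e | e
      exacts [(z1 e).elim, (z2 e).elim, (h.free _ _ _ hu e hz).elim]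
  rcases h.two hN hD hp with t | t
  · refine key a c t.1 fun w hw => ?_
    rcases (h.mem w).1 hw with rfl | rfl | rfl | rfl
    exacts [Or.inl rfl, Or.inr (Or.inr h.ab), Or.inr (Or.inl rfl), Or.inr (Or.inr h.ad)]
  · refine key b d t.1 fun w hw => ?_
    rcases (h.mem w).1 hw with rfl | rfl | rfl | rfl
    exacts [Or.inr (Or.inr h.ab.symm), Or.inl rfl, Or.inr (Or.inr h.bc), Or.inr (Or.inl rfl)]

/-- If both ends of the longest path are adjacent to `a` and `c`, so are the vertices outside
it. -/
theorem Quad.rest (h : Quad Γ C a b c d) (hN : NoDC Γ) (hD : Deg3 Γ) (hp : LP Γ (out Γ C) p k)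
    (hk : 1 ≤ k) (a0 : Γ.Adj (p 0) a) (c0 : Γ.Adj (p 0) c) (ak : Γ.Adj (p k) a)
    (ck : Γ.Adj (p k) c) {r : V} (hr : r ∈ out Γ C) (hrp : ∀ m, m ≤ k → p m ≠ r) :
    Γ.Adj r a := by
  have hU := not_hasC_out hN h.hasC
  let R : Set V := {v | v ∈ out Γ C ∧ ∀ m, m ≤ k → p m ≠ v}
  have hRU : ¬ HasC Γ R := fun hc => hU (hc.mono fun v hv => hv.1)
  have hP : ∀ m, m ≤ k → p m ≠ a ∧ p m ≠ b ∧ p m ≠ c ∧ p m ≠ d :=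
    fun m hm => h.not_mem (hp.mem m hm)
  have avoid_a : ∀ U' : Set V, HasC Γ U' → (∀ v ∈ U', v ≠ a ∧ ∀ m, m ≤ k → p m ≠ v) → False := by
    intro U' hc hU'
    refine hN.elim hc (hp.toIsP.cone (by omega) le_rfl (fun m _ hm => (hP m hm).1)
      a0.symm ak.symm) ?_
    rintro v hv (e | ⟨m, -, hm, e⟩)
    exacts [(hU' v hv).1 e, (hU' v hv).2 m hm e]
  have avoid_c : ∀ U' : Set V, HasC Γ U' → (∀ v ∈ U', v ≠ c ∧ ∀ m, m ≤ k → p m ≠ v) → False := by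
    intro U' hc hU'
    refine hN.elim hc (hp.toIsP.cone (by omega) le_rfl (fun m _ hm => (hP m hm).2.2.1)
      c0.symm ck.symm) ?_
    rintro v hv (e | ⟨m, -, hm, e⟩)
    exacts [(hU' v hv).1 e, (hU' v hv).2 m hm e]
  have type : ∀ r ∈ R, ∀ v, Γ.Adj r v → v ∉ R → (∃ i, i ≤ k ∧ p i = v) ∨ v ∈ C := by
    intro r hr v hv hvR
    by_contra hcon
    push Not at hcon
    exact hvR ⟨⟨hcon.2, r, hv.symm⟩, hcon.1⟩
  have pairR : ∀ r ∈ R, ∀ u v, u ∈ C → v ∈ C → u ≠ v → Γ.Adj r u → Γ.Adj r v →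
      Γ.Adj r a ∧ Γ.Adj r c := by
    intro r hr u v hu hv huv h1 h2
    rcases h.pair hu hv huv h1 h2 with t | t
    · exact t
    · refine (avoid_a _ (hasC_quad t.1 h.bc h.cd t.2 (h.not_mem hr.1).2.2.1 h.bd) ?_).elim
      rintro v (rfl | rfl | rfl | rfl)
      exacts [⟨(h.not_mem hr.1).1, hr.2⟩, ⟨h.ab.ne', fun m hm => (hP m hm).2.1⟩,
        ⟨h.ac.symm, fun m hm => (hP m hm).2.2.1⟩, ⟨h.ad.ne', fun m hm => (hP m hm).2.2.2⟩]
  have uniqP : ∀ r ∈ R, ∀ i j, i ≤ k → j ≤ k → Γ.Adj r (p i) → Γ.Adj r (p j) → i = j :=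
    fun r hr i j hi hj => hp.unique hU hr.1 hr.2 hi hj
  obtain ⟨q, l, hq⟩ := exists_LP (Γ := Γ) (U := R) ⟨hr, hrp⟩
  have two : ∀ q, LP Γ R q l → (Γ.Adj (q 0) a ∧ Γ.Adj (q 0) c) ∨
      ((∃ i, i ≤ k ∧ Γ.Adj (q 0) (p i)) ∧ ∃ u, u ∈ C ∧ Γ.Adj (q 0) u) := by
    intro q hq
    have hqR := hq.mem 0 (by omega)
    obtain ⟨w, hw⟩ := hqR.1.2
    obtain ⟨z1, z2, hne, h1, h2, o1, o2⟩ := hq.two_out hRU hD hw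
    rcases type _ hqR _ h1 o1 with ⟨i, hi, rfl⟩ | m1 <;>
    rcases type _ hqR _ h2 o2 with ⟨j, hj, rfl⟩ | m2
    · exact absurd (by rw [uniqP _ hqR _ _ hi hj h1 h2]) hne
    · exact Or.inr ⟨⟨i, hi, h1⟩, _, m2, h2⟩
    · exact Or.inr ⟨⟨j, hj, h2⟩, _, m1, h1⟩
    · exact Or.inl (pairR _ hqR _ _ m1 m2 hne h1 h2)
  have hl : l = 0 := by
    by_contra hl
    have step : ∀ q, LP Γ R q l → Γ.Adj (q 0) a → Γ.Adj (q 0) c → False := by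
      intro q hq qa qc
      have hql : q 0 ≠ q l := fun e => by
        have := hq.inj _ _ (by omega) (by omega) e
        omega
      have hqC : ∀ m, m ≤ l → q m ≠ a ∧ q m ≠ b ∧ q m ≠ c ∧ q m ≠ d :=
        fun m hm => h.not_mem (hq.mem m hm).1
      obtain ⟨u, hu, hqu⟩ : ∃ u, u ∈ C ∧ Γ.Adj (q l) u := by
        rcases two _ hq.rev with t | t
        · exact ⟨a, (h.mem a).2 (Or.inl rfl), by simpa using t.1⟩
        · simpa using t.2
      have other : ∀ u, Γ.Adj u c → Γ.Adj (q l) u → u ≠ a → (∀ m, m ≤ k → p m ≠ u) →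
          (∀ m, m ≤ l → q m ≠ u) → False := by
        intro u huc hqu hua hup huq
        refine avoid_a _ (hq.toIsP.cone2 (Nat.zero_le l) le_rfl huc.symm
          (fun m _ hm => (hqC m hm).2.2.1) (fun m _ hm => huq m hm) qc.symm hqu.symm) ?_
        rintro v ((rfl | rfl) | ⟨m, -, hm, rfl⟩)
        exacts [⟨h.ac.symm, fun m hm => (hP m hm).2.2.1⟩, ⟨hua, hup⟩,
          ⟨(hqC m hm).1, (hq.mem m hm).2⟩]
      rcases (h.mem u).1 hu with rfl | rfl | rfl | rfl
      · refine avoid_c _ (hq.toIsP.cone (Nat.pos_of_ne_zero hl) le_rfl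
          (fun m _ hm => (hqC m hm).1) qa.symm hqu.symm) ?_
        rintro v (rfl | ⟨m, -, hm, rfl⟩)
        exacts [⟨h.ac, fun m hm => (hP m hm).1⟩, ⟨(hqC m hm).2.2.1, (hq.mem m hm).2⟩]
      · exact other _ h.bc hqu h.ab.ne' (fun m hm => (hP m hm).2.1) (fun m hm => (hqC m hm).2.1)
      · refine avoid_a _ (hq.toIsP.cone (Nat.pos_of_ne_zero hl) le_rfl
          (fun m _ hm => (hqC m hm).2.2.1) qc.symm hqu.symm) ?_
        rintro v (rfl | ⟨m, -, hm, rfl⟩)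
        exacts [⟨h.ac.symm, fun m hm => (hP m hm).2.2.1⟩, ⟨(hqC m hm).1, (hq.mem m hm).2⟩]
      · exact other _ h.cd.symm hqu h.ad.ne' (fun m hm => (hP m hm).2.2.2)
          (fun m hm => (hqC m hm).2.2.2)
    have hql : q 0 ≠ q l := fun e => by
      have := hq.inj _ _ (by omega) (by omega) e
      omega
    rcases two q hq with t | ⟨⟨i, hi, h1⟩, -⟩
    · exact step q hq t.1 t.2
    rcases two _ hq.rev with t | ⟨⟨j, hj, h2⟩, -⟩
    · exact step _ hq.rev t.1 t.2
    simp only [Nat.sub_zero] at h2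
    refine hU (((hq.toIsP.joined_all (Nat.zero_le l) le_rfl).close (hp.toIsP.joined_all hj hi) ?_
      h2 h1 (Or.inl hql)).mono ?_)
    · rintro v ⟨m, -, hm, rfl⟩ ⟨m', -, hm', e⟩
      exact (hq.mem m hm).2 m' hm' e
    · rintro v (⟨m, -, hm, rfl⟩ | ⟨m, -, hm, rfl⟩)
      exacts [(hq.mem m hm).1, hp.mem m hm]
  subst hl
  have hrR : r ∈ R := ⟨hr, hrp⟩
  have hr0 : LP Γ R (fun _ => r) 0 :=
    ⟨⟨fun i j _ _ _ => by omega, fun i hi => by omega⟩, fun _ _ => hrR, hq.max⟩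
  rcases two _ hr0 with t | ⟨⟨i, hi, h1⟩, u, hu, h2⟩
  · exact t.1
  obtain ⟨w, hw, w1, w2⟩ := hD _ _ h1 (p i) u
  have hwR : w ∉ R := fun hvR => by
    have := (hr0.start hRU hvR hw).1
    omega
  rcases type r hrR w hw hwR with ⟨j, hj, rfl⟩ | hwC
  · exact absurd (by rw [uniqP r hrR _ _ hj hi hw h1]) w1
  · exact (pairR r hrR w u hwC hu w2 hw h2).1

/-- The ends of the longest path cannot see the same opposite pair `a`, `c`: a third neighbour of
`b` lies inside the path, and `theta_false` applies. -/
theorem quad_same (h : Quad Γ C a b c d) (hN : NoDC Γ) (hL : Lift Γ) (hD : Deg3 Γ)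
    (hp : LP Γ (out Γ C) p k) (a0 : Γ.Adj (p 0) a) (c0 : Γ.Adj (p 0) c) (ak : Γ.Adj (p k) a)
    (ck : Γ.Adj (p k) c) : False := by
  have hU := not_hasC_out hN h.hasC
  have hk := h.pos hN hD hp
  have hP : ∀ m, m ≤ k → p m ≠ a ∧ p m ≠ b ∧ p m ≠ c ∧ p m ≠ d :=
    fun m hm => h.not_mem (hp.mem m hm)
  obtain ⟨z, hz, z1, z2⟩ := hD b a h.ab.symm a c
  have hza : ¬ Γ.Adj z a := fun e => h.free _ _ _ hz e h.ab.symm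
  obtain ⟨j, hj, rfl⟩ : ∃ j, j ≤ k ∧ p j = z := by
    by_cases hzo : z ∈ out Γ C
    · by_contra hcon
      push Not at hcon
      exact hza (h.rest hN hD hp hk a0 c0 ak ck hzo hcon)
    · rcases (h.mem z).1 (not_mem_out hz hzo) with e | e | e | e
      exacts [(z1 e).elim, (hz.ne' e).elim, (z2 e).elim, (hza (e ▸ h.ad.symm)).elim]
  have hj0 : 0 < j := Nat.pos_of_ne_zero (by rintro rfl; exact hza a0)
  have hjk : j < k := lt_of_le_of_ne hj (by rintro rfl; exact hza ak)
  refine theta_false hN hL hD hp.toIsP (fun i j hij hj => hp.induced hU hij hj)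
    (fun m hm => (hP m hm).1) (fun m hm => (hP m hm).2.2.1) (fun m hm => (hP m hm).2.1)
    h.ac a0.symm ak.symm c0.symm ck.symm h.ab.symm h.bc hj0 hjk hz ?_
  intro v i _ _ hv n1 n2 n3 hvp
  by_cases hvo : v ∈ out Γ C
  · exact h.rest hN hD hp hk a0 c0 ak ck hvo hvp
  · rcases (h.mem v).1 (not_mem_out hv.symm hvo) with e | e | e | e
    exacts [(n1 e).elim, (n3 e).elim, (n2 e).elim, e ▸ h.ad.symm]

/-- When the ends of the longest path see different pairs of opposite vertices, its second vertex
is joined to the pair seen by the last one, directly or through one further vertex. -/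
theorem quad_conn (h : Quad Γ C a b c d) (hN : NoDC Γ) (hD : Deg3 Γ)
    (hp : LP Γ (out Γ C) p k) (hk : 2 ≤ k) (a0 : Γ.Adj (p 0) a) (c0 : Γ.Adj (p 0) c)
    (bk : Γ.Adj (p k) b) (dk : Γ.Adj (p k) d) :
    ∃ y y', ((y = b ∧ y' = d) ∨ (y = d ∧ y' = b)) ∧ ∃ U, Joined Γ U (p 1) y ∧
      ∀ v ∈ U, v = p 1 ∨ v = y ∨
        (v ∈ out Γ C ∧ (∀ m, m ≤ k → p m ≠ v) ∧ Γ.Adj v (p 1)) := by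
  have hU := not_hasC_out hN h.hasC
  have hP : ∀ m, m ≤ k → p m ≠ a ∧ p m ≠ b ∧ p m ≠ c ∧ p m ≠ d :=
    fun m hm => h.not_mem (hp.mem m hm)
  have e01 : Γ.Adj (p 0) (p 1) := hp.adj 0 (by omega)
  have direct : ∀ y, Γ.Adj (p 1) y → ∃ U, Joined Γ U (p 1) y ∧
      ∀ v ∈ U, v = p 1 ∨ v = y ∨
        (v ∈ out Γ C ∧ (∀ m, m ≤ k → p m ≠ v) ∧ Γ.Adj v (p 1)) := by
    intro y hy
    refine ⟨_, joined_pair hy, ?_⟩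
    rintro v (e | e)
    exacts [Or.inl e, Or.inr (Or.inl e)]
  obtain ⟨z, hz, z1, z2⟩ := hD _ _ e01.symm (p 0) (p 2)
  by_cases hzo : z ∈ out Γ C
  · have hzp : ∀ m, m ≤ k → p m ≠ z := by
      rintro m hm rfl
      have h1 : 1 ≠ m := by rintro rfl; exact hz.ne rfl
      rcases lt_or_gt_of_ne h1 with hlt | hlt
      · have := hp.induced hU hlt hm hz
        exact z2 (by rw [this])
      · exact z1 (by congr 1; omega)
    have hpen : ∀ v ∈ out Γ C, Γ.Adj z v → v = p 1 := fun v hv hzv =>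
      hp.pendant hU (by omega) hzo hzp hz.symm hv hzv
    obtain ⟨u, hu, u1, -⟩ := hD _ _ hz.symm (p 1) (p 1)
    obtain ⟨w, hw, w1, w2⟩ := hD _ _ hz.symm (p 1) u
    have huC : u ∈ C := not_mem_out hu fun ho => u1 (hpen u ho hu)
    have hwC : w ∈ C := not_mem_out hw fun ho => w1 (hpen w ho hw)
    have hzC := h.not_mem hzo
    rcases h.pair huC hwC w2.symm hu hw with t | t
    · exfalso
      refine hN.elim (hasC_quad e01 hz t.1 a0 (hzp 0 (by omega)) (hP 1 (by omega)).1)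
        (hasC_quad bk h.bc h.cd dk (hP k le_rfl).2.2.1 h.bd) ?_
      have h1 := h.ab.ne
      have h2 := h.ad.ne
      have h3 := h.ac
      have hinj := hp.inj
      have hP0 := hP 0 (by omega)
      have hP1 := hP 1 (by omega)
      have hzk := hzp k le_rfl
      have hPk := hP k le_rfl
      have e0k := hinj 0 k (by omega) le_rfl
      have e1k := hinj 1 k (by omega) le_rfl
      clear hP hpen hzp hinj direct
      intro v h1 h2
      simp only [Set.mem_insert_iff, Set.mem_singleton_iff] at h1 h2
      grind
    · refine ⟨b, d, Or.inl ⟨rfl, rfl⟩, _, (joined_pair hz).link (Joined.refl b) ?_ t.1, ?_⟩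
      · rintro v (rfl | rfl) e
        exacts [(hP 1 (by omega)).2.1 e, hzC.2.1 e]
      · rintro v ((e | rfl) | e)
        exacts [Or.inl e, Or.inr (Or.inr ⟨hzo, hzp, hz.symm⟩), Or.inr (Or.inl e)]
  · rcases (h.mem z).1 (not_mem_out hz hzo) with rfl | rfl | rfl | rfl
    · exact (h.free _ _ _ e01 hz a0).elim
    · exact ⟨_, _, Or.inl ⟨rfl, rfl⟩, direct _ hz⟩
    · exact (h.free _ _ _ e01 hz c0).elim
    · exact ⟨_, _, Or.inr ⟨rfl, rfl⟩, direct _ hz⟩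

/-- The ends of the longest path cannot see different opposite pairs. A path with one edge gives
`K₃,₃`; for longer ones the connections provided by `quad_conn` for the second vertex and, if the
path has at least three edges, for the last but one, give disjoint cycles. -/
theorem quad_diff (h : Quad Γ C a b c d) (hN : NoDC Γ) (hL : Lift Γ) (hD : Deg3 Γ)
    (hp : LP Γ (out Γ C) p k) (a0 : Γ.Adj (p 0) a) (c0 : Γ.Adj (p 0) c) (bk : Γ.Adj (p k) b)
    (dk : Γ.Adj (p k) d) : False := by
  have hU := not_hasC_out hN h.hasC
  have hk := h.pos hN hD hp
  have e01 : Γ.Adj (p 0) (p 1) := hp.adj 0 (by omega)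
  have hP : ∀ m, m ≤ k → p m ≠ a ∧ p m ≠ b ∧ p m ≠ c ∧ p m ≠ d :=
    fun m hm => h.not_mem (hp.mem m hm)
  have hab := h.ab
  have hbc := h.bc
  have hcd := h.cd
  have had := h.ad
  have nac := h.ac
  have nbd := h.bd
  rcases hk.eq_or_lt with rfl | hk2
  · exact no_K33' hL h.ac (hP 1 le_rfl).1.symm (hP 1 le_rfl).2.2.1.symm h.bd
      (hP 0 (by omega)).2.1.symm (hP 0 (by omega)).2.2.2.symm hab had a0.symm hbc.symm hcd c0.symm
      bk dk e01.symm
  obtain ⟨y, y', hy, U, hJ, hJU⟩ := quad_conn h hN hD hp hk2 a0 c0 bk dk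
  have yk : Γ.Adj (p k) y := by rcases hy with ⟨rfl, rfl⟩ | ⟨rfl, rfl⟩ <;> assumption
  have y'k : Γ.Adj (p k) y' := by rcases hy with ⟨rfl, rfl⟩ | ⟨rfl, rfl⟩ <;> assumption
  have nyy : y ≠ y' := by rcases hy with ⟨rfl, rfl⟩ | ⟨rfl, rfl⟩; exacts [nbd, nbd.symm]
  have ya : Γ.Adj y a := by rcases hy with ⟨rfl, rfl⟩ | ⟨rfl, rfl⟩; exacts [hab.symm, had.symm]
  have yc : Γ.Adj y c := by rcases hy with ⟨rfl, rfl⟩ | ⟨rfl, rfl⟩; exacts [hbc, hcd.symm]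
  have y'a : Γ.Adj y' a := by rcases hy with ⟨rfl, rfl⟩ | ⟨rfl, rfl⟩; exacts [had.symm, hab.symm]
  have y'c : Γ.Adj y' c := by rcases hy with ⟨rfl, rfl⟩ | ⟨rfl, rfl⟩; exacts [hcd.symm, hbc]
  have Py : ∀ m, m ≤ k → p m ≠ y ∧ p m ≠ y' := by
    intro m hm
    have := hP m hm
    rcases hy with ⟨rfl, rfl⟩ | ⟨rfl, rfl⟩
    exacts [⟨this.2.1, this.2.2.2⟩, ⟨this.2.2.2, this.2.1⟩]
  have oy : ∀ v ∈ out Γ C, v ≠ y ∧ v ≠ y' ∧ v ≠ a ∧ v ≠ c := by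
    intro v hv
    have := h.not_mem hv
    rcases hy with ⟨rfl, rfl⟩ | ⟨rfl, rfl⟩
    exacts [⟨this.2.1, this.2.2.2, this.1, this.2.2.1⟩, ⟨this.2.2.2, this.2.1, this.1, this.2.2.1⟩]
  have hinj := hp.inj
  by_cases hk3 : k = 2
  · subst hk3
    have e12 : Γ.Adj (p 1) (p 2) := hp.adj 1 (by omega)
    have n02 : p 0 ≠ p 2 := fun e => by
      have := hinj _ _ (by omega) le_rfl e
      omega
    refine hN.elim (hJ.cone (x := p 2) ?_ e12.symm yk (Py 1 (by omega)).1)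
      (hasC_quad a0.symm c0 y'c.symm y'a.symm nac (Py 0 (by omega)).2) ?_
    · intro hm
      rcases hJU _ hm with e | e | e
      exacts [e12.ne e.symm, (Py 2 le_rfl).1 e, e.2.1 2 le_rfl rfl]
    · intro v h1 h2
      have P0 := hP 0 (by omega)
      have P1 := hP 1 (by omega)
      have P2 := hP 2 (by omega)
      have Y0 := Py 0 (by omega)
      have Y1 := Py 1 (by omega)
      have Y2 := Py 2 (by omega)
      have na := ya.ne
      have nc := yc.ne
      have n01 := e01.ne
      rcases h1 with h1 | h1
      · simp only [Set.mem_insert_iff, Set.mem_singleton_iff] at h1 h2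
        rcases h2 with e | e | e | e
        exacts [P2.1 (h1 ▸ e), n02 (h1 ▸ e).symm, P2.2.2.1 (h1 ▸ e), Y2.2 (h1 ▸ e)]
      · simp only [Set.mem_insert_iff, Set.mem_singleton_iff] at h2
        rcases hJU v h1 with rfl | rfl | ⟨o, op, -⟩
        · rcases h2 with e | e | e | e
          exacts [P1.1 e, n01 e.symm, P1.2.2.1 e, Y1.2 e]
        · rcases h2 with e | e | e | e
          exacts [na e, Y0.1 e.symm, nc e, nyy e]
        · have := oy v o
          rcases h2 with e | e | e | e
          exacts [this.2.2.1 e, op 0 (by omega) e.symm, this.2.2.2 e, this.2.1 e]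
  · have ekk : Γ.Adj (p (k - 1)) (p k) := by
      have := hp.adj (k - 1) (by omega)
      rwa [show k - 1 + 1 = k by omega] at this
    obtain ⟨x, x', hx, U', hJ', hJU'⟩ := quad_conn h.rot hN hD hp.rev hk2 (by simpa using bk)
      (by simpa using dk) (by simpa using c0) (by simpa using a0)
    have x'0 : Γ.Adj (p 0) x' := by rcases hx with ⟨rfl, rfl⟩ | ⟨rfl, rfl⟩ <;> assumption
    have yx' : Γ.Adj y x' := by rcases hx with ⟨rfl, rfl⟩ | ⟨rfl, rfl⟩ <;> assumption
    have y'x : Γ.Adj y' x := by rcases hx with ⟨rfl, rfl⟩ | ⟨rfl, rfl⟩ <;> assumption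
    have yx : Γ.Adj y x := by rcases hx with ⟨rfl, rfl⟩ | ⟨rfl, rfl⟩ <;> assumption
    have y'x' : Γ.Adj y' x' := by rcases hx with ⟨rfl, rfl⟩ | ⟨rfl, rfl⟩ <;> assumption
    have nxx : x ≠ x' := by rcases hx with ⟨rfl, rfl⟩ | ⟨rfl, rfl⟩; exacts [nac.symm, nac]
    have Px : ∀ m, m ≤ k → p m ≠ x ∧ p m ≠ x' := by
      intro m hm
      have := hP m hm
      rcases hx with ⟨rfl, rfl⟩ | ⟨rfl, rfl⟩
      exacts [⟨this.2.2.1, this.1⟩, ⟨this.1, this.2.2.1⟩]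
    have ox : ∀ v ∈ out Γ C, v ≠ x ∧ v ≠ x' := by
      intro v hv
      have := h.not_mem hv
      rcases hx with ⟨rfl, rfl⟩ | ⟨rfl, rfl⟩
      exacts [⟨this.2.2.1, this.1⟩, ⟨this.1, this.2.2.1⟩]
    have nidx : ∀ i j, i ≤ k → j ≤ k → i ≠ j → p i ≠ p j := fun i j hi hj hij e =>
      hij (hinj i j hi hj e)
    have hW : ∀ v ∈ U, v = p 1 ∨ v = y ∨ (v ∈ out Γ C ∧ (∀ m, m ≤ k → p m ≠ v) ∧
      ¬ Γ.Adj v (p (k - 1))) := by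
      intro v hv
      rcases hJU v hv with e | e | ⟨e1, e2, e3⟩
      · exact Or.inl e
      · exact Or.inr (Or.inl e)
      · refine Or.inr (Or.inr ⟨e1, e2, fun e4 => ?_⟩)
        have := hp.unique hU e1 e2 (by omega) (by omega) e3 e4
        omega
    have hW' : ∀ v ∈ U', v = p (k - 1) ∨ v = x ∨ (v ∈ out Γ C ∧ (∀ m, m ≤ k → p m ≠ v) ∧
      Γ.Adj v (p (k - 1))) := by
      intro v hv
      rcases hJU' v hv with e | e | ⟨e1, e2, e3⟩
      · exact Or.inl e
      · exact Or.inr (Or.inl e)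
      · refine Or.inr (Or.inr ⟨e1, fun m hm => ?_, e3⟩)
        have := e2 (k - m) (by omega)
        rwa [show k - (k - m) = m by omega] at this
    have P0 := Px 0 (by omega)
    have P1 := Px 1 (by omega)
    have Pk := Px k le_rfl
    have Pl := Px (k - 1) (by omega)
    have Y0 := Py 0 (by omega)
    have Y1 := Py 1 (by omega)
    have Yk := Py k le_rfl
    have Yl := Py (k - 1) (by omega)
    have n01 := nidx 0 1 (by omega) (by omega) (by omega)
    have n0k := nidx 0 k (by omega) (by omega) (by omega)
    have n0l := nidx 0 (k - 1) (by omega) (by omega) (by omega)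
    have n1k := nidx 1 k (by omega) (by omega) (by omega)
    have n1l := nidx 1 (k - 1) (by omega) (by omega) (by omega)
    have nlk := nidx (k - 1) k (by omega) (by omega) (by omega)
    have m1 := yx.ne
    have m2 := yx'.ne
    have m3 := y'x.ne
    have m4 := y'x'.ne
    refine hN.elim (hJ.close (joined_pair x'0.symm) ?_ yx' e01.symm (Or.inl Y1.1))
      (Joined.close (u := p (k - 1)) hJ' (joined_pair y'k.symm) ?_ y'x.symm ekk (Or.inl Pl.1)) ?_
    · rintro v hv (e | e)
      · rcases hW v hv with rfl | rfl | o
        exacts [P1.2 e, m2 e, (ox v o.1).2 e]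
      · rcases hW v hv with rfl | rfl | o
        exacts [n01 e.symm, Y0.1 e.symm, o.2.1 0 (by omega) e.symm]
    · rintro v hv (e | e)
      · rcases hW' v hv with rfl | rfl | o
        exacts [Yl.2 e, m3 e.symm, (oy v o.1).2.1 e]
      · rcases hW' v hv with rfl | rfl | o
        exacts [nlk e, Pk.1 e.symm, o.2.1 k le_rfl e.symm]
    · rintro v (hv | rfl | rfl) (hv' | hv')
      · rcases hW v hv with rfl | rfl | o
        · rcases hW' _ hv' with e | e | o'
          exacts [n1l e, P1.1 e, o'.2.1 1 (by omega) rfl]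
        · rcases hW' _ hv' with e | e | o'
          exacts [Yl.1 e.symm, m1 e, (oy _ o'.1).1 rfl]
        · rcases hW' _ hv' with e | e | o'
          exacts [o.2.1 _ (by omega) e.symm, (ox v o.1).1 e, o.2.2 o'.2.2]
      · rcases hW v hv with rfl | rfl | o
        · rcases hv' with e | e
          exacts [Y1.2 e, n1k e]
        · rcases hv' with e | e
          exacts [nyy e, Yk.1 e.symm]
        · rcases hv' with e | e
          exacts [(oy v o.1).2.1 e, o.2.1 k le_rfl e.symm]
      · rcases hW' _ hv' with e | e | o'
        exacts [Pl.2 e.symm, nxx e.symm, (ox _ o'.1).2 rfl]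
      · rcases hv' with e | e
        exacts [m4 e.symm, Pk.2 e.symm]
      · rcases hW' _ hv' with e | e | o'
        exacts [n0l e, P0.1 e, o'.2.1 0 (by omega) rfl]
      · rcases hv' with e | e
        exacts [Y0.2 e, n0k e]

/-- A triangle-free graph of minimal degree three without disjoint cycles which satisfies the
lifting condition has no four-cycle. -/
theorem quad_false (hN : NoDC Γ) (hL : Lift Γ) (hD : Deg3 Γ)
    (hf : ∀ x y z, Γ.Adj x y → Γ.Adj y z → Γ.Adj x z → False)
    (ab : Γ.Adj a b) (bc : Γ.Adj b c) (cd : Γ.Adj c d) (ad : Γ.Adj a d) (ac : a ≠ c)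
    (bd : b ≠ d) : False := by
  have h : Quad Γ {v | v = a ∨ v = b ∨ v = c ∨ v = d} a b c d :=
    ⟨hf, ab, bc, cd, ad, ac, bd, fun v => Iff.rfl⟩
  generalize {v | v = a ∨ v = b ∨ v = c ∨ v = d} = C at h
  obtain ⟨z, hz, z1, z2⟩ := hD _ _ ab b d
  have hzo : z ∈ out Γ C := by
    refine ⟨?_, _, hz.symm⟩
    rw [h.mem]
    rintro (e | e | e | e)
    exacts [hz.ne' e, z1 e, hf _ _ _ ab bc (e ▸ hz), z2 e]
  obtain ⟨p, k, hp⟩ := exists_LP (Γ := Γ) hzo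
  rcases h.two hN hD hp with t | t <;> rcases h.two_end hN hD hp with s | s
  · exact quad_same h hN hL hD hp t.1 t.2 s.1 s.2
  · exact quad_diff h hN hL hD hp t.1 t.2 s.1 s.2
  · exact quad_diff h.rot hN hL hD hp t.1 t.2 s.2 s.1
  · exact quad_same h.rot hN hL hD hp t.1 t.2 s.1 s.2

end QuadSec

/-! ### Reduction to minimal degree three -/

section Red
variable {V : Type} [Fintype V] [DecidableEq V] {Γ : SimpleGraph V}

theorem NoDC.le {Γ' : SimpleGraph V} (h : NoDC Γ) (hle : Γ' ≤ Γ) : NoDC Γ' := by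
  have mono : ∀ W, Cyc Γ' W → Cyc Γ W := by
    rintro W ⟨h1, h2⟩
    refine ⟨h1, fun v hv => ?_⟩
    obtain ⟨x, hx, y, hy, hne, a1, a2⟩ := h2 v hv
    exact ⟨x, hx, y, hy, hne, hle a1, hle a2⟩
  exact fun W W' h1 h2 => h W W' (mono W h1) (mono W' h2)

theorem Lift.le {Γ' : SimpleGraph V} (h : Lift Γ) (hle : Γ' ≤ Γ) : Lift Γ' := by
  obtain ⟨A, m, h1, h2, h3⟩ := h
  exact ⟨A, m, h1, fun c a b hc => h2 c a b ⟨hle hc.1, hc.2⟩,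
    fun a b c d hd => h3 a b c d ⟨hle hd.1, hle hd.2.1, hd.2.2⟩⟩

/-- Remove all edges at `z`. -/
def del (Γ : SimpleGraph V) (z : V) : SimpleGraph V where
  Adj x y := Γ.Adj x y ∧ x ≠ z ∧ y ≠ z
  symm := ⟨fun _ _ h => ⟨h.1.symm, h.2.2, h.2.1⟩⟩
  loopless := ⟨fun _ h => h.1.ne rfl⟩

theorem del_le (Γ : SimpleGraph V) (z : V) : del Γ z ≤ Γ := fun _ _ h => h.1

/-- If no two-cell of a core involves an edge at `z`, the edges at `z` do not matter for cores. -/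
theorem noCore_of_del {z : V} (h : NoCore (del Γ z))
    (hz : ∀ S, SqSym Γ S → (∀ a b c d, S a b c d → ∃ d', d' ≠ d ∧ S a b c d') →
      ∀ a b x, ¬ S a b z x) : NoCore Γ := by
  intro S hS hc
  have hz' := hz S hS hc
  refine h S ⟨hS.s1, hS.s2, fun {a b c d} hs => ?_⟩ hc
  have na : a ≠ z := by rintro rfl; exact hz' _ _ _ (hS.s2 hs)
  have nb : b ≠ z := by rintro rfl; exact hz' _ _ _ (hS.s2 (hS.s1 hs))
  have nc : c ≠ z := by rintro rfl; exact hz' _ _ _ hs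
  have nd : d ≠ z := by rintro rfl; exact hz' _ _ _ (hS.s2 (hS.s1 (hS.s2 hs)))
  obtain ⟨h1, h2, h3⟩ := hS.de hs
  exact ⟨⟨h1, na, nb⟩, ⟨h2, nc, nd⟩, h3⟩

/-- A square on a pendant edge has a free face. -/
theorem good_leaf {z a : V} (hza : Γ.Adj z a) (hz : ∀ y, Γ.Adj z y → y = a)
    (h : Good (del Γ z)) : Good Γ := by
  obtain ⟨⟨p, hp⟩, hN⟩ := h
  refine ⟨hp.add (z := z) (a := a) (b := a) (fun w hw => hw.2.1 rfl) hza.ne hza.ne (Or.inl rfl)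
    (fun x y hxy h1 h2 => ⟨hxy, h1, h2⟩) (fun y hy => Or.inl (hz y hy)), ?_⟩
  refine noCore_of_del hN ?_
  intro S hS hc p q x hs
  obtain ⟨x', hne, hs'⟩ := hc _ _ _ _ hs
  exact hne ((hz _ (hS.de hs').2.1).trans (hz _ (hS.de hs).2.1).symm)

/-- If the two neighbours `a`, `b` of `z` are adjacent, a core using an edge at `z` would contain a
cycle disjoint from the triangle `z a b`. -/
theorem good_ear {z a b : V} (hN : NoDC Γ) (hza : Γ.Adj z a) (hzb : Γ.Adj z b) (hab : Γ.Adj a b)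
    (hz : ∀ y, Γ.Adj z y → y = a ∨ y = b) (h : Good (del Γ z)) : Good Γ := by
  obtain ⟨⟨p, hp⟩, hC⟩ := h
  refine ⟨hp.add (z := z) (a := a) (b := b) (fun w hw => hw.2.1 rfl) hza.ne hzb.ne
    (Or.inr ⟨hab, hza.ne', hzb.ne'⟩) (fun x y hxy h1 h2 => ⟨hxy, h1, h2⟩) hz, ?_⟩
  refine noCore_of_del hC ?_
  intro S hS hc
  have both : ∀ p q x, S p q z x → S p q z a ∧ S p q z b := by
    intro p q x hs
    obtain ⟨x', hne, hs'⟩ := hc _ _ _ _ hs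
    rcases hz _ (hS.de hs).2.1 with rfl | rfl <;> rcases hz _ (hS.de hs').2.1 with rfl | rfl
    exacts [(hne rfl).elim, ⟨hs, hs'⟩, ⟨hs', hs⟩, (hne rfl).elim]
  intro p q x hs
  obtain ⟨W, hW, h1, h2, -, h3⟩ := core_cyc hS hc (hS.s2 (both p q x hs).1)
  have hbW : b ∉ W := by
    intro hb
    obtain ⟨v, hv⟩ := h3 b hb
    exact (hS.de (both _ _ _ (hS.s2 hv)).2).2.2.2.1 rfl
  refine hN.elim (hasC_tri hza hab hzb) ⟨W, fun v hv => Finset.mem_coe.2 hv, hW⟩ ?_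
  rintro v (rfl | rfl | rfl) hv
  exacts [h1 hv, h2 hv, hbW hv]

section Smooth
variable {z a b : V}

/-- Replace the path `a z b` through a vertex `z` of degree two by an edge `a b`. -/
def smooth (Γ : SimpleGraph V) (z : V) {a b : V} (hab : a ≠ b) : SimpleGraph V where
  Adj x y := (Γ.Adj x y ∧ x ≠ z ∧ y ≠ z) ∨ (x = a ∧ y = b) ∨ (x = b ∧ y = a)
  symm := ⟨fun _ _ h => by
    rcases h with h | h | h
    exacts [Or.inl ⟨h.1.symm, h.2.2, h.2.1⟩, Or.inr (Or.inr ⟨h.2, h.1⟩),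
      Or.inr (Or.inl ⟨h.2, h.1⟩)]⟩
  loopless := ⟨fun _ h => by
    rcases h with h | h | h
    exacts [h.1.ne rfl, hab (h.1.symm.trans h.2), hab (h.2.symm.trans h.1)]⟩

theorem smooth_ne (hza : Γ.Adj z a) (hzb : Γ.Adj z b) (hab : a ≠ b) {x y : V}
    (h : (smooth Γ z hab).Adj x y) : x ≠ z ∧ y ≠ z := by
  rcases h with h | ⟨rfl, rfl⟩ | ⟨rfl, rfl⟩
  exacts [h.2, ⟨hza.ne', hzb.ne'⟩, ⟨hzb.ne', hza.ne'⟩]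

/-- A set of minimum degree two after smoothing, together with `z` if it contains both ends of the
new edge, has minimum degree two before. -/
theorem cyc_smooth (hza : Γ.Adj z a) (hzb : Γ.Adj z b) (hab : a ≠ b) {W : Finset V}
    (hW : Cyc (smooth Γ z hab) W) : Cyc Γ (if a ∈ W ∧ b ∈ W then insert z W else W) := by
  obtain ⟨h1, h2⟩ := hW
  have hsub : ∀ v ∈ W, v ∈ (if a ∈ W ∧ b ∈ W then insert z W else W) := by
    intro v hv
    split_ifs
    exacts [Finset.mem_insert_of_mem hv, hv]
  obtain ⟨w, hw⟩ := h1
  refine ⟨⟨w, hsub w hw⟩, fun v hv => ?_⟩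
  by_cases hvW : v ∈ W
  · obtain ⟨x, hx, y, hy, hne, a1, a2⟩ := h2 v hvW
    have xz := (smooth_ne hza hzb hab a1).2
    have yz := (smooth_ne hza hzb hab a2).2
    -- a neighbour along the new edge is replaced by `z`
    have key : ∀ x ∈ W, (smooth Γ z hab).Adj v x →
        (Γ.Adj v x) ∨ (((v = a ∧ x = b) ∨ (v = b ∧ x = a)) ∧ Γ.Adj v z ∧
          z ∈ (if a ∈ W ∧ b ∈ W then insert z W else W)) := by
      rintro x hx (h | ⟨rfl, rfl⟩ | ⟨rfl, rfl⟩)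
      · exact Or.inl h.1
      · exact Or.inr ⟨Or.inl ⟨rfl, rfl⟩, hza.symm, by simp [hvW, hx]⟩
      · exact Or.inr ⟨Or.inr ⟨rfl, rfl⟩, hzb.symm, by simp [hvW, hx]⟩
    rcases key x hx a1 with k1 | ⟨k1, k2, k3⟩ <;> rcases key y hy a2 with l1 | ⟨l1, l2, l3⟩
    · exact ⟨x, hsub x hx, y, hsub y hy, hne, k1, l1⟩
    · exact ⟨x, hsub x hx, z, l3, xz, k1, l2⟩
    · exact ⟨z, k3, y, hsub y hy, yz.symm, k2, l1⟩
    · exfalso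
      rcases k1 with ⟨rfl, rfl⟩ | ⟨rfl, rfl⟩ <;> rcases l1 with ⟨e1, e2⟩ | ⟨e1, e2⟩
      exacts [hne e2.symm, hab e1, hab e1.symm, hne e2.symm]
  · split_ifs at hv ⊢ with hW2
    · obtain rfl : v = z := by
        rcases Finset.mem_insert.1 hv with e | e
        exacts [e, (hvW e).elim]
      exact ⟨a, Finset.mem_insert_of_mem hW2.1, b, Finset.mem_insert_of_mem hW2.2, hab, hza, hzb⟩
    · exact (hvW hv).elim

theorem noDC_smooth (hza : Γ.Adj z a) (hzb : Γ.Adj z b) (hab : a ≠ b) (h : NoDC Γ) :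
    NoDC (smooth Γ z hab) := by
  intro W W' hW hW' hd
  have nz : ∀ W, Cyc (smooth Γ z hab) W → z ∉ W := by
    intro W hW hzW
    obtain ⟨x, -, -, -, -, h1, -⟩ := hW.2 z hzW
    exact (smooth_ne hza hzb hab h1).1 rfl
  have n1 := nz W hW
  have n2 := nz W' hW'
  refine h _ _ (cyc_smooth hza hzb hab hW) (cyc_smooth hza hzb hab hW') ?_
  rw [Finset.disjoint_left] at hd ⊢
  intro v h1 h2
  split_ifs at h1 h2 with c1 c2 c2
  · exact hd c1.1 c2.1
  · rcases Finset.mem_insert.1 h1 with rfl | h1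
    exacts [n2 h2, hd h1 h2]
  · rcases Finset.mem_insert.1 h2 with rfl | h2
    exacts [n1 h1, hd h1 h2]
  · exact hd h1 h2

/-- The label of the new edge is the sum of the labels of the two edges replaced by it. When the
other token rests at the isolated vertex `z`, any value of the right parity will do. -/
theorem lift_smooth (hza : Γ.Adj z a) (hzb : Γ.Adj z b) (hab : a ≠ b) (nab : ¬ Γ.Adj a b)
    (h : Lift Γ) : Lift (smooth Γ z hab) := by
  obtain ⟨A, m, h1, h2, h3⟩ := h
  let E : V → V → Prop := fun x y => (x = a ∧ y = b) ∨ (x = b ∧ y = a)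
  have Esymm : ∀ {x y}, E x y → E y x := fun h => h.elim (fun h => Or.inr ⟨h.2, h.1⟩)
    (fun h => Or.inl ⟨h.2, h.1⟩)
  have Ez : ∀ {x y}, E x y → Γ.Adj x z ∧ Γ.Adj y z := by
    rintro x y (⟨rfl, rfl⟩ | ⟨rfl, rfl⟩)
    exacts [⟨hza.symm, hzb.symm⟩, ⟨hzb.symm, hza.symm⟩]
  have En : ∀ {x y}, E x y → ¬ Γ.Adj x y := by
    rintro x y (⟨rfl, rfl⟩ | ⟨rfl, rfl⟩)
    exacts [nab, fun h => nab h.symm]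
  let m' : V → V → V → ℤ := fun c x y =>
    if E x y then (if c = z then A z y - A z x else m c x z + m c z y) else m c x y
  have mE : ∀ {c x y}, E x y → c ≠ z → m' c x y = m c x z + m c z y := fun hE hc => by
    simp only [m', if_pos hE, if_neg hc]
  have mz : ∀ {x y}, E x y → m' z x y = A z y - A z x := fun hE => by
    simp only [m', if_pos hE, if_true]
  have mN : ∀ {c x y}, ¬ E x y → m' c x y = m c x y := fun hE => by
    simp only [m', if_neg hE]
  refine ⟨A, m', h1, ?_, ?_⟩
  · rintro c x y ⟨hxy, ncx, ncy⟩
    by_cases hE : E x y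
    · obtain ⟨hx, hy⟩ := Ez hE
      by_cases hc : c = z
      · subst hc
        rw [mz hE, mz (Esymm hE)]
        exact ⟨by ring, ⟨A c y, by ring⟩⟩
      · rw [mE hE hc, mE (Esymm hE) hc]
        obtain ⟨e1, r1, s1⟩ := h2 c x z ⟨hx, ncx, hc⟩
        obtain ⟨e2, r2, s2⟩ := h2 c z y ⟨hy.symm, hc, ncy⟩
        exact ⟨by rw [e1, e2]; ring, ⟨r1 + r2 - A c z, by linear_combination s1 + s2⟩⟩
    · rw [mN hE, mN fun h => hE (Esymm h)]
      refine h2 c x y ⟨?_, ncx, ncy⟩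
      rcases hxy with h | h
      exacts [h.1, (hE h).elim]
  · rintro x y u v ⟨hxy, huv, n1, n2, n3, n4⟩
    obtain ⟨xz, yz⟩ := smooth_ne hza hzb hab hxy
    obtain ⟨uz, vz⟩ := smooth_ne hza hzb hab huv
    by_cases hE : E x y
    · have hE' : ¬ E u v := by
        rintro (⟨rfl, rfl⟩ | ⟨rfl, rfl⟩) <;> rcases hE with ⟨rfl, rfl⟩ | ⟨rfl, rfl⟩
        exacts [n1 rfl, n2 rfl, n2 rfl, n1 rfl]
      have huv' : Γ.Adj u v := by
        rcases huv with h | h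
        exacts [h.1, (hE' h).elim]
      obtain ⟨hx, hy⟩ := Ez hE
      rw [mE hE uz, mE hE vz, mN hE', mN hE']
      linear_combination h3 x z u v ⟨hx, huv', n1, n2, uz.symm, vz.symm⟩ +
        h3 z y u v ⟨hy.symm, huv', uz.symm, vz.symm, n3, n4⟩
    · have hxy' : Γ.Adj x y := by
        rcases hxy with h | h
        exacts [h.1, (hE h).elim]
      by_cases hE' : E u v
      · obtain ⟨hu, hv⟩ := Ez hE'
        rw [mN hE, mN hE, mE hE' xz, mE hE' yz]
        linear_combination h3 x y u z ⟨hxy', hu, n1, xz, n3, yz⟩ +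
          h3 x y z v ⟨hxy', hv.symm, xz, n2, yz, n4⟩
      · rw [mN hE, mN hE, mN hE', mN hE']
        refine h3 x y u v ⟨hxy', ?_, n1, n2, n3, n4⟩
        rcases huv with h | h
        exacts [h.1, (hE' h).elim]

/-- In a core the two edges at `z` belong to squares with the same edges, so that the core descends
to the smoothed graph. -/
theorem good_smooth (hza : Γ.Adj z a) (hzb : Γ.Adj z b) (hab : a ≠ b) (nab : ¬ Γ.Adj a b)
    (hz : ∀ y, Γ.Adj z y → y = a ∨ y = b) (h : Good (smooth Γ z hab)) : Good Γ := by
  obtain ⟨⟨p, hp⟩, hC⟩ := h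
  refine ⟨hp.add (z := z) (a := a) (b := b) (fun w hw => (smooth_ne hza hzb hab hw).1 rfl) hza.ne
    hzb.ne (Or.inr (Or.inr (Or.inl ⟨rfl, rfl⟩))) (fun x y hxy h1 h2 => Or.inl ⟨hxy, h1, h2⟩) hz, ?_⟩
  intro S hS hc
  have hS4 : ∀ {a b c d}, S a b c d → S a b d c := fun hs => hS.s2 (hS.s1 (hS.s2 hs))
  let E : V → V → Prop := fun x y => (x = a ∧ y = b) ∨ (x = b ∧ y = a)
  have Esymm : ∀ {x y}, E x y → E y x := fun h => h.elim (fun h => Or.inr ⟨h.2, h.1⟩)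
    (fun h => Or.inl ⟨h.2, h.1⟩)
  have Ez : ∀ {x y}, E x y → x ≠ z ∧ y ≠ z := by
    rintro x y (⟨rfl, rfl⟩ | ⟨rfl, rfl⟩)
    exacts [⟨hza.ne', hzb.ne'⟩, ⟨hzb.ne', hza.ne'⟩]
  have En : ∀ {x y}, E x y → ¬ Γ.Adj x y := by
    rintro x y (⟨rfl, rfl⟩ | ⟨rfl, rfl⟩)
    exacts [nab, fun h => nab h.symm]
  -- the two edges at `z` are adjacent to the same edges
  have flip : ∀ {u v x y}, E x y → S u v x z → S u v y z := by
    intro u v x y hE hs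
    obtain ⟨w, hne, hs'⟩ := hc _ _ _ _ (hS4 hs)
    rcases hE with ⟨rfl, rfl⟩ | ⟨rfl, rfl⟩ <;> rcases hz _ (hS.de hs').2.1 with rfl | rfl
    exacts [(hne rfl).elim, hS4 hs', hS4 hs', (hne rfl).elim]
  let S' : V → V → V → V → Prop := fun x y u v => (x ≠ z ∧ y ≠ z ∧ u ≠ z ∧ v ≠ z) ∧
    (S x y u v ∨ (E x y ∧ S x z u v) ∨ (E u v ∧ S x y u z))
  have hS' : SqSym (smooth Γ z hab) S' := by
    refine ⟨?_, ?_, ?_⟩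
    · rintro x y u v ⟨⟨n1, n2, n3, n4⟩, hs⟩
      refine ⟨⟨n2, n1, n3, n4⟩, ?_⟩
      rcases hs with hs | ⟨hE, hs⟩ | ⟨hE, hs⟩
      exacts [Or.inl (hS.s1 hs), Or.inr (Or.inl ⟨Esymm hE, hS.s2 (flip hE (hS.s2 hs))⟩),
        Or.inr (Or.inr ⟨hE, hS.s1 hs⟩)]
    · rintro x y u v ⟨⟨n1, n2, n3, n4⟩, hs⟩
      refine ⟨⟨n3, n4, n1, n2⟩, ?_⟩
      rcases hs with hs | ⟨hE, hs⟩ | ⟨hE, hs⟩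
      exacts [Or.inl (hS.s2 hs), Or.inr (Or.inr ⟨hE, hS.s2 hs⟩), Or.inr (Or.inl ⟨hE, hS.s2 hs⟩)]
    · rintro x y u v ⟨⟨n1, n2, n3, n4⟩, hs⟩
      rcases hs with hs | ⟨hE, hs⟩ | ⟨hE, hs⟩
      · obtain ⟨h1, h2, h3⟩ := hS.de hs
        exact ⟨Or.inl ⟨h1, n1, n2⟩, Or.inl ⟨h2, n3, n4⟩, h3⟩
      · have d1 := hS.de hs
        have d2 := hS.de (hS.s2 (flip hE (hS.s2 hs)))
        exact ⟨Or.inr hE, Or.inl ⟨d1.2.1, n3, n4⟩, d1.2.2.1, d1.2.2.2.1, d2.2.2.1, d2.2.2.2.1⟩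
      · have d1 := hS.de hs
        have d2 := hS.de (flip hE hs)
        exact ⟨Or.inl ⟨d1.1, n1, n2⟩, Or.inr hE, d1.2.2.1, d2.2.2.1, d1.2.2.2.2.1, d2.2.2.2.2.1⟩
  have hc' : ∀ x y u v, S' x y u v → ∃ v', v' ≠ v ∧ S' x y u v' := by
    rintro x y u v ⟨⟨n1, n2, n3, n4⟩, hs⟩
    rcases hs with hs | ⟨hE, hs⟩ | ⟨hE, hs⟩
    · obtain ⟨v', hne, hs'⟩ := hc _ _ _ _ hs
      by_cases hv' : v' = z
      · subst hv'
        obtain ⟨w, hw⟩ : ∃ w, E u w := by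
          rcases hz _ (hS.de hs').2.1.symm with rfl | rfl
          exacts [⟨b, Or.inl ⟨rfl, rfl⟩⟩, ⟨a, Or.inr ⟨rfl, rfl⟩⟩]
        refine ⟨w, ?_, ⟨n1, n2, n3, (Ez hw).2⟩, Or.inr (Or.inr ⟨hw, hs'⟩)⟩
        rintro rfl
        exact En hw (hS.de hs).2.1
      · exact ⟨v', hne, ⟨n1, n2, n3, hv'⟩, Or.inl hs'⟩
    · obtain ⟨v', hne, hs'⟩ := hc _ _ _ _ hs
      exact ⟨v', hne, ⟨n1, n2, n3, (hS.de hs').2.2.2.2.2.symm⟩, Or.inr (Or.inl ⟨hE, hs'⟩)⟩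
    · obtain ⟨v', hne, hs'⟩ := hc _ _ _ _ hs
      refine ⟨v', ?_, ⟨n1, n2, n3, hne⟩, Or.inl hs'⟩
      rintro rfl
      exact En hE (hS.de hs').2.1
  have none := hC S' hS' hc'
  have noz : ∀ x y u, ¬ S x y u z := by
    intro x y u hs
    have d := hS.de hs
    have hxz : x ≠ z := d.2.2.2.1
    have hyz : y ≠ z := d.2.2.2.2.2
    rcases hz _ d.2.1.symm with rfl | rfl
    · exact none x y u b ⟨⟨hxz, hyz, hza.ne', hzb.ne'⟩, Or.inr (Or.inr ⟨Or.inl ⟨rfl, rfl⟩, hs⟩)⟩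
    · exact none x y u a ⟨⟨hxz, hyz, hzb.ne', hza.ne'⟩, Or.inr (Or.inr ⟨Or.inr ⟨rfl, rfl⟩, hs⟩)⟩
  intro x y u v hs
  refine none x y u v ⟨⟨?_, ?_, ?_, ?_⟩, Or.inl hs⟩
  · rintro rfl; exact noz _ _ _ (hS4 (hS.s2 hs))
  · rintro rfl; exact noz _ _ _ (hS.s2 hs)
  · rintro rfl; exact noz _ _ _ (hS4 hs)
  · rintro rfl; exact noz _ _ _ hs

end Smooth

/-- A graph without disjoint cycles whose labeling lifts has a planar straight-line drawing, and
its discretized configuration space collapses to a graph. -/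
theorem good_of_lift (v₀ : V) : ∀ (n : ℕ) (Γ : SimpleGraph V),
    (Finset.univ.filter fun v => ∃ w, Γ.Adj v w).card = n → NoDC Γ → Lift Γ → Good Γ := by
  intro n
  induction n using Nat.strong_induction_on with
  | _ n ih =>
  intro Γ hn hN hL
  have dec : ∀ (Γ' : SimpleGraph V) (z a : V), Γ.Adj z a →
      (∀ x y, Γ'.Adj x y → x ≠ z ∧ ∃ w, Γ.Adj x w) → NoDC Γ' → Lift Γ' → Good Γ' := by
    intro Γ' z a hza hsub hN' hL'
    refine ih _ ?_ Γ' rfl hN' hL'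
    rw [← hn]
    refine Finset.card_lt_card (Finset.ssubset_iff_of_subset ?_ |>.2 ⟨z, ?_, ?_⟩)
    · intro x hx
      obtain ⟨y, hy⟩ := (Finset.mem_filter.1 hx).2
      exact Finset.mem_filter.2 ⟨Finset.mem_univ _, (hsub x y hy).2⟩
    · exact Finset.mem_filter.2 ⟨Finset.mem_univ _, a, hza⟩
    · intro hx
      obtain ⟨y, hy⟩ := (Finset.mem_filter.1 hx).2
      exact (hsub z y hy).1 rfl
  have decdel : ∀ z a, Γ.Adj z a → Good (del Γ z) := fun z a hza =>
    dec (del Γ z) z a hza (fun x y h => ⟨h.2.1, y, h.1⟩) (hN.le (del_le Γ z)) (hL.le (del_le Γ z))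
  by_cases hD : Deg3 Γ
  · by_cases he : ∃ u v, Γ.Adj u v
    · obtain ⟨u, v, huv⟩ := he
      by_cases hT : ∃ x y z, Γ.Adj x y ∧ Γ.Adj y z ∧ Γ.Adj x z
      · obtain ⟨x, y, z, h1, h2, h3⟩ := hT
        exact tri_good hN hL hD h1 h2 h3
      · rcases exists_short hN hD huv with h | ⟨a, b, c, d, h1, h2, h3, h4, h5, h6⟩
        · exact (hT h).elim
        · exact (quad_false hN hL hD (fun x y z e1 e2 e3 => hT ⟨x, y, z, e1, e2, e3⟩)
            h1 h2 h3 h4 h5 h6).elim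
    · push Not at he
      exact wheel_good (a := v₀) (q := fun _ => v₀) (m := 0) (fun i j _ _ _ => by omega)
        (fun d hd => (he _ _ hd).elim) (fun u v huv => (he _ _ huv).elim)
  · simp only [Deg3] at hD
    push Not at hD
    obtain ⟨z, w, hzw, a, b, hz⟩ := hD
    have hz' : ∀ y, Γ.Adj z y → y = a ∨ y = b := fun y hy => by
      by_cases e : y = a
      exacts [Or.inl e, Or.inr (hz y hy e)]
    by_cases hab : a = b
    · subst hab
      have hz1 : ∀ y, Γ.Adj z y → y = a := fun y hy => (hz' y hy).elim id id
      exact good_leaf (hz1 w hzw ▸ hzw) hz1 (decdel z w hzw)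
    by_cases hza : Γ.Adj z a
    · by_cases hzb : Γ.Adj z b
      · by_cases nab : Γ.Adj a b
        · exact good_ear hN hza hzb nab hz' (decdel z a hza)
        · refine good_smooth hza hzb hab nab hz' (dec _ z a hza ?_ (noDC_smooth hza hzb hab hN)
            (lift_smooth hza hzb hab nab hL))
          intro x y hxy
          refine ⟨(smooth_ne hza hzb hab hxy).1, ?_⟩
          rcases hxy with h | ⟨rfl, rfl⟩ | ⟨rfl, rfl⟩
          exacts [⟨y, h.1⟩, ⟨z, hza.symm⟩, ⟨z, hzb.symm⟩]
      · refine good_leaf hza (fun y hy => ?_) (decdel z a hza)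
        rcases hz' y hy with e | rfl
        exacts [e, (hzb hy).elim]
    · have hz1 : ∀ y, Γ.Adj z y → y = b := fun y hy => by
        rcases hz' y hy with rfl | e
        exacts [(hza hy).elim, e]
      exact good_leaf (hz1 w hzw ▸ hzw) hz1 (decdel z w hzw)

end Red

/-- For a finite connected simple graph `Γ` with at least one edge, the
graph 2-braid group `B₂(Γ)` (the fundamental group of the unordered 2-point configuration
space of the geometric realization of `Γ`, at any basepoint) is isomorphic to a free group
if and only if the realization of `Γ` topologically embeds into `ℝ²` and `Γ` has no two
vertex-disjoint cycle subgraphs. -/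
theorem braid2_free_iff_planar_no_disjoint_cycles
    (V : Type) [Fintype V] [DecidableEq V] (Γ : SimpleGraph V)
    (hconn : Γ.Connected) (hedge : Γ.edgeSet.Nonempty)
    (x : UConf 2 ↥(realization Γ)) :
    IsFreeGroupType (FundamentalGroup (UConf 2 ↥(realization Γ)) x) ↔
      ((∃ f : ↥(realization Γ) → ℝ × ℝ, Topology.IsEmbedding f) ∧
        ¬ ∃ C₁ C₂ : Γ.Subgraph, IsCycleSubgraph C₁ ∧ IsCycleSubgraph C₂ ∧
            Disjoint C₁.verts C₂.verts) := by
  obtain ⟨u₀, v₀, h₀⟩ : ∃ u v, Γ.Adj u v := by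
    obtain ⟨e, he⟩ := hedge
    induction e using Sym2.ind with
    | _ u v => exact ⟨u, v, he⟩
  have hv : ∀ v, ∃ w, Γ.Adj v w := by
    haveI : Nontrivial V := ⟨u₀, v₀, h₀.ne⟩
    exact fun v => hconn.preconnected.exists_adj_of_nontrivial v
  rw [← noDC_iff]
  constructor
  · intro hfree
    have hN := noDC_of_free hv hconn x hfree
    obtain ⟨⟨p, hp⟩, -⟩ := good_of_lift u₀ _ Γ rfl hN (lift_of_free hv hconn x hfree)
    exact ⟨hp.embedding, hN⟩
  · rintro ⟨⟨f, hf⟩, hN⟩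
    exact free_of_noCore hv (good_of_lift u₀ _ Γ rfl hN (lift_of_embedding hv f hf)).2 hconn x

end GraphBraid
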